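/- arXiv:2409.05952 — 2 statements merged into one kernel-verified Lean document; each statement's English description precedes it below -/
import Mathlib

section
/- Fix an integer d ≥ 2 and reals C > 0 and ε > 0. There exists a constant C' > 0 such that for every integer N ≥ 2, every polynomial P ∈ ℤ[x] of degree d with no repeated roots (i.e. P is squarefree as a polynomial) all of whose coefficients have absolute value at most N^C, and all integers a, b with 1 ≤ a, b ≤ N^C and a ≠ b, the number of pairs of integers (x, y) with 1 ≤ x, y ≤ N and a·P(x) = b·P(y) is at most C' · N^{1/3 + ε}. -/
/-!
Write `F = a P(x) - b P(y)` and let `d = deg P`. Since `F` has degree `d` in `y` and total degree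
`d`, its irreducible factors `G` are regular in `y` as well, and it suffices to count the zeros
of each of them in the box, according to the degree of `G`.

* A factor of degree `1` parametrises a line on which `a P(x) = b P(y)` holds identically. As
  `|a| ≠ |b|`, this makes `P` invariant, up to a scalar, under an affine map which is not an
  isometry, and after moving the fixed point of that map to `0` we see that `P` is a constant times
  the `d`-th power of a linear polynomial.
* A factor of degree `2` is a conic. Its leading form divides `a x ^ d - b y ^ d`, which is
  squarefree, so its discriminant is nonzero, and completing squares turns it into a norm equation
  `u ^ 2 - Δ v ^ 2 = m`. Its coefficients are polynomially bounded in `N`, by the multiplicativity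
  of the Mahler measure, so the divisor bound and the exponential growth of the solutions of Pell's
  equation leave only `O(N ^ ε)` points.
* A factor of degree `e ≥ 3` has `O(N ^ (1 / e + ε))` points, by the determinant method of Bombieri
  and Pila in its `p`-adic form due to Heath-Brown. Using `F`, and not `G`, to test for singular
  points keeps the bound uniform in `G`.
-/

open Polynomial

/-! ### The divisor bound -/

theorem natCast_add_one_le_pow_rpow {x δ : ℝ} (hx : 0 ≤ x) (h : 2 ≤ x ^ δ) (k : ℕ) :
    (k + 1 : ℝ) ≤ (x ^ k) ^ δ := by
  rw [← Real.rpow_pow_comm hx]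
  calc (k + 1 : ℝ) ≤ 2 ^ k := by exact_mod_cast k.lt_two_pow_self
    _ ≤ (x ^ δ) ^ k := by gcongr

theorem natCast_add_one_le_mul_pow_rpow {x δ c : ℝ} (hx : 2 ≤ x) (hδ : 0 ≤ δ) (hc : 1 ≤ c)
    (hcδ : 1 ≤ c * (δ * Real.log 2)) (k : ℕ) : (k + 1 : ℝ) ≤ c * (x ^ k) ^ δ := by
  have hexp : 1 + k * (δ * Real.log 2) ≤ ((2 : ℝ) ^ k) ^ δ := by
    rw [← Real.rpow_natCast, ← Real.rpow_mul zero_le_two, Real.rpow_def_of_pos two_pos]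
    linarith [Real.add_one_le_exp (Real.log 2 * (k * δ))]
  calc (k + 1 : ℝ) ≤ c * (1 + k * (δ * Real.log 2)) := by
        nlinarith [(Nat.cast_nonneg k : (0 : ℝ) ≤ k)]
    _ ≤ c * (x ^ k) ^ δ := by
        have : ((2 : ℝ) ^ k) ^ δ ≤ (x ^ k) ^ δ := by gcongr
        gcongr
        exact hexp.trans this

theorem prod_primeFactors_pow_rpow {n : ℕ} (hn : n ≠ 0) (δ : ℝ) :
    ∏ p ∈ n.primeFactors, ((p : ℝ) ^ n.factorization p) ^ δ = (n : ℝ) ^ δ := by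
  rw [Real.finsetProd_rpow _ _ fun p _ => by positivity]
  congr 1
  exact_mod_cast Nat.prod_factorization_pow_eq_self hn

theorem exists_card_divisors_le_mul_rpow {δ : ℝ} (hδ : 0 < δ) :
    ∃ K : ℝ, 0 < K ∧ ∀ n : ℕ, n ≠ 0 → (n.divisors.card : ℝ) ≤ K * (n : ℝ) ^ δ := by
  have hδlog : 0 < δ * Real.log 2 := mul_pos hδ (Real.log_pos one_lt_two)
  set c : ℝ := max 1 (1 / (δ * Real.log 2))
  have hc : 1 ≤ c := le_max_left _ _
  have hcδ : 1 ≤ c * (δ * Real.log 2) := (div_le_iff₀ hδlog).1 (le_max_right _ _)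
  set p₀ : ℕ := ⌈(2 : ℝ) ^ δ⁻¹⌉₊
  refine ⟨c ^ p₀, by positivity, fun n hn => ?_⟩
  have hlocal : ∀ p ∈ n.primeFactors, (n.factorization p + 1 : ℝ) ≤
      (if p < p₀ then c else 1) * ((p : ℝ) ^ n.factorization p) ^ δ := by
    intro p hp
    split_ifs with hpp₀
    · have htwo : (2 : ℝ) ≤ p := by exact_mod_cast (Nat.prime_of_mem_primeFactors hp).two_le
      exact natCast_add_one_le_mul_pow_rpow htwo hδ.le hc hcδ _
    · have hle : (2 : ℝ) ^ δ⁻¹ ≤ p := Nat.ceil_le.1 (not_lt.1 hpp₀)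
      rw [one_mul]
      exact natCast_add_one_le_pow_rpow p.cast_nonneg
        ((Real.rpow_inv_le_iff_of_pos zero_le_two p.cast_nonneg hδ).1 hle) _
  have hsmall : (n.primeFactors.filter (· < p₀)).card ≤ p₀ := by
    simpa using Finset.card_le_card
      (fun p hp => Finset.mem_range.2 (Finset.mem_filter.1 hp).2 :
        n.primeFactors.filter (· < p₀) ⊆ Finset.range p₀)
  calc (n.divisors.card : ℝ) = ∏ p ∈ n.primeFactors, (n.factorization p + 1 : ℝ) := by
        rw [Nat.card_divisors hn]; push_cast; rfl
    _ ≤ ∏ p ∈ n.primeFactors,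
          (if p < p₀ then c else 1) * ((p : ℝ) ^ n.factorization p) ^ δ :=
        Finset.prod_le_prod (fun _ _ => by positivity) hlocal
    _ = c ^ (n.primeFactors.filter (· < p₀)).card * (n : ℝ) ^ δ := by
        rw [Finset.prod_mul_distrib, prod_primeFactors_pow_rpow hn, Finset.prod_ite]
        simp only [Finset.prod_const, one_pow, mul_one]
    _ ≤ c ^ p₀ * (n : ℝ) ^ δ := by gcongr

/-! ### The equation `x ^ 2 - D * y ^ 2 = m` -/

section Pell

theorem abs_le_one_of_sq_sub_mul_sq_eq_one {D x y : ℤ} (hD : D ≠ 0) (hD_le : D ≤ 1)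
    (h : x ^ 2 - D * y ^ 2 = 1) : |x| ≤ 1 ∧ |y| ≤ 1 := by
  rcases hD_le.eq_or_lt with rfl | hlt
  · have hprod : (x - y) * (x + y) = 1 := by linarith
    rcases Int.mul_eq_one_iff_eq_one_or_neg_one.1 hprod with ⟨h₁, h₂⟩ | ⟨h₁, h₂⟩ <;>
      constructor <;> rw [abs_le] <;> omega
  · have hDneg : D ≤ -1 := by omega
    have hx : x ^ 2 ≤ 1 := by nlinarith [sq_nonneg y]
    have hy : y ^ 2 ≤ 1 := by nlinarith [sq_nonneg x, sq_nonneg y]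
    exact ⟨(sq_le_one_iff_abs_le_one x).1 hx, (sq_le_one_iff_abs_le_one y).1 hy⟩

theorem two_pow_le_x_pow {D : ℤ} {a : Pell.Solution₁ D} (ha : Pell.IsFundamental a) (n : ℕ) :
    (2 : ℤ) ^ n ≤ (a ^ n).x := by
  induction n with
  | zero => simp
  | succ n ih =>
    have hx : 2 ≤ a.x := ha.1
    have hy : 0 ≤ (a ^ n).y := by
      rcases n with _ | n
      · simp
      · exact (Pell.Solution₁.y_pow_succ_pos ha.x_pos ha.2.1 n).le
    have hcross : 0 ≤ D * (a.y * (a ^ n).y) := mul_nonneg ha.d_pos.le (mul_nonneg ha.2.1.le hy)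
    rw [pow_succ', pow_succ', Pell.Solution₁.x_mul]
    nlinarith [pow_pos (two_pos : (0 : ℤ) < 2) n]

theorem two_pow_natAbs_le_x_zpow {D : ℤ} {a : Pell.Solution₁ D} (ha : Pell.IsFundamental a)
    (n : ℤ) : (2 : ℤ) ^ n.natAbs ≤ (a ^ n).x := by
  rcases n with n | n
  · simpa using two_pow_le_x_pow ha n
  · rw [zpow_negSucc, Pell.Solution₁.x_inv]
    exact two_pow_le_x_pow ha (n + 1)

theorem card_pell_solutions_le_of_isFundamental {D : ℤ} {a : Pell.Solution₁ D}
    (ha : Pell.IsFundamental a) {L : ℕ} {S : Finset (ℤ × ℤ)}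
    (hS : ∀ s ∈ S, s.1 ^ 2 - D * s.2 ^ 2 = 1 ∧ |s.1| ≤ 2 ^ L) : S.card ≤ 4 * L + 2 := by
  set I := Finset.Icc (-(L : ℤ)) L
  have mem_I : ∀ n : ℤ, |(a ^ n).x| ≤ 2 ^ L → n ∈ I := by
    intro n hn
    have hpow := (two_pow_natAbs_le_x_zpow ha n).trans ((le_abs_self _).trans hn)
    have := (pow_le_pow_iff_right₀ (one_lt_two : (1 : ℤ) < 2)).1 hpow
    rw [Finset.mem_Icc]
    omega
  have hsub : S ⊆ I.image (fun n => ((a ^ n).x, (a ^ n).y)) ∪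
      I.image (fun n => ((-a ^ n).x, (-a ^ n).y)) := by
    intro s hs
    obtain ⟨hsol, hbound⟩ := hS s hs
    obtain ⟨n, hn | hn⟩ := ha.eq_zpow_or_neg_zpow (Pell.Solution₁.mk s.1 s.2 hsol)
    all_goals
      have hx : s.1 = _ := congrArg Pell.Solution₁.x hn
      have hy : s.2 = _ := congrArg Pell.Solution₁.y hn
    · refine Finset.mem_union_left _ (Finset.mem_image.2 ⟨n, mem_I n ?_, Prod.ext hx.symm hy.symm⟩)
      rwa [← hx]
    · refine Finset.mem_union_right _ (Finset.mem_image.2 ⟨n, mem_I n ?_, Prod.ext hx.symm hy.symm⟩)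
      rwa [← abs_neg, ← Pell.Solution₁.x_neg, ← hx]
  calc S.card ≤ I.card + I.card :=
        (Finset.card_le_card hsub).trans ((Finset.card_union_le _ _).trans
          (add_le_add Finset.card_image_le Finset.card_image_le))
    _ = 4 * L + 2 := by rw [Int.card_Icc]; omega

theorem card_pell_solutions_le {D : ℤ} (hD : Squarefree D) {L : ℕ} {S : Finset (ℤ × ℤ)}
    (hS : ∀ s ∈ S, s.1 ^ 2 - D * s.2 ^ 2 = 1 ∧ |s.1| ≤ 2 ^ L) : S.card ≤ 4 * L + 9 := by
  rcases lt_or_ge 1 D with hlt | hle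
  · have hnsq : ¬IsSquare D := by
      rintro ⟨r, rfl⟩
      rcases Int.isUnit_iff.1 (hD r dvd_rfl) with rfl | rfl <;> omega
    obtain ⟨a, ha⟩ := Pell.IsFundamental.exists_of_not_isSquare (by omega) hnsq
    exact (card_pell_solutions_le_of_isFundamental ha hS).trans (by omega)
  · have hsub : S ⊆ Finset.Icc (-1) 1 ×ˢ Finset.Icc (-1) 1 := fun s hs => by
      have hle_one := abs_le_one_of_sq_sub_mul_sq_eq_one hD.ne_zero hle (hS s hs).1
      simpa only [Finset.mem_product, Finset.mem_Icc, abs_le] using hle_one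
    calc S.card ≤ 9 := Finset.card_le_card hsub
      _ ≤ 4 * L + 9 := by omega

end Pell

section SquareRoots

theorem dvd_two_of_mul_self_dvd_four_mul {D h : ℤ} (hD : Squarefree D) (hdvd : h * h ∣ 4 * D) :
    h ∣ 2 := by
  obtain ⟨k, rfl | rfl⟩ := Int.even_or_odd' h
  · have hkk : k * k ∣ D := by
      rwa [show 2 * k * (2 * k) = 4 * (k * k) by ring, mul_dvd_mul_iff_left four_ne_zero] at hdvd
    simpa using mul_dvd_mul_left 2 ((hD k hkk).dvd (a := 1))
  · have hcop : IsCoprime (2 * k + 1) 2 := ⟨1, -k, by ring⟩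
    have hcop4 : IsCoprime ((2 * k + 1) * (2 * k + 1)) 4 := by
      have := hcop.mul_right hcop
      exact this.mul_left this
    exact (hD _ (hcop4.dvd_of_dvd_mul_left hdvd)).dvd

theorem dvd_right_of_gcd_eq_of_mul_dvd_mul {g k : ℕ} {u v : ℤ} (hg : g ≠ 0)
    (hgcd : Int.gcd u (g * k) = g) (hdvd : (g * k : ℤ) ∣ u * v) : (k : ℤ) ∣ v := by
  have hmul : (g * k : ℤ) ∣ g * v := by
    have := Int.dvd_coe_gcd hdvd (dvd_mul_right (g * k : ℤ) v)
    rw [Int.gcd_mul_right, hgcd] at this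
    rwa [Nat.cast_mul, Int.natCast_natAbs, ← Nat.abs_cast g, ← abs_mul, dvd_abs,
      Nat.abs_cast] at this
  exact (mul_dvd_mul_iff_left (by exact_mod_cast hg)).1 hmul

/- With `g` the common gcd and `n = g * k`, both roots are congruent to `z₀` modulo `g` and to
`-z₀` modulo `k`; squarefreeness of `D` forces `gcd g k` to divide `2`. -/
theorem dvd_two_mul_sub_of_gcd_eq {D z₀ z w : ℤ} {n : ℕ} (hD : Squarefree D) (hn : n ≠ 0)
    (hz₀ : (n : ℤ) ∣ z₀ ^ 2 - D) (hz : (n : ℤ) ∣ z ^ 2 - D) (hw : (n : ℤ) ∣ w ^ 2 - D)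
    (hgcd : Int.gcd (z - z₀) n = Int.gcd (w - z₀) n) : (n : ℤ) ∣ 2 * (z - w) := by
  set g := Int.gcd (w - z₀) n with hg
  obtain ⟨k, hk⟩ : g ∣ n := by exact_mod_cast Int.gcd_dvd_right (w - z₀) (n : ℤ)
  have hg0 : g ≠ 0 := fun h => hn (by rw [hk, h, zero_mul])
  have hdvd : ∀ t : ℤ, (n : ℤ) ∣ t ^ 2 - D → Int.gcd (t - z₀) n = g →
      (g : ℤ) ∣ t - z₀ ∧ (k : ℤ) ∣ t + z₀ := by
    intro t ht htg
    refine ⟨htg ▸ Int.gcd_dvd_left _ _, dvd_right_of_gcd_eq_of_mul_dvd_mul (u := t - z₀) hg0 ?_ ?_⟩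
    · exact_mod_cast hk ▸ htg
    · rw [← Nat.cast_mul, ← hk, show (t - z₀) * (t + z₀) = t ^ 2 - D - (z₀ ^ 2 - D) by ring]
      exact dvd_sub ht hz₀
  obtain ⟨hgz, hkz⟩ := hdvd z hz hgcd
  obtain ⟨hgw, hkw⟩ := hdvd w hw hg.symm
  have hgcd_two : (g.gcd k : ℤ) ∣ 2 := by
    have hg_dvd : (g.gcd k : ℤ) ∣ g := Int.natCast_dvd_natCast.2 (g.gcd_dvd_left k)
    have hk_dvd : (g.gcd k : ℤ) ∣ k := Int.natCast_dvd_natCast.2 (g.gcd_dvd_right k)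
    have htwo : (g.gcd k : ℤ) ∣ z + z₀ - (z - z₀) :=
      dvd_sub (hk_dvd.trans hkz) (hg_dvd.trans hgz)
    have hroot : (g.gcd k * g.gcd k : ℤ) ∣ z₀ ^ 2 - D := by
      refine (mul_dvd_mul hg_dvd hk_dvd).trans ?_
      rwa [← Nat.cast_mul, ← hk]
    refine dvd_two_of_mul_self_dvd_four_mul hD ?_
    rw [show 4 * D = (z + z₀ - (z - z₀)) * (z + z₀ - (z - z₀)) - 4 * (z₀ ^ 2 - D) by ring]
    exact dvd_sub (mul_dvd_mul htwo htwo) (hroot.mul_left 4)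
  have hlcm : ((g.lcm k : ℕ) : ℤ) ∣ z - w := by
    rw [Int.natCast_dvd]
    refine Nat.lcm_dvd (Int.natCast_dvd.1 ?_) (Int.natCast_dvd.1 ?_)
    · simpa using dvd_sub hgz hgw
    · simpa using dvd_sub hkz hkw
  rw [hk, ← Nat.gcd_mul_lcm g k, Nat.cast_mul]
  exact mul_dvd_mul hgcd_two hlcm

theorem card_le_two_of_dvd_two_mul_sub {n : ℕ} {Z : Finset ℤ}
    (hZ : ∀ z ∈ Z, 0 ≤ z ∧ z < n) (hdvd : ∀ z ∈ Z, ∀ w ∈ Z, (n : ℤ) ∣ 2 * (z - w)) :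
    Z.card ≤ 2 := by
  have hdiff : ∀ z ∈ Z, ∀ w ∈ Z, z ≠ w → 2 * (z - w) = n ∨ 2 * (z - w) = -n := by
    intro z hz w hw hne
    obtain ⟨k, hk⟩ := hdvd z hz w hw
    have hzn := hZ z hz
    have hwn := hZ w hw
    have hk_lt : k < 2 := by nlinarith
    have hlt_k : -2 < k := by nlinarith
    obtain rfl | rfl | rfl : k = -1 ∨ k = 0 ∨ k = 1 := by omega
    all_goals omega
  by_contra! hcard
  obtain ⟨p, hp, q, hq, r, hr, hpq, hpr, hqr⟩ := Finset.two_lt_card.1 hcard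
  have := hdiff p hp q hq hpq
  have := hdiff p hp r hr hpr
  have := hdiff q hq r hr hqr
  have := hZ p hp
  omega

theorem card_sqrt_mod_le {D : ℤ} (hD : Squarefree D) {n : ℕ} (hn : n ≠ 0) {Z : Finset ℤ}
    (hZ : ∀ z ∈ Z, 0 ≤ z ∧ z < n) (hdvd : ∀ z ∈ Z, (n : ℤ) ∣ z ^ 2 - D) :
    Z.card ≤ 2 * n.divisors.card := by
  rcases Z.eq_empty_or_nonempty with rfl | ⟨z₀, hz₀⟩
  · simp
  have hmaps : ∀ z ∈ Z, Int.gcd (z - z₀) n ∈ n.divisors := fun z _ =>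
    Nat.mem_divisors.2 ⟨by exact_mod_cast Int.gcd_dvd_right (z - z₀) (n : ℤ), hn⟩
  refine Finset.card_le_mul_card_image_of_maps_to hmaps 2 fun g _ => ?_
  refine card_le_two_of_dvd_two_mul_sub (n := n) (fun z hz => hZ z (Finset.mem_filter.1 hz).1) ?_
  intro z hz w hw
  obtain ⟨hz, hzg⟩ := Finset.mem_filter.1 hz
  obtain ⟨hw, hwg⟩ := Finset.mem_filter.1 hw
  exact dvd_two_mul_sub_of_gcd_eq hD hn (hdvd z₀ hz₀) (hdvd z hz) (hdvd w hw) (hzg.trans hwg.symm)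

end SquareRoots

section NormForm

variable {D m : ℤ}

theorem exists_sqrt_mod_of_isCoprime {x y : ℤ} (hm : m ≠ 0) (h : x ^ 2 - D * y ^ 2 = m)
    (hxy : IsCoprime x y) :
    ∃ z : ℤ, (0 ≤ z ∧ z < m.natAbs) ∧ m ∣ x - z * y ∧ m ∣ z ^ 2 - D := by
  have hym : IsCoprime y m := by
    rw [← h, show x ^ 2 - D * y ^ 2 = x ^ 2 + y * -(D * y) by ring]
    exact IsCoprime.add_mul_left_right hxy.symm.pow_right _
  obtain ⟨u, v, huv⟩ := id hym
  have hroot : m ∣ x - x * u % m * y := by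
    refine ⟨x * v + x * u / m * y, ?_⟩
    rw [Int.emod_def]
    linear_combination -x * huv
  refine ⟨x * u % m, ⟨Int.emod_nonneg _ hm, by simpa using Int.emod_lt_abs (x * u) hm⟩, hroot, ?_⟩
  refine (hym.symm.pow_right (n := 2)).dvd_of_dvd_mul_left ?_
  generalize x * u % m = z at hroot ⊢
  rw [show y ^ 2 * (z ^ 2 - D) = x ^ 2 - D * y ^ 2 - (x - z * y) * (x + z * y) by ring, h]
  exact dvd_sub dvd_rfl (hroot.mul_right _)

/- Two solutions attached to the same root `z` of `z ^ 2 ≡ D [ZMOD m]` differ by the unit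
`(x + y√D) / (x₀ + y₀√D)` of norm one. -/
theorem exists_pell_of_same_sqrt {x y x₀ y₀ z : ℤ} (hm : m ≠ 0) (h : x ^ 2 - D * y ^ 2 = m)
    (h₀ : x₀ ^ 2 - D * y₀ ^ 2 = m) (hz : m ∣ x - z * y) (hz₀ : m ∣ x₀ - z * y₀)
    (hD : m ∣ z ^ 2 - D) :
    ∃ s : ℤ × ℤ, s.1 ^ 2 - D * s.2 ^ 2 = 1 ∧
      x = s.1 * x₀ + D * s.2 * y₀ ∧ y = s.1 * y₀ + s.2 * x₀ := by
  obtain ⟨u, hu⟩ : m ∣ x * x₀ - D * (y * y₀) := by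
    rw [show x * x₀ - D * (y * y₀) = (x - z * y) * x₀ + (x₀ - z * y₀) * (z * y) +
      (z ^ 2 - D) * (y * y₀) by ring]
    exact dvd_add (dvd_add (hz.mul_right _) (hz₀.mul_right _)) (hD.mul_right _)
  obtain ⟨v, hv⟩ : m ∣ y * x₀ - x * y₀ := by
    rw [show y * x₀ - x * y₀ = (x₀ - z * y₀) * y - (x - z * y) * y₀ by ring]
    exact dvd_sub (hz₀.mul_right _) (hz.mul_right _)
  have hx : x = u * x₀ + D * v * y₀ := mul_left_cancel₀ hm <| by
    linear_combination x₀ * hu + D * y₀ * hv - x * h₀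
  have hy : y = u * y₀ + v * x₀ := mul_left_cancel₀ hm <| by
    linear_combination y₀ * hu + x₀ * hv - y * h₀
  refine ⟨(u, v), mul_left_cancel₀ hm ?_, hx, hy⟩
  linear_combination h - (u ^ 2 - D * v ^ 2) * h₀ - (x + u * x₀ + D * v * y₀) * hx +
    D * (y + u * y₀ + v * x₀) * hy

theorem abs_le_of_pell_mul {x y x₀ y₀ u v : ℤ} {L : ℕ} (hm : m ≠ 0)
    (h₀ : x₀ ^ 2 - D * y₀ ^ 2 = m) (hx : x = u * x₀ + D * v * y₀) (hy : y = u * y₀ + v * x₀)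
    (hD : |D| ≤ 2 ^ L) (hxL : |x| ≤ 2 ^ L) (hyL : |y| ≤ 2 ^ L) (hx₀L : |x₀| ≤ 2 ^ L)
    (hy₀L : |y₀| ≤ 2 ^ L) : |u| ≤ 2 ^ (3 * L + 1) := by
  have hmu : m * u = x * x₀ - D * (y * y₀) := by
    rw [← h₀, hx, hy]
    ring
  have hone : (1 : ℤ) ≤ 2 ^ L := one_le_pow₀ one_le_two
  calc |u| ≤ |m| * |u| := le_mul_of_one_le_left (abs_nonneg u) (Int.one_le_abs hm)
    _ = |x * x₀ - D * (y * y₀)| := by rw [← abs_mul, hmu]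
    _ ≤ |x * x₀| + |D * (y * y₀)| := abs_sub _ _
    _ ≤ 2 ^ L * 2 ^ L * 2 ^ L + 2 ^ L * (2 ^ L * 2 ^ L) := by
        rw [abs_mul, abs_mul, abs_mul]
        refine add_le_add ?_ (by gcongr)
        exact (mul_le_mul hxL hx₀L (abs_nonneg _) (by positivity)).trans
          (le_mul_of_one_le_right (by positivity) hone)
    _ = 2 ^ (3 * L + 1) := by ring

theorem card_le_of_same_sqrt (hD : Squarefree D) (hm : m ≠ 0) {z : ℤ} (hz : m ∣ z ^ 2 - D)
    {L : ℕ} (hDL : |D| ≤ 2 ^ L) {S : Finset (ℤ × ℤ)}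
    (hS : ∀ s ∈ S, s.1 ^ 2 - D * s.2 ^ 2 = m ∧ |s.1| ≤ 2 ^ L ∧ |s.2| ≤ 2 ^ L)
    (hSz : ∀ s ∈ S, m ∣ s.1 - z * s.2) : S.card ≤ 12 * L + 13 := by
  rcases S.eq_empty_or_nonempty with rfl | ⟨s₀, hs₀⟩
  · simp
  obtain ⟨h₀, hx₀, hy₀⟩ := hS s₀ hs₀
  have hpell : ∀ s ∈ S, ∃ t : ℤ × ℤ, t.1 ^ 2 - D * t.2 ^ 2 = 1 ∧
      s.1 = t.1 * s₀.1 + D * t.2 * s₀.2 ∧ s.2 = t.1 * s₀.2 + t.2 * s₀.1 := fun s hs =>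
    exists_pell_of_same_sqrt hm (hS s hs).1 h₀ (hSz s hs) (hSz s₀ hs₀) hz
  choose! unit hunit using hpell
  have hinj : Set.InjOn unit S := fun s hs t ht hst => by
    ext
    · rw [(hunit s hs).2.1, (hunit t ht).2.1, hst]
    · rw [(hunit s hs).2.2, (hunit t ht).2.2, hst]
  rw [← Finset.card_image_of_injOn hinj]
  refine (card_pell_solutions_le hD (L := 3 * L + 1) ?_).trans (by omega)
  simp only [Finset.forall_mem_image]
  intro s hs
  obtain ⟨hnorm, hx, hy⟩ := hunit s hs
  obtain ⟨-, hxL, hyL⟩ := hS s hs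
  exact ⟨hnorm, abs_le_of_pell_mul hm h₀ hx hy hDL hxL hyL hx₀ hy₀⟩

theorem card_norm_form_coprime_le (hD : Squarefree D) (hm : m ≠ 0) {L : ℕ}
    (hDL : |D| ≤ 2 ^ L) {S : Finset (ℤ × ℤ)}
    (hS : ∀ s ∈ S, s.1 ^ 2 - D * s.2 ^ 2 = m ∧ |s.1| ≤ 2 ^ L ∧ |s.2| ≤ 2 ^ L)
    (hcop : ∀ s ∈ S, IsCoprime s.1 s.2) :
    S.card ≤ (12 * L + 13) * (2 * m.natAbs.divisors.card) := by
  have hsqrt := fun s hs => exists_sqrt_mod_of_isCoprime hm (hS s hs).1 (hcop s hs)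
  choose! root hrange hroot hsq using hsqrt
  have hfib : ∀ z ∈ S.image root, (S.filter (root · = z)).card ≤ 12 * L + 13 := by
    simp only [Finset.forall_mem_image]
    intro s₀ hs₀
    refine card_le_of_same_sqrt hD hm (hsq s₀ hs₀) hDL
      (fun s hs => hS s (Finset.mem_filter.1 hs).1) fun s hs => ?_
    obtain ⟨hs, hss₀⟩ := Finset.mem_filter.1 hs
    exact hss₀ ▸ hroot s hs
  refine (Finset.card_le_mul_card_image S _ hfib).trans (Nat.mul_le_mul_left _ ?_)
  refine card_sqrt_mod_le hD (Int.natAbs_ne_zero.2 hm) ?_ ?_ <;>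
    simp only [Finset.forall_mem_image]
  · exact hrange
  · exact fun s hs => Int.natAbs_dvd.2 (hsq s hs)

theorem card_norm_form_gcd_eq_le (hD : Squarefree D) (hm : m ≠ 0) {L : ℕ} (hDL : |D| ≤ 2 ^ L)
    {S : Finset (ℤ × ℤ)}
    (hS : ∀ s ∈ S, s.1 ^ 2 - D * s.2 ^ 2 = m ∧ |s.1| ≤ 2 ^ L ∧ |s.2| ≤ 2 ^ L) {g : ℕ} (hg : g ≠ 0)
    (hgcd : ∀ s ∈ S, Int.gcd s.1 s.2 = g) :
    S.card ≤ (12 * L + 13) * (2 * m.natAbs.divisors.card) := by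
  have hscale : ∀ s ∈ S, ∃ t : ℤ × ℤ, IsCoprime t.1 t.2 ∧ s.1 = g * t.1 ∧ s.2 = g * t.2 := by
    intro s hs
    obtain ⟨a, b, hab, ha, hb⟩ :=
      Int.exists_gcd_one (Nat.pos_of_ne_zero (hgcd s hs ▸ hg))
    rw [hgcd s hs, mul_comm] at ha hb
    exact ⟨(a, b), Int.isCoprime_iff_gcd_eq_one.2 hab, ha, hb⟩
  choose! prim hcop hfst hsnd using hscale
  rcases S.eq_empty_or_nonempty with rfl | ⟨s₀, hs₀⟩
  · simp
  have hnorm : ∀ s ∈ S, (g : ℤ) ^ 2 * ((prim s).1 ^ 2 - D * (prim s).2 ^ 2) = m := fun s hs => by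
    rw [← (hS s hs).1, hfst s hs, hsnd s hs]
    ring
  have hinj : Set.InjOn prim S := fun s hs t ht hst => by
    ext
    · rw [hfst s hs, hfst t ht, hst]
    · rw [hsnd s hs, hsnd t ht, hst]
  have hg' : (g : ℤ) ≠ 0 := by exact_mod_cast hg
  have habs : ∀ w : ℤ, |w| ≤ |g * w| := fun w => by
    rw [abs_mul]
    exact le_mul_of_one_le_left (abs_nonneg w) (Int.one_le_abs hg')
  obtain ⟨m₀, hm₀⟩ : ∃ m₀, (g : ℤ) ^ 2 * m₀ = m := ⟨_, hnorm s₀ hs₀⟩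
  rw [← Finset.card_image_of_injOn hinj]
  refine (card_norm_form_coprime_le hD (m := m₀) (by rintro rfl; simp at hm₀; omega) hDL ?_
    (Finset.forall_mem_image.2 hcop)).trans ?_
  · refine Finset.forall_mem_image.2 fun s hs => ⟨?_, ?_, ?_⟩
    · exact mul_left_cancel₀ (pow_ne_zero 2 hg') ((hnorm s hs).trans hm₀.symm)
    · exact (habs _).trans (hfst s hs ▸ (hS s hs).2.1)
    · exact (habs _).trans (hsnd s hs ▸ (hS s hs).2.2)
  · have : m₀.natAbs ∣ m.natAbs := Int.natAbs_dvd_natAbs.2 ⟨(g : ℤ) ^ 2, by rw [← hm₀]; ring⟩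
    gcongr

theorem card_norm_form_le_of_squarefree (hD : Squarefree D) (hm : m ≠ 0) {L : ℕ}
    (hDL : |D| ≤ 2 ^ L) {S : Finset (ℤ × ℤ)}
    (hS : ∀ s ∈ S, s.1 ^ 2 - D * s.2 ^ 2 = m ∧ |s.1| ≤ 2 ^ L ∧ |s.2| ≤ 2 ^ L) :
    S.card ≤ 2 * m.natAbs.divisors.card ^ 2 * (12 * L + 13) := by
  have hmaps : ∀ s ∈ S, Int.gcd s.1 s.2 ∈ m.natAbs.divisors := by
    refine fun s hs => Nat.mem_divisors.2 ⟨?_, Int.natAbs_ne_zero.2 hm⟩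
    rw [← Int.natCast_dvd, ← (hS s hs).1, sq, sq, mul_left_comm]
    exact dvd_sub ((Int.gcd_dvd_left _ _).mul_right _) ((Int.gcd_dvd_right _ _).mul_right _)
  refine (Finset.card_le_mul_card_image_of_maps_to hmaps
    ((12 * L + 13) * (2 * m.natAbs.divisors.card)) fun g hg => ?_).trans (le_of_eq (by ring))
  exact card_norm_form_gcd_eq_le hD hm hDL (fun s hs => hS s (Finset.mem_filter.1 hs).1)
    (Nat.pos_of_mem_divisors hg).ne' fun s hs => (Finset.mem_filter.1 hs).2

theorem exists_squarefree_mul_sq (hD : D ≠ 0) :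
    ∃ D₀ f : ℤ, Squarefree D₀ ∧ 0 < f ∧ D = D₀ * f ^ 2 := by
  obtain ⟨a, b, hab, ha⟩ := Nat.sq_mul_squarefree D.natAbs
  have hb : 0 < b := Nat.pos_of_ne_zero (by rintro rfl; simp at hab; omega)
  have habs : (D.natAbs : ℤ) = a * (b : ℤ) ^ 2 := by rw [← hab]; push_cast; ring
  refine ⟨D.sign * a, b, ?_, by exact_mod_cast hb, ?_⟩
  · rw [← Int.squarefree_natAbs, Int.natAbs_mul, Int.natAbs_sign_of_ne_zero hD]
    simpa using ha
  · rw [mul_assoc, ← habs, Int.sign_mul_natAbs]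

theorem card_norm_form_le (hD : D ≠ 0) (hm : m ≠ 0) {L : ℕ} (hDL : |D| ≤ 2 ^ L)
    {S : Finset (ℤ × ℤ)}
    (hS : ∀ s ∈ S, s.1 ^ 2 - D * s.2 ^ 2 = m ∧ |s.1| ≤ 2 ^ L ∧ |s.2| ≤ 2 ^ L) :
    S.card ≤ 2 * m.natAbs.divisors.card ^ 2 * (24 * L + 13) := by
  obtain ⟨D₀, f, hD₀, hf, rfl⟩ := exists_squarefree_mul_sq hD
  rw [abs_mul, abs_of_nonneg (sq_nonneg f)] at hDL
  have hone : 1 ≤ |D₀| := Int.one_le_abs hD₀.ne_zero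
  have hfL : f ≤ 2 ^ L := by nlinarith
  have hD₀L : |D₀| ≤ 2 ^ L := (le_mul_of_one_le_right (abs_nonneg _) (one_le_pow₀ hf)).trans hDL
  have hL : (2 : ℤ) ^ L ≤ 2 ^ (2 * L) := pow_le_pow_right₀ one_le_two (by omega)
  have hinj : Set.InjOn (fun s : ℤ × ℤ => (s.1, f * s.2)) S := fun s _ t _ hst =>
    Prod.ext (Prod.ext_iff.1 hst).1 (mul_left_cancel₀ hf.ne' (Prod.ext_iff.1 hst).2)
  rw [← Finset.card_image_of_injOn hinj]
  refine (card_norm_form_le_of_squarefree hD₀ hm (hD₀L.trans hL) ?_).trans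
    (le_of_eq (by ring))
  refine Finset.forall_mem_image.2 fun s hs => ?_
  obtain ⟨hnorm, hx, hy⟩ := hS s hs
  refine ⟨by rw [← hnorm]; ring, hx.trans hL, ?_⟩
  rw [abs_mul, abs_of_pos hf, two_mul, pow_add]
  gcongr

theorem exists_card_norm_form_le_mul_rpow {δ : ℝ} (hδ : 0 < δ) :
    ∃ K : ℝ, 0 < K ∧ ∀ T : ℝ, 1 ≤ T → ∀ D m : ℤ, D ≠ 0 → m ≠ 0 → |(D : ℝ)| ≤ T →
      |(m : ℝ)| ≤ T → ∀ S : Finset (ℤ × ℤ),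
      (∀ s ∈ S, s.1 ^ 2 - D * s.2 ^ 2 = m ∧ |(s.1 : ℝ)| ≤ T ∧ |(s.2 : ℝ)| ≤ T) →
      (S.card : ℝ) ≤ K * T ^ δ := by
  obtain ⟨K, hK, hdiv⟩ := exists_card_divisors_le_mul_rpow (δ := δ / 3) (by positivity)
  have hlog : 0 < Real.log 2 := Real.log_pos one_lt_two
  refine ⟨2 * K ^ 2 * (24 / (δ / 3 * Real.log 2) + 37), by positivity, ?_⟩
  intro T hT D m hD hm hDT hmT S hS
  obtain ⟨l, hl, hTl⟩ := exists_nat_pow_near hT one_lt_two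
  have cast_le : ∀ w : ℤ, |(w : ℝ)| ≤ T → |w| ≤ 2 ^ (l + 1) := fun w hw => by
    exact_mod_cast hw.trans hTl.le
  have hcard := card_norm_form_le hD hm (cast_le D hDT) fun s hs =>
    ⟨(hS s hs).1, cast_le _ (hS s hs).2.1, cast_le _ (hS s hs).2.2⟩
  set t : ℝ := T ^ (δ / 3)
  have ht : 1 ≤ t := Real.one_le_rpow hT (by positivity)
  have hdivisors : (m.natAbs.divisors.card : ℝ) ≤ K * t := by
    refine (hdiv _ (Int.natAbs_ne_zero.2 hm)).trans ?_
    rw [Nat.cast_natAbs, Int.cast_abs]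
    have := Real.rpow_le_rpow (abs_nonneg _) hmT (by positivity : 0 ≤ δ / 3)
    gcongr
  have hl_le : (l : ℝ) ≤ t / (δ / 3 * Real.log 2) := by
    have hlogT : l * Real.log 2 ≤ Real.log T := by
      rw [← Real.log_pow]
      exact Real.log_le_log (by positivity) hl
    rw [← div_div, le_div_iff₀ hlog]
    exact hlogT.trans (Real.log_le_rpow_div (by positivity) (by positivity))
  calc (S.card : ℝ) ≤ 2 * (m.natAbs.divisors.card : ℝ) ^ 2 * (24 * (l + 1) + 13) := by
        exact_mod_cast hcard
    _ ≤ 2 * (K * t) ^ 2 * (24 * (t / (δ / 3 * Real.log 2)) + 37 * t) := by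
        have : 24 * (l + 1) + 13 ≤ 24 * (t / (δ / 3 * Real.log 2)) + 37 * t := by linarith
        gcongr
    _ = 2 * K ^ 2 * (24 / (δ / 3 * Real.log 2) + 37) * t ^ 3 := by ring
    _ = _ := by
        rw [← Real.rpow_mul_natCast (by positivity)]
        norm_num

end NormForm

/-! ### Integral points on conics -/

/-- The conic `a x² + b x y + c y² + d x + e y + f`, encoded by its coefficients. -/
structure Conic (R : Type*) where
  a : R
  b : R
  c : R
  d : R
  e : R
  f : R

namespace Conic

section CommRing

variable {R S : Type*} [CommRing R] [CommRing S]

/-- The value of the conic at the point `(x, y)`. -/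
def eval (Q : Conic R) (x y : R) : R :=
  Q.a * x ^ 2 + Q.b * x * y + Q.c * y ^ 2 + Q.d * x + Q.e * y + Q.f

/-- The discriminant `b² - 4ac` of the quadratic part of the conic. -/
def disc (Q : Conic R) : R := Q.b ^ 2 - 4 * Q.a * Q.c

/-- The translation completing the square in `x`: half the coefficient of `x` in the
discriminant of the conic as a polynomial in `y`. -/
def shift (Q : Conic R) : R := Q.b * Q.e - 2 * Q.c * Q.d

/-- The constant `m` in the normal form `X² - disc * Y² = m` of the conic. -/
def normConst (Q : Conic R) : R := Q.shift ^ 2 - Q.disc * (Q.e ^ 2 - 4 * Q.c * Q.f)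

/-- The coordinate `X` of the normal form `X² - disc * Y² = normConst`. -/
def normX (Q : Conic R) (x : R) : R := Q.disc * x + Q.shift

/-- The coordinate `Y` of the normal form `X² - disc * Y² = normConst`. -/
def normY (Q : Conic R) (x y : R) : R := 2 * Q.c * y + Q.b * x + Q.e

theorem four_mul_c_mul_disc_mul_eval (Q : Conic R) (x y : R) :
    4 * Q.c * Q.disc * Q.eval x y =
      Q.disc * Q.normY x y ^ 2 - Q.normX x ^ 2 + Q.normConst := by
  simp only [eval, normConst, normX, normY, shift, disc]
  ring

theorem normX_sq_sub_disc_mul_normY_sq {Q : Conic R} {x y : R} (h : Q.eval x y = 0) :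
    Q.normX x ^ 2 - Q.disc * Q.normY x y ^ 2 = Q.normConst := by
  linear_combination Q.four_mul_c_mul_disc_mul_eval x y - 4 * Q.c * Q.disc * h

/-- Base change of a conic along a ring homomorphism. -/
def map (φ : R →+* S) (Q : Conic R) : Conic S :=
  ⟨φ Q.a, φ Q.b, φ Q.c, φ Q.d, φ Q.e, φ Q.f⟩

theorem disc_map (φ : R →+* S) (Q : Conic R) : (Q.map φ).disc = φ Q.disc := by
  simp only [disc, map, map_sub, map_mul, map_pow, map_ofNat φ 4]

theorem shift_map (φ : R →+* S) (Q : Conic R) : (Q.map φ).shift = φ Q.shift := by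
  simp only [shift, map, map_sub, map_mul, map_ofNat φ 2]

theorem normConst_map (φ : R →+* S) (Q : Conic R) : (Q.map φ).normConst = φ Q.normConst := by
  rw [normConst, shift_map, disc_map, normConst]
  simp only [map, map_sub, map_mul, map_pow, map_ofNat φ 4]

/-- The conic as a polynomial in `y` with coefficients in `R[x]`. -/
noncomputable def toPoly (Q : Conic R) : R[X][X] := (Q.map (C.comp C)).eval (C X) X

theorem toPoly_eq (Q : Conic R) :
    Q.toPoly = C (C Q.c) * X ^ 2 + C (C Q.b * X + C Q.e) * X +
      C (C Q.a * X ^ 2 + C Q.d * X + C Q.f) := by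
  simp only [toPoly, eval, map, RingHom.comp_apply, C_add, C_mul, C_pow]
  ring

theorem evalEval_toPoly (Q : Conic R) (x y : R) : Q.toPoly.evalEval x y = Q.eval x y := by
  simp only [toPoly_eq, evalEval, eval_add, eval_mul, eval_C, eval_X, eval_pow, eval]
  ring

theorem map_evalRingHom_toPoly (Q : Conic R) (x : R) :
    Q.toPoly.map (evalRingHom x) =
      C Q.c * X ^ 2 + C (Q.b * x + Q.e) * X + C (Q.a * x ^ 2 + Q.d * x + Q.f) := by
  simp only [toPoly_eq, Polynomial.map_add, Polynomial.map_mul, map_C, Polynomial.map_pow, map_X,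
    coe_evalRingHom, eval_add, eval_mul, eval_C, eval_X, eval_pow]

/-- The linear form `t Y + X` in the normal coordinates, as a polynomial in `y` over `R[x]`. -/
noncomputable def line (Q : Conic R) (t : R) : R[X][X] :=
  C (C t) * (Q.map (C.comp C)).normY (C X) X + (Q.map (C.comp C)).normX (C X)

theorem line_eq (Q : Conic R) (t : R) :
    Q.line t =
      C (C (t * (2 * Q.c))) * X + C (C (t * Q.b + Q.disc) * X + C (t * Q.e + Q.shift)) := by
  rw [line, normX, normY, disc_map, shift_map]
  simp only [map, RingHom.comp_apply, C_add, C_mul, map_ofNat C 2]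
  ring

theorem line_mul_line_neg {Q : Conic R} {s : R} (hm : Q.normConst = 0) (hs : Q.disc = s * s) :
    Q.line s * Q.line (-s) =
      -(4 * (Q.map (C.comp C)).c * (Q.map (C.comp C)).disc) * Q.toPoly := by
  have hnorm := (Q.map (C.comp C)).four_mul_c_mul_disc_mul_eval (C X) X
  rw [normConst_map, hm, map_zero, add_zero] at hnorm
  have hdisc_sq : (Q.map (C.comp C)).disc = C (C s) * C (C s) := by
    rw [disc_map, hs, map_mul, RingHom.comp_apply]
  simp only [line, toPoly, C_neg]
  linear_combination hnorm + (Q.map (C.comp C)).normY (C X) X ^ 2 * hdisc_sq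

end CommRing

/-- Every coefficient of the conic has absolute value at most `T`. -/
def HeightLE (Q : Conic ℤ) (T : ℝ) : Prop :=
  |(Q.a : ℝ)| ≤ T ∧ |(Q.b : ℝ)| ≤ T ∧ |(Q.c : ℝ)| ≤ T ∧ |(Q.d : ℝ)| ≤ T ∧ |(Q.e : ℝ)| ≤ T ∧
    |(Q.f : ℝ)| ≤ T

variable {Q : Conic ℤ}

theorem normForm_injective (hc : Q.c ≠ 0) (hdisc : Q.disc ≠ 0) :
    Function.Injective fun q : ℤ × ℤ => (Q.normX q.1, Q.normY q.1 q.2) := by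
  intro q r h
  obtain ⟨hX, hY⟩ := Prod.ext_iff.1 h
  simp only [normX, normY] at hX hY
  have hfst : q.1 = r.1 := mul_left_cancel₀ hdisc (by linarith)
  rw [hfst] at hY
  exact Prod.ext hfst (mul_left_cancel₀ (mul_ne_zero two_ne_zero hc) (by linarith))

theorem not_toPoly_dvd_line (hc : Q.c ≠ 0) {t : ℤ} (ht : t ≠ 0) : ¬Q.toPoly ∣ Q.line t := by
  intro hdvd
  have hline : (Q.line t).natDegree = 1 := by
    rw [line_eq]
    exact natDegree_linear (C_ne_zero.2 (mul_ne_zero ht (mul_ne_zero two_ne_zero hc)))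
  have hconic : Q.toPoly.natDegree = 2 := by
    rw [toPoly_eq]
    exact natDegree_quadratic (C_ne_zero.2 hc)
  have hle := natDegree_le_of_dvd hdvd (ne_zero_of_natDegree_gt (n := 0) (by omega))
  omega

theorem not_isSquare_disc_of_irreducible (hc : Q.c ≠ 0) (hdisc : Q.disc ≠ 0)
    (hm : Q.normConst = 0) (hirr : Irreducible Q.toPoly) : ¬IsSquare Q.disc := by
  rintro ⟨s, hs⟩
  have hs0 : s ≠ 0 := by
    rintro rfl
    exact hdisc (by rw [hs, zero_mul])
  have hdvd : Q.toPoly ∣ Q.line s * Q.line (-s) := Dvd.intro_left _ (line_mul_line_neg hm hs).symm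
  rcases hirr.prime.dvd_or_dvd hdvd with hdvd | hdvd
  · exact not_toPoly_dvd_line hc hs0 hdvd
  · exact not_toPoly_dvd_line hc (neg_ne_zero.2 hs0) hdvd

theorem eq_zero_of_sq_eq_mul_sq {D x y : ℤ} (hD : ¬IsSquare D) (h : x ^ 2 = D * y ^ 2) :
    x = 0 ∧ y = 0 := by
  have hy : y = 0 := by
    by_contra hy
    have hdvd : y ^ 2 ∣ x ^ 2 := ⟨D, by rw [h, mul_comm]⟩
    obtain ⟨t, rfl⟩ := (Int.pow_dvd_pow_iff two_ne_zero).1 hdvd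
    exact hD ⟨t, mul_left_cancel₀ (pow_ne_zero 2 hy) (by linarith)⟩
  subst hy
  exact ⟨by simpa using h, rfl⟩

theorem card_zeros_le_one_of_normConst_eq_zero (hc : Q.c ≠ 0) (hdisc : Q.disc ≠ 0)
    (hm : Q.normConst = 0) (hirr : Irreducible Q.toPoly) {S : Finset (ℤ × ℤ)}
    (hS : ∀ q ∈ S, Q.eval q.1 q.2 = 0) : S.card ≤ 1 := by
  have hzero : ∀ q ∈ S, (Q.normX q.1, Q.normY q.1 q.2) = (0, 0) := fun q hq => by
    have hnorm := normX_sq_sub_disc_mul_normY_sq (hS q hq)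
    rw [hm, sub_eq_zero] at hnorm
    exact Prod.ext_iff.2
      (eq_zero_of_sq_eq_mul_sq (not_isSquare_disc_of_irreducible hc hdisc hm hirr) hnorm)
  exact Finset.card_le_one.2 fun q hq r hr =>
    normForm_injective hc hdisc ((hzero q hq).trans (hzero r hr).symm)

theorem abs_mul_sub_mul_mul_le {u v w z A k : ℝ} (hk : 0 ≤ k) (hu : |u| ≤ A) (hv : |v| ≤ A)
    (hw : |w| ≤ A) (hz : |z| ≤ A) : |u * v - k * w * z| ≤ (1 + k) * A ^ 2 := by
  have hA : 0 ≤ A := (abs_nonneg u).trans hu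
  calc |u * v - k * w * z| ≤ |u * v| + |k * w * z| := abs_sub _ _
    _ = |u| * |v| + k * |w| * |z| := by rw [abs_mul, abs_mul, abs_mul, abs_of_nonneg hk]
    _ ≤ A * A + k * A * A := by gcongr
    _ = (1 + k) * A ^ 2 := by ring

namespace HeightLE

variable {T : ℝ}

theorem mono (h : Q.HeightLE T) {T' : ℝ} (hT : T ≤ T') : Q.HeightLE T' :=
  ⟨h.1.trans hT, h.2.1.trans hT, h.2.2.1.trans hT, h.2.2.2.1.trans hT, h.2.2.2.2.1.trans hT,
    h.2.2.2.2.2.trans hT⟩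

theorem abs_disc_le (h : Q.HeightLE T) : |(Q.disc : ℝ)| ≤ 5 * T ^ 2 := by
  obtain ⟨ha, hb, hc, -⟩ := h
  rw [disc, sq]
  push_cast
  exact (abs_mul_sub_mul_mul_le zero_le_four hb hb ha hc).trans_eq (by ring)

theorem abs_shift_le (h : Q.HeightLE T) : |(Q.shift : ℝ)| ≤ 5 * T ^ 2 := by
  obtain ⟨-, hb, hc, hd, he, -⟩ := h
  rw [shift]
  push_cast
  exact (abs_mul_sub_mul_mul_le zero_le_two hb he hc hd).trans (by nlinarith [sq_nonneg T])

theorem abs_normConst_le (h : Q.HeightLE T) : |(Q.normConst : ℝ)| ≤ 50 * T ^ 4 := by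
  have hdiscY : |(Q.e : ℝ) * Q.e - 4 * Q.c * Q.f| ≤ 5 * T ^ 2 := by
    obtain ⟨-, -, hc, -, he, hf⟩ := h
    exact (abs_mul_sub_mul_mul_le zero_le_four he he hc hf).trans_eq (by ring)
  rw [normConst, sq, sq]
  push_cast
  rw [← one_mul (Q.disc : ℝ)]
  exact (abs_mul_sub_mul_mul_le zero_le_one h.abs_shift_le h.abs_shift_le h.abs_disc_le
    hdiscY).trans_eq (by ring)

theorem abs_normX_le (h : Q.HeightLE T) (hT : 1 ≤ T) {x : ℤ} (hx : |(x : ℝ)| ≤ T) :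
    |(Q.normX x : ℝ)| ≤ 10 * T ^ 3 := by
  rw [normX]
  push_cast
  calc |(Q.disc * x + Q.shift : ℝ)| ≤ |(Q.disc : ℝ)| * |(x : ℝ)| + |(Q.shift : ℝ)| :=
        (abs_add_le _ _).trans_eq (by rw [abs_mul])
    _ ≤ 5 * T ^ 2 * T + 5 * T ^ 2 * T := by
        have hshift := h.abs_shift_le.trans
          (le_mul_of_one_le_right (by positivity : 0 ≤ 5 * T ^ 2) hT)
        have hdisc := h.abs_disc_le
        gcongr
    _ = 10 * T ^ 3 := by ring

theorem abs_normY_le (h : Q.HeightLE T) (hT : 1 ≤ T) {x y : ℤ} (hx : |(x : ℝ)| ≤ T)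
    (hy : |(y : ℝ)| ≤ T) : |(Q.normY x y : ℝ)| ≤ 4 * T ^ 2 := by
  obtain ⟨-, hb, hc, -, he, -⟩ := h
  rw [normY]
  push_cast
  calc |(2 * Q.c * y + Q.b * x + Q.e : ℝ)|
      ≤ 2 * |(Q.c : ℝ)| * |(y : ℝ)| + |(Q.b : ℝ)| * |(x : ℝ)| + |(Q.e : ℝ)| :=
        (abs_add_three _ _ _).trans_eq (by rw [abs_mul, abs_mul, abs_mul, abs_two])
    _ ≤ 2 * T * T + T * T + T * T := by
        have := he.trans (le_mul_of_one_le_right (by positivity) hT)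
        gcongr
    _ = 4 * T ^ 2 := by ring

end HeightLE

theorem exists_card_zeros_le_mul_rpow {δ : ℝ} (hδ : 0 < δ) :
    ∃ K : ℝ, 0 < K ∧ ∀ T : ℝ, 1 ≤ T → ∀ Q : Conic ℤ, Q.HeightLE T → Q.c ≠ 0 → Q.disc ≠ 0 →
      Irreducible Q.toPoly → ∀ S : Finset (ℤ × ℤ),
      (∀ q ∈ S, Q.eval q.1 q.2 = 0 ∧ |(q.1 : ℝ)| ≤ T ∧ |(q.2 : ℝ)| ≤ T) →
      (S.card : ℝ) ≤ K * T ^ δ := by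
  obtain ⟨K, hK, hnorm⟩ := exists_card_norm_form_le_mul_rpow (δ := δ / 4) (by positivity)
  refine ⟨K * 50 ^ (δ / 4) + 1, by positivity, ?_⟩
  intro T hT Q hQ hc hdisc hirr S hS
  have hTδ : 1 ≤ T ^ δ := Real.one_le_rpow hT hδ.le
  by_cases hm : Q.normConst = 0
  · have hcard : (S.card : ℝ) ≤ 1 := by
      exact_mod_cast
        card_zeros_le_one_of_normConst_eq_zero hc hdisc hm hirr fun q hq => (hS q hq).1
    have : 0 ≤ K * 50 ^ (δ / 4) := by positivity
    nlinarith
  have hT4 : ∀ n ≤ 4, T ^ n ≤ T ^ 4 := fun n hn => pow_le_pow_right₀ hT hn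
  have hT4' : 0 ≤ T ^ 4 := by positivity
  have hcard := hnorm (50 * T ^ 4) (by linarith [one_le_pow₀ hT (n := 4)]) _ _ hdisc hm
    (hQ.abs_disc_le.trans (by linarith [hT4 2 (by norm_num)])) hQ.abs_normConst_le
    (S.image fun q => (Q.normX q.1, Q.normY q.1 q.2)) <| by
      refine Finset.forall_mem_image.2 fun q hq => ?_
      obtain ⟨hzero, hx, hy⟩ := hS q hq
      exact ⟨normX_sq_sub_disc_mul_normY_sq hzero,
        (hQ.abs_normX_le hT hx).trans (by linarith [hT4 3 (by norm_num)]),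
        (hQ.abs_normY_le hT hx hy).trans (by linarith [hT4 2 (by norm_num)])⟩
  rw [Finset.card_image_of_injective _ (normForm_injective hc hdisc)] at hcard
  calc (S.card : ℝ) ≤ K * (50 * T ^ 4) ^ (δ / 4) := hcard
    _ = K * 50 ^ (δ / 4) * T ^ δ := by
        rw [Real.mul_rpow (by norm_num) (by positivity), ← Real.rpow_natCast_mul (by positivity),
          mul_assoc]
        congr 3
        push_cast
        ring
    _ ≤ (K * 50 ^ (δ / 4) + 1) * T ^ δ := by linarith

end Conic

/-! ### Determinants of monomials at congruent points -/

section Determinant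

variable {ι : Type*} [Fintype ι]

theorem exists_ne_zero_sum_mul_eq_zero_of_span_ne_top {K κ : Type*} [Field K] {w : κ → ι → K}
    (h : Submodule.span K (Set.range w) ≠ ⊤) :
    ∃ c : ι → K, c ≠ 0 ∧ ∀ k, ∑ j, c j * w k j = 0 := by
  classical
  obtain ⟨L, hL, hker⟩ := Submodule.exists_le_ker_of_lt_top _ (lt_top_iff_ne_top.2 h)
  have hLsum (z : ι → K) : L z = ∑ j, L (Pi.single j 1) * z j := by
    conv_lhs => rw [← Finset.univ_sum_single z, map_sum]
    refine Finset.sum_congr rfl fun j _ => ?_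
    rw [mul_comm, ← smul_eq_mul, ← map_smul, ← Pi.single_smul, smul_eq_mul, mul_one]
  refine ⟨fun j => L (Pi.single j 1), fun hzero => hL ?_, fun k => ?_⟩
  · ext1 j
    ext
    exact congrFun hzero j
  · rw [← hLsum]
    exact hker (Submodule.subset_span ⟨k, rfl⟩)

variable [DecidableEq ι]

theorem eval_eq_sum_pow_mul_coeff_modByMonic {R : Type*} [CommRing R] [Nontrivial R] {s : ℕ}
    (x : Fin s → R) (g : R[X]) (i : Fin s) :
    g.eval (x i) = ∑ k : Fin s, x i ^ (k : ℕ) * (g %ₘ ∏ j, (X - C (x j))).coeff k := by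
  set W : R[X] := ∏ j, (X - C (x j)) with hW
  have hmonic : W.Monic := monic_prod_of_monic _ _ fun j _ => monic_X_sub_C _
  have hroot : W.eval (x i) = 0 := by
    rw [hW, eval_prod]
    exact Finset.prod_eq_zero (Finset.mem_univ i) (by simp)
  have hdeg : (g %ₘ W).natDegree < s := by
    have hWdeg : W.natDegree = s := by
      rw [hW, natDegree_prod_of_monic _ _ fun j _ => monic_X_sub_C _]
      simp
    refine (natDegree_modByMonic_lt g hmonic fun h => ?_).trans_eq hWdeg
    simp [h] at hroot
  calc g.eval (x i) = (g %ₘ W).eval (x i) := by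
        conv_lhs => rw [← modByMonic_add_div g W]
        simp [hroot]
    _ = _ := by
        rw [eval_eq_sum_range' hdeg, Finset.sum_range]
        exact Finset.sum_congr rfl fun k _ => mul_comm _ _

theorem det_vandermonde_dvd_det_eval {R : Type*} [CommRing R] [Nontrivial R] {s : ℕ}
    (x : Fin s → R) (g : Fin s → R[X]) :
    (Matrix.vandermonde x).det ∣ (Matrix.of fun i j => (g j).eval (x i)).det := by
  have hmul : (Matrix.of fun i j => (g j).eval (x i)) = Matrix.vandermonde x *
      Matrix.of fun k j : Fin s => (g j %ₘ ∏ i, (X - C (x i))).coeff k := by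
    ext i j
    simp only [Matrix.mul_apply, Matrix.of_apply, Matrix.vandermonde_apply]
    exact eval_eq_sum_pow_mul_coeff_modByMonic x (g j) i
  rw [hmul, Matrix.det_mul]
  exact dvd_mul_right _ _

theorem pow_choose_two_dvd_det_vandermonde {R : Type*} [CommRing R] {s : ℕ} {p : R}
    {x : Fin s → R} (hx : ∀ i j, p ∣ x i - x j) :
    p ^ s.choose 2 ∣ (Matrix.vandermonde x).det := by
  have hpow : p ^ s.choose 2 = ∏ i : Fin s, ∏ _j ∈ Finset.Ioi i, p := by
    simp only [Finset.prod_const, Fin.card_Ioi]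
    rw [Finset.prod_pow_eq_pow_sum, Fin.sum_univ_eq_sum_range (fun i => s - 1 - i),
      Finset.sum_range_reflect (fun i => i), Finset.sum_range_id, Nat.choose_two_right]
  rw [hpow, Matrix.det_vandermonde]
  exact Finset.prod_dvd_prod_of_dvd _ _ fun i _ =>
    Finset.prod_dvd_prod_of_dvd _ _ fun j _ => hx j i

theorem pow_choose_two_dvd_det_eval {R : Type*} [CommRing R] [Nontrivial R] {p : R} {x : ι → R}
    (hx : ∀ i j, p ∣ x i - x j) (g : ι → R[X]) :
    p ^ (Fintype.card ι).choose 2 ∣ (Matrix.of fun i j => (g j).eval (x i)).det := by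
  let e := (Fintype.equivFin ι).symm
  rw [← Matrix.det_submatrix_equiv_self e]
  exact (pow_choose_two_dvd_det_vandermonde fun i j => hx (e i) (e j)).trans
    (det_vandermonde_dvd_det_eval (x ∘ e) (g ∘ e))

theorem det_modEq_det {n : ℤ} {A B : Matrix ι ι ℤ} (h : ∀ i j, A i j ≡ B i j [ZMOD n]) :
    A.det ≡ B.det [ZMOD n] := by
  rw [Matrix.det_apply', Matrix.det_apply']
  exact Int.ModEq.sum fun σ _ => (Int.ModEq.prod fun i _ => h _ _).mul_left _

theorem abs_det_le_factorial_mul_prod {A : Matrix ι ι ℤ} {c : ι → ℤ} (h : ∀ i j, |A i j| ≤ c j) :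
    |A.det| ≤ (Fintype.card ι).factorial * ∏ j, c j := by
  have hterm (σ : Equiv.Perm ι) : |(Equiv.Perm.sign σ : ℤ) * ∏ i, A (σ i) i| ≤ ∏ j, c j := by
    rw [abs_mul, Int.isUnit_iff_abs_eq.1 (Equiv.Perm.sign σ).isUnit, one_mul, Finset.abs_prod]
    exact Finset.prod_le_prod (fun _ _ => abs_nonneg _) fun i _ => h _ _
  rw [Matrix.det_apply']
  calc |∑ σ : Equiv.Perm ι, (Equiv.Perm.sign σ : ℤ) * ∏ i, A (σ i) i|
      ≤ ∑ σ : Equiv.Perm ι, |(Equiv.Perm.sign σ : ℤ) * ∏ i, A (σ i) i| :=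
        Finset.abs_sum_le_sum_abs _ _
    _ ≤ Fintype.card (Equiv.Perm ι) • ∏ j, c j :=
        Finset.sum_le_card_nsmul _ _ _ fun σ _ => hterm σ
    _ = _ := by rw [Fintype.card_perm, nsmul_eq_mul]

theorem exists_det_ne_zero_of_span_eq_top {K κ : Type*} [Field K] {w : κ → ι → K}
    (h : Submodule.span K (Set.range w) = ⊤) :
    ∃ f : ι → κ, (Matrix.of fun i j => w (f i) j).det ≠ 0 := by
  obtain ⟨τ, a, -, hspan, hindep⟩ := exists_linearIndependent' K w
  let b : Module.Basis τ K (ι → K) := Module.Basis.mk hindep (by rw [hspan, h])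
  have : Fintype τ := Module.Basis.fintypeIndexOfRankLtAleph0 b (Module.rank_lt_aleph0 K _)
  have hcard : Fintype.card ι = Fintype.card τ := by
    rw [← Module.finrank_eq_card_basis b, Module.finrank_fintype_fun_eq_card]
  let e : ι ≃ τ := Fintype.equivOfCardEq hcard
  refine ⟨a ∘ e, ?_⟩
  have hrows : LinearIndependent K (Matrix.of fun i j => w (a (e i)) j).row :=
    hindep.comp e e.injective
  rw [Matrix.linearIndependent_rows_iff_isUnit, Matrix.isUnit_iff_isUnit_det] at hrows
  exact hrows.ne_zero

theorem exists_int_relation_of_det_eq_zero {κ : Type*} {v : κ → ι → ℤ}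
    (h : ∀ f : ι → κ, (Matrix.of fun i j => v (f i) j).det = 0) :
    ∃ c : ι → ℤ, c ≠ 0 ∧ ∀ k, ∑ j, c j * v k j = 0 := by
  have hspan : Submodule.span ℚ (Set.range fun k j => (v k j : ℚ)) ≠ ⊤ := fun htop => by
    obtain ⟨f, hf⟩ := exists_det_ne_zero_of_span_eq_top htop
    exact hf (by simpa [Int.cast_det, Matrix.map] using congrArg (Int.cast : ℤ → ℚ) (h f))
  obtain ⟨c, hc, hrel⟩ := exists_ne_zero_sum_mul_eq_zero_of_span_ne_top hspan
  have hdep : ¬LinearIndependent ℚ fun j k => (v k j : ℚ) := fun hindep => hc <| funext <|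
    Fintype.linearIndependent_iff.1 hindep c <| funext fun k => by simpa using hrel k
  rw [← LinearIndependent.iff_fractionRing ℤ ℚ, Fintype.not_linearIndependent_iff] at hdep
  obtain ⟨c, hsum, j, hj⟩ := hdep
  refine ⟨c, fun h => hj (congrFun h j), fun k => ?_⟩
  have hk := congrFun hsum k
  simp only [Finset.sum_apply, Pi.smul_apply, smul_eq_mul, Pi.zero_apply,
    ← Int.cast_smul_eq_zsmul ℚ] at hk
  exact_mod_cast hk

end Determinant

section Hensel

variable {R : Type*} [CommRing R]

theorem eval_eval_eq_evalEval (F : R[X][X]) (φ : R[X]) (x : R) :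
    (F.eval φ).eval x = F.evalEval x (φ.eval x) := by
  rw [← map_evalRingHom_eval, eval_map]
  exact hom_eval₂ F (RingHom.id _) (evalRingHom x) φ

theorem dvd_evalEval_sub_evalEval (F : R[X][X]) {p x y x₀ y₀ : R} (hx : p ∣ x - x₀)
    (hy : p ∣ y - y₀) : p ∣ F.evalEval x y - F.evalEval x₀ y₀ := by
  have hfst : p ∣ F.evalEval x y - F.evalEval x₀ y := hx.trans (sub_dvd_eval_sub _ _ _)
  have hsnd : p ∣ F.evalEval x₀ y - F.evalEval x₀ y₀ := by
    simp only [← map_evalRingHom_eval]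
    exact hy.trans (sub_dvd_eval_sub _ _ _)
  simpa using dvd_add hfst hsnd

theorem exists_evalEval_add_eq (F : R[X][X]) (x y e : R) : ∃ k,
    F.evalEval x (y + e) = F.evalEval x y + F.derivative.evalEval x y * e + k * e ^ 2 := by
  obtain ⟨k, hk⟩ := (F.map (evalRingHom x)).binomExpansion y e
  refine ⟨k, ?_⟩
  rwa [derivative_map, map_evalRingHom_eval, map_evalRingHom_eval, map_evalRingHom_eval] at hk

theorem exists_pow_dvd_eval_sub_of_evalEval_eq_zero (F : R[X][X]) {p u x₀ y₀ : R}
    (hu : p ∣ 1 - u * F.derivative.evalEval x₀ y₀) (n : ℕ) :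
    ∃ φ : R[X], ∀ x y, F.evalEval x y = 0 → p ∣ x - x₀ → p ∣ y - y₀ →
      p ^ (n + 1) ∣ φ.eval x - y := by
  induction n with
  | zero => exact ⟨C y₀, fun x y _ _ hy => by simpa using dvd_sub_comm.1 hy⟩
  | succ n ih =>
    obtain ⟨φ, hφ⟩ := ih
    refine ⟨φ - C u * F.eval φ, fun x y hF hx hy => ?_⟩
    set e := φ.eval x - y with he
    have hdvd : p ^ (n + 1) ∣ e := hφ x y hF hx hy
    obtain ⟨k, hk⟩ := exists_evalEval_add_eq F x y e
    have hux : p ∣ 1 - u * F.derivative.evalEval x y := by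
      convert dvd_sub hu ((dvd_evalEval_sub_evalEval F.derivative hx hy).mul_left u) using 1
      ring
    have hstep : (φ - C u * F.eval φ).eval x - y =
        e * (1 - u * F.derivative.evalEval x y) - e * e * (u * k) := by
      have : φ.eval x = y + e := by rw [he]; ring
      rw [eval_sub, eval_mul, eval_C, eval_eval_eq_evalEval, this, hk, hF]
      ring
    rw [hstep, pow_succ]
    exact dvd_sub (mul_dvd_mul hdvd hux)
      ((mul_dvd_mul hdvd ((dvd_pow_self p n.succ_ne_zero).trans hdvd)).mul_right _)

end Hensel

theorem det_monomials_eq_zero {ι : Type*} [Fintype ι] [DecidableEq ι] (F : ℤ[X][X])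
    {p u x₀ y₀ N : ℤ} {α β : ι → ℕ} (hu : p ∣ 1 - u * F.derivative.evalEval x₀ y₀)
    (hp : (Fintype.card ι).factorial * N ^ (∑ i, (α i + β i)) < p ^ (Fintype.card ι).choose 2)
    {q : ι → ℤ × ℤ} (hbox : ∀ i, |(q i).1| ≤ N ∧ |(q i).2| ≤ N)
    (hF : ∀ i, F.evalEval (q i).1 (q i).2 = 0)
    (hq : ∀ i, p ∣ (q i).1 - x₀ ∧ p ∣ (q i).2 - y₀) :
    (Matrix.of fun i j => (q i).1 ^ α j * (q i).2 ^ β j).det = 0 := by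
  set k := (Fintype.card ι).choose 2
  obtain ⟨φ, hφ⟩ := exists_pow_dvd_eval_sub_of_evalEval_eq_zero F hu k
  have hcong (i : ι) : φ.eval (q i).1 ≡ (q i).2 [ZMOD p ^ k] :=
    (Int.modEq_iff_dvd.2 ((pow_dvd_pow p k.le_succ).trans
      (hφ _ _ (hF i) (hq i).1 (hq i).2))).symm
  have hdvd : p ^ k ∣ (Matrix.of fun i j => (X ^ α j * φ ^ β j : ℤ[X]).eval (q i).1).det :=
    pow_choose_two_dvd_det_eval (fun i j => by simpa using dvd_sub (hq i).1 (hq j).1) _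
  have hmod : (Matrix.of fun i j => (X ^ α j * φ ^ β j : ℤ[X]).eval (q i).1).det ≡
      (Matrix.of fun i j => (q i).1 ^ α j * (q i).2 ^ β j).det [ZMOD p ^ k] :=
    det_modEq_det fun i j => by
      simp only [Matrix.of_apply, eval_mul, eval_pow, eval_X]
      exact ((hcong i).pow _).mul_left _
  refine Int.eq_zero_of_abs_lt_dvd (hmod.dvd_iff.1 hdvd) (lt_of_le_of_lt ?_ hp)
  rw [← Finset.prod_pow_eq_pow_sum]
  refine abs_det_le_factorial_mul_prod fun i j => ?_
  obtain ⟨hx, hy⟩ := hbox i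
  rw [Matrix.of_apply, abs_mul, abs_pow, abs_pow, pow_add]
  have hN : 0 ≤ N := (abs_nonneg _).trans hx
  gcongr

/-! ### The determinant method -/

section FiberCounting

variable {R : Type*} [CommRing R] [IsDomain R]

theorem card_le_natDegree_of_forall_isRoot {f : R[X]} (hf : f ≠ 0) {S : Finset R}
    (hS : ∀ y ∈ S, f.IsRoot y) : S.card ≤ f.natDegree := by
  classical
  exact (Finset.card_le_card fun y hy => by simpa [hf] using hS y hy).trans
    ((Multiset.toFinset_card_le _).trans (card_roots' f))

theorem card_le_mul_card_image_fst_of_isRoot {α : Type*} [DecidableEq α] {d : ℕ} {f : α → R[X]}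
    (hd : ∀ x, (f x).natDegree ≤ d) {S : Finset (α × R)}
    (hS : ∀ q ∈ S, f q.1 ≠ 0 ∧ (f q.1).IsRoot q.2) : S.card ≤ d * (S.image Prod.fst).card := by
  classical
  refine Finset.card_le_mul_card_image S d fun x hx => ?_
  obtain ⟨q₀, hq₀, rfl⟩ := Finset.mem_image.1 hx
  have hinj : Set.InjOn Prod.snd (S.filter fun q => q.1 = q₀.1 : Set (α × R)) :=
    fun q hq r hr h => Prod.ext
      ((Finset.mem_filter.1 hq).2.trans (Finset.mem_filter.1 hr).2.symm) h
  rw [← Finset.card_image_of_injOn hinj]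
  refine (card_le_natDegree_of_forall_isRoot (hS q₀ hq₀).1 ?_).trans (hd q₀.1)
  refine Finset.forall_mem_image.2 fun q hq => ?_
  obtain ⟨hq, hx⟩ := Finset.mem_filter.1 hq
  exact hx ▸ (hS q hq).2

theorem card_zeros_le_mul_card_image_fst [DecidableEq R] {F : R[X][X]} {S : Finset (R × R)}
    (hS : ∀ q ∈ S, F.evalEval q.1 q.2 = 0 ∧ F.derivative.evalEval q.1 q.2 ≠ 0) :
    S.card ≤ F.natDegree * (S.image Prod.fst).card := by
  refine card_le_mul_card_image_fst_of_isRoot (f := fun x => F.map (evalRingHom x))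
    (fun _ => natDegree_map_le) fun q hq => ⟨fun hzero => (hS q hq).2 ?_, ?_⟩
  · rw [← map_evalRingHom_eval, ← derivative_map, hzero, derivative_zero, eval_zero]
  · rw [IsRoot, map_evalRingHom_eval]
    exact (hS q hq).1

theorem card_zeros_le_natDegree_mul_card [Fintype R] {F : R[X][X]} {S : Finset (R × R)}
    (hS : ∀ q ∈ S, F.evalEval q.1 q.2 = 0 ∧ F.derivative.evalEval q.1 q.2 ≠ 0) :
    S.card ≤ F.natDegree * Fintype.card R := by
  classical
  exact (card_zeros_le_mul_card_image_fst hS).trans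
    (Nat.mul_le_mul_left _ (Finset.card_le_univ _))

end FiberCounting

section Resultant

theorem natDegree_det_le {R n : Type*} [CommRing R] [Fintype n] [DecidableEq n]
    {A : Matrix n n R[X]} {B : ℕ} (h : ∀ i j, (A i j).natDegree ≤ B) :
    A.det.natDegree ≤ Fintype.card n * B := by
  rw [Matrix.det_apply]
  refine natDegree_sum_le_of_forall_le _ _ fun σ _ => ?_
  rw [Units.smul_def]
  refine (natDegree_smul_le _ _).trans ((natDegree_prod_le _ _).trans ?_)
  exact Finset.sum_le_card_nsmul _ _ B fun i _ => h _ _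

theorem natDegree_resultant_le {R : Type*} [CommRing R] {G H : R[X][X]} {B : ℕ}
    (hG : ∀ i, (G.coeff i).natDegree ≤ B) (hH : ∀ i, (H.coeff i).natDegree ≤ B) :
    (resultant G H).natDegree ≤ (G.natDegree + H.natDegree) * B := by
  refine (natDegree_det_le (B := B) fun i j => ?_).trans_eq (by rw [Fintype.card_fin])
  rw [sylvester, Matrix.of_apply]
  induction j using Fin.addCases <;> simp only [Fin.addCases_left, Fin.addCases_right] <;>
    split_ifs <;> simp [hG, hH]

theorem resultant_ne_zero_of_irreducible {R : Type*} [CommRing R] [IsDomain R]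
    [NormalizedGCDMonoid R] {G H : R[X]} (hG : Irreducible G) (hH : H ≠ 0)
    (hlt : H.natDegree < G.natDegree) : resultant G H ≠ 0 := by
  let φ := algebraMap R (FractionRing R)
  have hφ : Function.Injective φ := IsFractionRing.injective R (FractionRing R)
  have hirr : Irreducible (G.map φ) :=
    (hG.isPrimitive hlt.ne_bot).irreducible_iff_irreducible_map_fraction_map.1 hG
  have hcop : IsCoprime (G.map φ) (H.map φ) := by
    refine hirr.coprime_iff_not_dvd.2 fun hdvd => hlt.not_ge ?_
    simpa only [natDegree_map_eq_of_injective hφ] using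
      natDegree_le_of_dvd hdvd ((Polynomial.map_ne_zero_iff hφ).2 hH)
  refine fun hzero => resultant_ne_zero _ _ hcop ?_
  rw [natDegree_map_eq_of_injective hφ, natDegree_map_eq_of_injective hφ, resultant_map_map,
    hzero, map_zero]

theorem isRoot_resultant_of_evalEval_eq_zero {R : Type*} [CommRing R] {G H : R[X][X]}
    (hdeg : G.natDegree ≠ 0) {x y : R} (hG : G.evalEval x y = 0) (hH : H.evalEval x y = 0) :
    (resultant G H).IsRoot x := by
  obtain ⟨p, q, -, -, hpq⟩ := exists_mul_add_mul_eq_C_resultant G H le_rfl le_rfl (by omega)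
  have heval := congrArg (evalEval x y) hpq
  rw [evalEval_add, evalEval_mul, evalEval_mul, hG, hH, evalEval_C] at heval
  simpa using heval.symm

end Resultant

theorem exists_polynomial_of_det_monomials_eq_zero {M e : ℕ} {T : Finset (ℤ × ℤ)}
    (h : ∀ q : Fin M × Fin e → T,
      (Matrix.of fun i j => (q i).1.1 ^ (j.1 : ℕ) * (q i).1.2 ^ (j.2 : ℕ)).det = 0) :
    ∃ H : ℤ[X][X], H ≠ 0 ∧ H.natDegree < e ∧ (∀ i, (H.coeff i).natDegree ≤ M) ∧
      ∀ q ∈ T, H.evalEval q.1 q.2 = 0 := by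
  classical
  obtain ⟨c, hc, hrel⟩ := exists_int_relation_of_det_eq_zero
    (v := fun (q : T) (j : Fin M × Fin e) => q.1.1 ^ (j.1 : ℕ) * q.1.2 ^ (j.2 : ℕ)) h
  let H : ℤ[X][X] := ofFn e fun j => ofFn M fun i => c (i, j)
  have hH : H ≠ 0 := fun hzero => hc <| funext fun ij => by
    have hcol := congrFun ((map_eq_zero_iff _ (injective_ofFn e)).1 hzero) ij.2
    exact congrFun ((map_eq_zero_iff _ (injective_ofFn M)).1 hcol) ij.1
  refine ⟨H, hH, (natDegree_lt_iff_degree_lt hH).2 (ofFn_degree_lt _), fun j => ?_,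
    fun q hq => ?_⟩
  · by_cases hj : j < e
    · rw [ofFn_coeff_eq_val_of_lt _ hj]
      exact natDegree_le_iff_degree_le.2 (ofFn_degree_lt _).le
    · simp [H, ofFn_coeff_eq_zero_of_ge _ (not_lt.1 hj)]
  · rw [← hrel ⟨q, hq⟩, Fintype.sum_prod_type_right]
    simp only [H, ofFn_eq_sum_monomial, evalEval_finsetSum]
    refine Finset.sum_congr rfl fun j _ => ?_
    simp only [evalEval, eval_monomial, eval_mul, eval_finsetSum, eval_pow, eval_C, Finset.sum_mul,
      mul_assoc]

theorem card_image_fst_le_of_det_monomials_eq_zero {G : ℤ[X][X]} (hG : Irreducible G) {M e B : ℕ}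
    (he : e ≤ G.natDegree) (hGB : ∀ i, (G.coeff i).natDegree ≤ B) (hMB : M ≤ B)
    {T : Finset (ℤ × ℤ)} (hT : ∀ q ∈ T, G.evalEval q.1 q.2 = 0)
    (hdet : ∀ q : Fin M × Fin e → T,
      (Matrix.of fun i j => (q i).1.1 ^ (j.1 : ℕ) * (q i).1.2 ^ (j.2 : ℕ)).det = 0) :
    (T.image Prod.fst).card ≤ 2 * G.natDegree * B := by
  obtain ⟨H, hH, hlt, hHM, hHT⟩ := exists_polynomial_of_det_monomials_eq_zero hdet
  have hdeg : H.natDegree < G.natDegree := hlt.trans_le he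
  refine (card_le_natDegree_of_forall_isRoot
    (resultant_ne_zero_of_irreducible hG hH hdeg) ?_).trans
    ((natDegree_resultant_le hGB fun i => (hHM i).trans hMB).trans (by gcongr; omega))
  exact Finset.forall_mem_image.2 fun q hq =>
    isRoot_resultant_of_evalEval_eq_zero hdeg.ne_bot (hT q hq) (hHT q hq)

section Primes

theorem exists_finset_primes (k : ℕ) {Q : ℕ} (hQ : Q ≠ 0) :
    ∃ s : Finset ℕ, s.card = k ∧ ∀ p ∈ s, p.Prime ∧ Q < p ∧ p ≤ 2 ^ k * Q := by
  induction k with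
  | zero => exact ⟨∅, by simp⟩
  | succ k ih =>
    obtain ⟨s, hcard, hs⟩ := ih
    obtain ⟨p, hp, hlt, hle⟩ := Nat.exists_prime_lt_and_le_two_mul (2 ^ k * Q) (by positivity)
    have hps : p ∉ s := fun h => (hs p h).2.2.not_gt hlt
    refine ⟨insert p s, by rw [Finset.card_insert_of_notMem hps, hcard], ?_⟩
    have hpow : Q ≤ 2 ^ k * Q := Nat.le_mul_of_pos_left _ (by positivity)
    refine (Finset.forall_mem_insert _ _ _).2 ⟨⟨hp, by omega, by rw [pow_succ']; linarith⟩, ?_⟩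
    intro r hr
    obtain ⟨hr, hrlt, hrle⟩ := hs r hr
    exact ⟨hr, hrlt, by rw [pow_succ']; linarith⟩

theorem exists_prime_not_dvd {s : Finset ℕ} {Q : ℕ} (hs : ∀ p ∈ s, p.Prime ∧ Q ≤ p) {z : ℤ}
    (hz : z ≠ 0) (hlt : |z| < Q ^ s.card) : ∃ p ∈ s, ¬(p : ℤ) ∣ z := by
  by_contra! hdvd
  have hprod : ∏ p ∈ s, (p : ℤ) ∣ z := by
    refine Finset.prod_dvd_of_coprime (fun p hp r hr hne => ?_) hdvd
    exact Nat.isCoprime_iff_coprime.2 ((Nat.coprime_primes (hs p hp).1 (hs r hr).1).2 hne)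
  have hle : (Q : ℤ) ^ s.card ≤ ∏ p ∈ s, (p : ℤ) := by
    rw [← Finset.prod_const]
    exact Finset.prod_le_prod (fun _ _ => by positivity) fun p hp => by exact_mod_cast (hs p hp).2
  exact hlt.not_ge (hle.trans (Int.le_of_dvd (abs_pos.2 hz) ((dvd_abs _ _).2 hprod)))

end Primes

section DeterminantMethod

variable {F G : ℤ[X][X]} {d e M B p : ℕ} {N : ℤ}

theorem card_residue_class_le (hF : F.natDegree ≤ d) (hG : Irreducible G) (he : e ≤ G.natDegree)
    (hd : G.natDegree ≤ d) (hGB : ∀ i, (G.coeff i).natDegree ≤ B) (hMB : M ≤ B)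
    (hp : p.Prime)
    (hbig : (M * e).factorial * N ^ (∑ i : Fin M × Fin e, ((i.1 : ℕ) + (i.2 : ℕ))) <
      (p : ℤ) ^ (M * e).choose 2)
    {T : Finset (ℤ × ℤ)} (hbox : ∀ q ∈ T, |q.1| ≤ N ∧ |q.2| ≤ N)
    (hzero : ∀ q ∈ T, F.evalEval q.1 q.2 = 0 ∧ G.evalEval q.1 q.2 = 0)
    (hderiv : ∀ q ∈ T, ¬(p : ℤ) ∣ F.derivative.evalEval q.1 q.2)
    (hT : ∀ q ∈ T, ∀ r ∈ T, (p : ℤ) ∣ q.1 - r.1 ∧ (p : ℤ) ∣ q.2 - r.2) :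
    T.card ≤ d * (2 * d * B) := by
  obtain rfl | ⟨q₀, hq₀⟩ := T.eq_empty_or_nonempty
  · simp
  obtain ⟨v, u, huv⟩ := (Nat.prime_iff_prime_int.1 hp).coprime_iff_not_dvd.2 (hderiv q₀ hq₀)
  have hdet (q : Fin M × Fin e → T) :
      (Matrix.of fun i j => (q i).1.1 ^ (j.1 : ℕ) * (q i).1.2 ^ (j.2 : ℕ)).det = 0 :=
    det_monomials_eq_zero F (u := u) ⟨v, by linear_combination -huv⟩ (by simpa using hbig)
      (fun i => hbox _ (q i).2) (fun i => (hzero _ (q i).2).1) fun i => hT _ (q i).2 q₀ hq₀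
  calc T.card ≤ F.natDegree * (T.image Prod.fst).card :=
        card_zeros_le_mul_card_image_fst fun q hq =>
          ⟨(hzero q hq).1, fun h => hderiv q hq (h ▸ dvd_zero _)⟩
    _ ≤ d * (2 * G.natDegree * B) := by
        gcongr
        exact card_image_fst_le_of_det_monomials_eq_zero hG he hGB hMB
          (fun q hq => (hzero q hq).2) hdet
    _ ≤ d * (2 * d * B) := by gcongr

theorem card_image_intCast_le [Fact p.Prime] {T : Finset (ℤ × ℤ)}
    (hzero : ∀ q ∈ T, F.evalEval q.1 q.2 = 0)
    (hderiv : ∀ q ∈ T, ¬(p : ℤ) ∣ F.derivative.evalEval q.1 q.2) :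
    (T.image fun q => ((q.1 : ZMod p), (q.2 : ZMod p))).card ≤ F.natDegree * p := by
  let φ := Int.castRingHom (ZMod p)
  have hcast (H : ℤ[X][X]) (x y : ℤ) : (H.map (mapRingHom φ)).evalEval (x : ZMod p) (y : ZMod p) =
      ((H.evalEval x y : ℤ) : ZMod p) := map_mapRingHom_evalEval φ H x y
  calc _ ≤ (F.map (mapRingHom φ)).natDegree * Fintype.card (ZMod p) := by
        refine card_zeros_le_natDegree_mul_card (Finset.forall_mem_image.2 fun q hq => ?_)
        rw [derivative_map, hcast, hcast, Ne, ZMod.intCast_zmod_eq_zero_iff_dvd,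
          ZMod.intCast_zmod_eq_zero_iff_dvd, hzero q hq]
        exact ⟨dvd_zero _, hderiv q hq⟩
    _ ≤ F.natDegree * p := by
        rw [ZMod.card]
        exact Nat.mul_le_mul_right _ natDegree_map_le

theorem card_zeros_le_of_not_dvd_derivative (hF : F.natDegree ≤ d) (hG : Irreducible G)
    (he : e ≤ G.natDegree) (hd : G.natDegree ≤ d) (hGB : ∀ i, (G.coeff i).natDegree ≤ B)
    (hMB : M ≤ B) (hp : p.Prime)
    (hbig : (M * e).factorial * N ^ (∑ i : Fin M × Fin e, ((i.1 : ℕ) + (i.2 : ℕ))) <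
      (p : ℤ) ^ (M * e).choose 2)
    {T : Finset (ℤ × ℤ)} (hbox : ∀ q ∈ T, |q.1| ≤ N ∧ |q.2| ≤ N)
    (hzero : ∀ q ∈ T, F.evalEval q.1 q.2 = 0 ∧ G.evalEval q.1 q.2 = 0)
    (hderiv : ∀ q ∈ T, ¬(p : ℤ) ∣ F.derivative.evalEval q.1 q.2) :
    T.card ≤ d * (2 * d * B) * (d * p) := by
  have : Fact p.Prime := ⟨hp⟩
  refine (Finset.card_le_mul_card_image (f := fun q => ((q.1 : ZMod p), (q.2 : ZMod p))) T
    (d * (2 * d * B)) fun w _ => ?_).trans ?_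
  · have hmem {q : ℤ × ℤ} := Finset.mem_filter (s := T) (a := q)
      (p := fun q => ((q.1 : ZMod p), (q.2 : ZMod p)) = w)
    refine card_residue_class_le hF hG he hd hGB hMB hp hbig (fun q hq => hbox q (hmem.1 hq).1)
      (fun q hq => hzero q (hmem.1 hq).1) (fun q hq => hderiv q (hmem.1 hq).1)
      fun q hq r hr => ?_
    obtain ⟨hfst, hsnd⟩ := Prod.mk.inj ((hmem.1 hr).2.trans (hmem.1 hq).2.symm)
    exact ⟨(ZMod.intCast_eq_intCast_iff_dvd_sub _ _ _).1 hfst,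
      (ZMod.intCast_eq_intCast_iff_dvd_sub _ _ _).1 hsnd⟩
  · gcongr
    exact (card_image_intCast_le (fun q hq => (hzero q hq).1) hderiv).trans (by gcongr)

theorem card_zeros_le_card_primes_mul (hF : F.natDegree ≤ d) (hG : Irreducible G)
    (he : e ≤ G.natDegree) (hd : G.natDegree ≤ d) (hGB : ∀ i, (G.coeff i).natDegree ≤ B)
    (hMB : M ≤ B) {s : Finset ℕ} {Q U : ℕ} (hs : ∀ p ∈ s, p.Prime ∧ Q < p ∧ p ≤ U)
    (hbig : ∀ p ∈ s, (M * e).factorial * N ^ (∑ i : Fin M × Fin e, ((i.1 : ℕ) + (i.2 : ℕ))) <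
      (p : ℤ) ^ (M * e).choose 2)
    {S : Finset (ℤ × ℤ)} (hbox : ∀ q ∈ S, |q.1| ≤ N ∧ |q.2| ≤ N)
    (hzero : ∀ q ∈ S, F.evalEval q.1 q.2 = 0 ∧ G.evalEval q.1 q.2 = 0)
    (hderiv : ∀ q ∈ S, F.derivative.evalEval q.1 q.2 ≠ 0 ∧
      |F.derivative.evalEval q.1 q.2| < Q ^ s.card) :
    S.card ≤ s.card * (d * (2 * d * B) * (d * U)) := by
  classical
  let good (p : ℕ) := S.filter fun q => ¬(p : ℤ) ∣ F.derivative.evalEval q.1 q.2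
  have hcover : S ⊆ s.biUnion good := fun q hq => by
    obtain ⟨p, hp, hndvd⟩ := exists_prime_not_dvd (fun p hp => ⟨(hs p hp).1, (hs p hp).2.1.le⟩)
      (hderiv q hq).1 (hderiv q hq).2
    exact Finset.mem_biUnion.2 ⟨p, hp, Finset.mem_filter.2 ⟨hq, hndvd⟩⟩
  refine (Finset.card_le_card hcover).trans (Finset.card_biUnion_le_card_mul _ _ _ fun p hp => ?_)
  obtain ⟨hprime, -, hpU⟩ := hs p hp
  refine (card_zeros_le_of_not_dvd_derivative hF hG he hd hGB hMB hprime (hbig p hp)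
    (fun q hq => hbox q (Finset.mem_filter.1 hq).1)
    (fun q hq => hzero q (Finset.mem_filter.1 hq).1)
    fun q hq => (Finset.mem_filter.1 hq).2).trans (by gcongr)

end DeterminantMethod

section Exponents

theorem two_mul_sum_fin_prod_add (M e : ℕ) :
    2 * ∑ i : Fin M × Fin e, (((i.1 : ℕ) : ℝ) + ((i.2 : ℕ) : ℝ)) = M * e * (M + e - 2) := by
  have hsum (n : ℕ) : 2 * ∑ i : Fin n, ((i : ℕ) : ℝ) = n * (n - 1) := by
    rw [Fin.sum_univ_eq_sum_range (fun i => (i : ℝ)) n]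
    induction n with
    | zero => simp
    | succ n ih =>
      rw [Finset.sum_range_succ, mul_add, ih]
      push_cast
      ring
  rw [Fintype.sum_prod_type]
  simp only [Finset.sum_add_distrib, Finset.sum_const, Finset.card_univ, Fintype.card_fin,
    nsmul_eq_mul, ← Finset.mul_sum]
  linear_combination (e : ℝ) * hsum M + (M : ℝ) * hsum e

theorem sum_fin_prod_add_le_mul_choose_two {M e : ℕ} (he : 1 ≤ e) {ε : ℝ} (hε : 0 < ε)
    (hM : 1 + ε ≤ M * ε) :
    ∑ i : Fin M × Fin e, (((i.1 : ℕ) : ℝ) + ((i.2 : ℕ) : ℝ)) ≤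
      (1 / e + ε) * (M * e).choose 2 := by
  have he1 : (1 : ℝ) ≤ e := by exact_mod_cast he
  have hfactor : (M + e - 2 : ℝ) ≤ (1 / e + ε) * (M * e - 1) := by
    have hinv : (1 : ℝ) / e * e = 1 := by field_simp
    have hle : (1 : ℝ) / e ≤ 1 := by rw [div_le_one (by positivity)]; exact he1
    nlinarith
  rw [Nat.cast_choose_two, Nat.cast_mul]
  have hpos : (0 : ℝ) ≤ M * e := by positivity
  nlinarith [two_mul_sum_fin_prod_add M e, mul_le_mul_of_nonneg_left hfactor hpos]

theorem mul_pow_lt_pow_of_mul_rpow_lt {f N p θ : ℝ} {m n : ℕ} (hf : 1 ≤ f) (hN : 1 ≤ N)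
    (hn : n ≠ 0) (hm : (m : ℝ) ≤ θ * n) (hp : f * N ^ θ < p) : f * N ^ m < p ^ n := by
  calc f * N ^ m ≤ f ^ n * (N ^ θ) ^ n := by
        rw [← Real.rpow_mul_natCast (by positivity), ← Real.rpow_natCast N m]
        have := le_self_pow₀ hf hn
        gcongr
    _ = (f * N ^ θ) ^ n := (mul_pow _ _ _).symm
    _ < p ^ n := by gcongr

theorem rpow_lt_pow_of_rpow_le {N A θ Q : ℝ} {k : ℕ} (hN : 1 < N) (hA : A < θ * k)
    (hQ : N ^ θ ≤ Q) : N ^ A < Q ^ k := by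
  calc N ^ A < N ^ (θ * k) := Real.rpow_lt_rpow_of_exponent_lt hN hA
    _ = (N ^ θ) ^ k := Real.rpow_mul_natCast (by positivity) _ _
    _ ≤ Q ^ k := by gcongr

theorem exists_nat_one_add_le_mul {ε : ℝ} (hε : 0 < ε) : ∃ M : ℕ, 2 ≤ M ∧ 1 + ε ≤ M * ε := by
  obtain ⟨M, hM⟩ : ∃ M : ℕ, 1 / ε + 1 ≤ M := exists_nat_ge _
  have hlt : (1 : ℝ) < M := by linarith [one_div_pos.2 hε]
  refine ⟨M, by exact_mod_cast hlt, ?_⟩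
  calc 1 + ε = (1 / ε + 1) * ε := by field_simp
    _ ≤ M * ε := by gcongr

end Exponents

theorem exists_card_common_zeros_le_mul_rpow {d e : ℕ} (he : 1 ≤ e) (A : ℝ) {ε : ℝ} (hε : 0 < ε) :
    ∃ K : ℝ, 0 < K ∧ ∀ N : ℕ, 2 ≤ N → ∀ F G : ℤ[X][X], F.natDegree ≤ d → Irreducible G →
      e ≤ G.natDegree → G.natDegree ≤ d → (∀ i, (G.coeff i).natDegree ≤ d) →
      ∀ S : Finset (ℤ × ℤ), (∀ q ∈ S, |q.1| ≤ N ∧ |q.2| ≤ N) →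
      (∀ q ∈ S, F.evalEval q.1 q.2 = 0 ∧ G.evalEval q.1 q.2 = 0) →
      (∀ q ∈ S, F.derivative.evalEval q.1 q.2 ≠ 0 ∧
        |((F.derivative.evalEval q.1 q.2 : ℤ) : ℝ)| ≤ (N : ℝ) ^ A) →
      (S.card : ℝ) ≤ K * (N : ℝ) ^ (1 / (e : ℝ) + ε) := by
  obtain ⟨M, hM2, hMε⟩ := exists_nat_one_add_le_mul hε
  obtain ⟨k, hk⟩ : ∃ k : ℕ, e * A < k := exists_nat_gt _
  set f := (M * e).factorial
  have hf : (1 : ℝ) ≤ f := by exact_mod_cast Nat.factorial_pos _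
  set D := d * (2 * d * max d M)
  refine ⟨k * (D * (d * (2 ^ k * (2 * f)))) + 1, by positivity, ?_⟩
  intro N hN F G hF hG heG hGd hGc S hbox hzero hderiv
  have hN1 : (1 : ℝ) ≤ N := by exact_mod_cast (by omega : 1 ≤ N)
  set θ : ℝ := 1 / e + ε with hθ
  have hR : 1 ≤ (N : ℝ) ^ θ := Real.one_le_rpow hN1 (by positivity)
  set Q := ⌈f * (N : ℝ) ^ θ⌉₊
  have hQlower : f * (N : ℝ) ^ θ ≤ Q := Nat.le_ceil _
  have hQupper : (Q : ℝ) ≤ 2 * f * (N : ℝ) ^ θ := by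
    nlinarith [Nat.ceil_lt_add_one (show 0 ≤ f * (N : ℝ) ^ θ by positivity)]
  obtain ⟨s, hcard, hs⟩ := exists_finset_primes k (Q := Q) (Nat.ceil_pos.2 (by positivity)).ne'
  have hbig (p : ℕ) (hp : p ∈ s) : f * (N : ℤ) ^ (∑ i : Fin M × Fin e, ((i.1 : ℕ) + (i.2 : ℕ))) <
      (p : ℤ) ^ (M * e).choose 2 := by
    have hQp : (Q : ℝ) < p := by exact_mod_cast (hs p hp).2.1
    exact_mod_cast mul_pow_lt_pow_of_mul_rpow_lt hf hN1
      (Nat.choose_pos (by nlinarith)).ne'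
      (by push_cast; exact sum_fin_prod_add_le_mul_choose_two he hε hMε) (hQlower.trans_lt hQp)
  have hsmall : (N : ℝ) ^ A < (Q : ℝ) ^ k := by
    refine rpow_lt_pow_of_rpow_le (by exact_mod_cast hN) ?_
      ((le_mul_of_one_le_left (by positivity) hf).trans hQlower)
    calc A < k / e := by rwa [lt_div_iff₀' (by positivity)]
      _ ≤ k / e + ε * k := le_add_of_nonneg_right (by positivity)
      _ = θ * k := by rw [hθ]; ring
  have hcount := card_zeros_le_card_primes_mul (N := N) hF hG heG hGd
    (fun i => (hGc i).trans (le_max_left d M)) (le_max_right d M) hs hbig hbox hzero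
    fun q hq => ⟨(hderiv q hq).1, by
      rw [hcard]
      exact_mod_cast (hderiv q hq).2.trans_lt hsmall⟩
  rw [hcard] at hcount
  calc (S.card : ℝ) ≤ k * (D * (d * (2 ^ k * Q))) := by exact_mod_cast hcount
    _ ≤ k * (D * (d * (2 ^ k * (2 * f * (N : ℝ) ^ θ)))) := by gcongr
    _ ≤ (k * (D * (d * (2 ^ k * (2 * f)))) + 1) * (N : ℝ) ^ θ := by nlinarith

/-! ### Polynomials regular in the second variable -/

section Regular

variable {R : Type*} [CommRing R]

/-- The homomorphism `G(x, y) ↦ G(t, y t)`, where `t` is the outer variable of the target. The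
coefficient of `t ^ n` is the homogeneous part of degree `n` of `G`, dehomogenised at `x = 1`; in
particular the degree in `t` is the total degree of `G`. -/
noncomputable def homogeneousParts : R[X][X] →+* R[X][X] :=
  eval₂RingHom (mapRingHom C) (C X * X)

theorem homogeneousParts_monomial (j : ℕ) (p : R[X]) :
    homogeneousParts (monomial j p) = p.map C * C (X ^ j) * X ^ j := by
  simp [homogeneousParts, mul_pow, mul_assoc]

theorem coeff_coeff_homogeneousParts (G : R[X][X]) (n k : ℕ) :
    ((homogeneousParts G).coeff n).coeff k = if k ≤ n then (G.coeff k).coeff (n - k) else 0 := by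
  induction G using Polynomial.induction_on' with
  | add p q hp hq =>
    rw [map_add, coeff_add, coeff_add, hp, hq, coeff_add, coeff_add]
    split_ifs <;> simp
  | monomial j p =>
    rw [homogeneousParts_monomial, coeff_mul_X_pow', coeff_monomial]
    obtain rfl | hjk := eq_or_ne j k
    · rw [if_pos rfl]
      split_ifs <;> simp [-map_pow]
    · split_ifs <;> simp [-map_pow, coeff_X_pow, hjk.symm]

theorem coeff_coeff_homogeneousParts_add (G : R[X][X]) (i k : ℕ) :
    ((homogeneousParts G).coeff (i + k)).coeff k = (G.coeff k).coeff i := by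
  rw [coeff_coeff_homogeneousParts, if_pos (Nat.le_add_left k i), Nat.add_sub_cancel]

theorem homogeneousParts_injective : Function.Injective (homogeneousParts (R := R)) := by
  intro G H h
  ext k i
  rw [← coeff_coeff_homogeneousParts_add, h, coeff_coeff_homogeneousParts_add]

theorem add_le_natDegree_homogeneousParts {G : R[X][X]} {i k : ℕ} (h : (G.coeff k).coeff i ≠ 0) :
    i + k ≤ (homogeneousParts G).natDegree := by
  refine le_natDegree_of_ne_zero fun h0 => h ?_
  rw [← coeff_coeff_homogeneousParts_add, h0, coeff_zero]

theorem natDegree_le_natDegree_homogeneousParts (G : R[X][X]) :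
    G.natDegree ≤ (homogeneousParts G).natDegree := by
  obtain rfl | hG := eq_or_ne G 0
  · simp
  · have hlc : (G.coeff G.natDegree).coeff (G.coeff G.natDegree).natDegree ≠ 0 :=
      leadingCoeff_ne_zero.2 (leadingCoeff_ne_zero.2 hG)
    exact (Nat.le_add_left _ _).trans (add_le_natDegree_homogeneousParts hlc)

/-- A nonzero polynomial is regular in `y` if its degree in `y` equals its total degree, that is,
if its leading form contains a pure power of `y`. -/
structure IsRegularInY (G : R[X][X]) : Prop where
  ne_zero : G ≠ 0
  natDegree_homogeneousParts : (homogeneousParts G).natDegree = G.natDegree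

/-- The form of degree `G.natDegree` of `G`, dehomogenised at `x = 1`. For `G` regular in `y` it is
the leading form of `G`. -/
noncomputable def topForm (G : R[X][X]) : R[X] := (homogeneousParts G).coeff G.natDegree

theorem Conic.topForm_toPoly {Q : Conic R} (hc : Q.c ≠ 0) :
    topForm Q.toPoly = C Q.c * X ^ 2 + C Q.b * X + C Q.a := by
  have hdeg : Q.toPoly.natDegree = 2 := by
    rw [Q.toPoly_eq]
    exact natDegree_quadratic (C_ne_zero.2 hc)
  ext k
  rw [topForm, hdeg, coeff_coeff_homogeneousParts, Q.toPoly_eq]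
  obtain rfl | rfl | rfl | hk : k = 0 ∨ k = 1 ∨ k = 2 ∨ 2 < k := by omega
  · simp [-map_pow]
  · simp [-map_pow, coeff_C]
  · simp [-map_pow, coeff_C]
  · simp [coeff_X_of_ne_one (by omega : k ≠ 1), coeff_C_of_ne_zero (by omega : k ≠ 0), coeff_X_pow,
      hk.not_ge, hk.ne']

namespace IsRegularInY

variable {G H : R[X][X]}

theorem of_dvd [IsDomain R] (hH : IsRegularInY H) (hdvd : G ∣ H) : IsRegularInY G := by
  obtain ⟨G', rfl⟩ := hdvd
  have hG := left_ne_zero_of_mul hH.ne_zero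
  have hG' := right_ne_zero_of_mul hH.ne_zero
  have hdeg := hH.natDegree_homogeneousParts
  rw [map_mul, natDegree_mul hG hG', natDegree_mul
    ((map_ne_zero_iff _ homogeneousParts_injective).2 hG)
    ((map_ne_zero_iff _ homogeneousParts_injective).2 hG')] at hdeg
  have := natDegree_le_natDegree_homogeneousParts G
  have := natDegree_le_natDegree_homogeneousParts G'
  exact ⟨hG, by omega⟩

theorem topForm_dvd_topForm [IsDomain R] (hH : IsRegularInY H) (hdvd : G ∣ H) :
    topForm G ∣ topForm H := by
  rw [topForm, topForm, ← hH.natDegree_homogeneousParts,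
    ← (hH.of_dvd hdvd).natDegree_homogeneousParts]
  obtain ⟨G', rfl⟩ := hdvd
  simp only [coeff_natDegree, map_mul, leadingCoeff_mul, dvd_mul_right]

theorem natDegree_coeff_add_le (hG : IsRegularInY G) {k : ℕ} (hk : G.coeff k ≠ 0) :
    (G.coeff k).natDegree + k ≤ G.natDegree :=
  (add_le_natDegree_homogeneousParts (leadingCoeff_ne_zero.2 hk)).trans_eq
    hG.natDegree_homogeneousParts

theorem natDegree_coeff_le (hG : IsRegularInY G) (k : ℕ) :
    (G.coeff k).natDegree ≤ G.natDegree - k := by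
  obtain h0 | hk := eq_or_ne (G.coeff k) 0
  · simp [h0]
  · exact Nat.le_sub_of_add_le (hG.natDegree_coeff_add_le hk)

theorem exists_coeff_natDegree_eq_C (hG : IsRegularInY G) :
    ∃ c : R, c ≠ 0 ∧ G.coeff G.natDegree = C c := by
  have hlc : G.coeff G.natDegree ≠ 0 := leadingCoeff_ne_zero.2 hG.ne_zero
  have hdeg := hG.natDegree_coeff_le G.natDegree
  rw [Nat.sub_self, Nat.le_zero] at hdeg
  obtain ⟨c, hc⟩ := natDegree_eq_zero.1 hdeg
  exact ⟨c, fun h0 => hlc (by rw [← hc, h0, C_0]), hc.symm⟩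

theorem evalEval_ne_zero_of_natDegree_eq_zero (hG : IsRegularInY G) (h0 : G.natDegree = 0)
    (x y : R) : G.evalEval x y ≠ 0 := by
  obtain ⟨c, hc, hlc⟩ := hG.exists_coeff_natDegree_eq_C
  rw [eq_C_of_natDegree_eq_zero h0, ← h0, hlc]
  simpa [evalEval] using hc

theorem exists_eq_linear (hG : IsRegularInY G) (h1 : G.natDegree = 1) :
    ∃ a c f : R, c ≠ 0 ∧ G = C (C c) * X + C (C a * X + C f) := by
  obtain ⟨c, hc, hlc⟩ := hG.exists_coeff_natDegree_eq_C
  have hdeg := hG.natDegree_coeff_le 0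
  rw [h1] at hlc hdeg
  obtain ⟨a, f, hconst⟩ := exists_eq_X_add_C_of_natDegree_le_one hdeg
  refine ⟨a, c, f, hc, ?_⟩
  rw [eq_X_add_C_of_natDegree_le_one h1.le, hlc, hconst]

theorem exists_eq_toPoly (hG : IsRegularInY G) (h2 : G.natDegree = 2) :
    ∃ Q : Conic R, Q.c ≠ 0 ∧ G = Q.toPoly := by
  obtain ⟨c, hc, hlc⟩ := hG.exists_coeff_natDegree_eq_C
  have hdeg₀ := hG.natDegree_coeff_le 0
  have hdeg₁ := hG.natDegree_coeff_le 1
  rw [h2] at hlc hdeg₀ hdeg₁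
  obtain ⟨b, e, hlin⟩ := exists_eq_X_add_C_of_natDegree_le_one hdeg₁
  have hconst := eq_quadratic_of_degree_le_two (natDegree_le_iff_degree_le.1 hdeg₀)
  refine ⟨⟨(G.coeff 0).coeff 2, b, c, (G.coeff 0).coeff 1, e, (G.coeff 0).coeff 0⟩, hc, ?_⟩
  rw [Conic.toPoly_eq, ← hconst, ← hlin, ← hlc]
  exact eq_quadratic_of_degree_le_two (natDegree_le_iff_degree_le.1 h2.le)

end IsRegularInY

end Regular

/-! ### The curve `a P(x) = b P(y)` and its factors -/

section CurvePoly

variable {R : Type*} [CommRing R]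

/-- The polynomial `a P(x) - b P(y)` in `y` over `R[x]`, defining the curve `a P(x) = b P(y)`. -/
noncomputable def curvePoly (P : R[X]) (a b : R) : R[X][X] := C (C a * P) - C (C b) * P.map C

theorem evalEval_curvePoly (P : R[X]) (a b x y : R) :
    (curvePoly P a b).evalEval x y = a * P.eval x - b * P.eval y := by
  simp [curvePoly, evalEval, eval_map, ← coe_evalRingHom]

theorem evalEval_derivative_curvePoly (P : R[X]) (a b x y : R) :
    (curvePoly P a b).derivative.evalEval x y = -(b * P.derivative.eval y) := by
  simp [curvePoly, evalEval, eval_map, derivative_map, ← coe_evalRingHom]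

theorem map_evalRingHom_curvePoly (P : R[X]) (a b x : R) :
    (curvePoly P a b).map (evalRingHom x) = C (a * P.eval x) - C b * P := by
  have hconst : (evalRingHom x).comp C = RingHom.id R := by ext; simp
  rw [curvePoly, Polynomial.map_sub, Polynomial.map_mul, map_C, map_C, Polynomial.map_map, hconst,
    Polynomial.map_id]
  simp

theorem eval₂_mapRingHom_curvePoly {S : Type*} [CommRing S] (φ : R →+* S) (P : R[X]) (a b : R)
    (q : S[X]) :
    (curvePoly P a b).eval₂ (mapRingHom φ) q =
      C (φ a) * P.map φ - C (φ b) * (P.map φ).comp q := by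
  have hconst : (mapRingHom φ).comp C = C.comp φ := by ext; simp
  rw [curvePoly, eval₂_sub, eval₂_mul, eval₂_C, eval₂_C, eval₂_map, hconst, comp, eval₂_map]
  simp only [coe_mapRingHom, Polynomial.map_mul, map_C]

theorem coeff_coeff_curvePoly (P : R[X]) (a b : R) (k i : ℕ) :
    ((curvePoly P a b).coeff k).coeff i =
      (if k = 0 then a * P.coeff i else 0) - (if i = 0 then b * P.coeff k else 0) := by
  rw [curvePoly, coeff_sub, coeff_sub, coeff_C, coeff_C_mul, coeff_map, ← C_mul, coeff_C]
  split_ifs <;> simp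

theorem coeff_homogeneousParts_curvePoly (P : R[X]) (a b : R) (n : ℕ) :
    (homogeneousParts (curvePoly P a b)).coeff n = C (P.coeff n) * (C a - C b * X ^ n) := by
  ext k
  rw [coeff_coeff_homogeneousParts, coeff_coeff_curvePoly, coeff_C_mul, coeff_sub, coeff_C,
    coeff_C_mul_X_pow]
  obtain hk | hk := Nat.lt_or_ge n k
  · simp [hk.not_ge, hk.ne', (Nat.zero_le n).trans_lt hk |>.ne']
  · obtain rfl | hkn := eq_or_ne k n
    · obtain rfl | hk0 := eq_or_ne k 0
      · simp [sub_mul, mul_comm]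
      · simp [hk0, mul_comm]
    · obtain rfl | hk0 := eq_or_ne k 0
      · simp [hkn.symm, hkn, mul_comm]
      · simp [hk0, hkn, Nat.sub_ne_zero_of_lt (lt_of_le_of_ne hk hkn)]

variable [IsDomain R] {P : R[X]} {b : R}

theorem natDegree_curvePoly (hb : b ≠ 0) (a : R) : (curvePoly P a b).natDegree = P.natDegree := by
  rw [curvePoly, ← natDegree_neg, neg_sub, natDegree_sub_C, natDegree_C_mul (C_ne_zero.2 hb),
    natDegree_map_eq_of_injective C_injective]

theorem isRegularInY_curvePoly (hP : P.natDegree ≠ 0) (hb : b ≠ 0) (a : R) :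
    IsRegularInY (curvePoly P a b) := by
  refine ⟨fun h => hP ?_, le_antisymm ?_ (natDegree_le_natDegree_homogeneousParts _)⟩
  · rw [← natDegree_curvePoly hb a, h, natDegree_zero]
  · rw [natDegree_curvePoly hb, natDegree_le_iff_coeff_eq_zero]
    intro n hn
    rw [coeff_homogeneousParts_curvePoly, coeff_eq_zero_of_natDegree_lt hn, C_0, zero_mul]

theorem topForm_curvePoly (hb : b ≠ 0) (a : R) :
    topForm (curvePoly P a b) = C P.leadingCoeff * (C a - C b * X ^ P.natDegree) := by
  rw [topForm, natDegree_curvePoly hb, coeff_homogeneousParts_curvePoly, coeff_natDegree]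

end CurvePoly

section Linear

variable {K : Type*} [Field K] [LinearOrder K] [IsStrictOrderedRing K]

theorem eq_C_mul_X_pow_of_C_mul_eq_C_mul_comp {a b l : K} (ha : a ≠ 0) (hab : |a| ≠ |b|) {q : K[X]}
    (h : C a * q = C b * q.comp (C l * X)) : q = C q.leadingCoeff * X ^ q.natDegree := by
  obtain rfl | hq := eq_or_ne q 0
  · simp
  have hcoeff : ∀ i, q.coeff i ≠ 0 → a = b * l ^ i := by
    intro i hi
    have hi' := congrArg (coeff · i) h
    simp only [coeff_C_mul, comp_C_mul_X_coeff] at hi'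
    exact mul_right_cancel₀ hi (by linear_combination hi')
  have htop : a = b * l ^ q.natDegree := hcoeff _ (leadingCoeff_ne_zero.2 hq)
  have hb : b ≠ 0 := fun hb => ha (by rw [htop, hb, zero_mul])
  have hl : |l| ≠ 1 := fun hl => hab (by rw [htop, abs_mul, abs_pow, hl, one_pow, mul_one])
  ext i
  rw [coeff_C_mul_X_pow]
  split_ifs with hi
  · rw [hi, coeff_natDegree]
  by_contra hne
  have hlt : i < q.natDegree := lt_of_le_of_ne (le_natDegree_of_ne_zero hne) hi
  have hl0 : l ≠ 0 := fun hl0 => ha (by rw [htop, hl0, zero_pow (by omega), mul_zero])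
  have hpow : l ^ i = l ^ q.natDegree := mul_left_cancel₀ hb ((hcoeff i hne).symm.trans htop)
  exact hi (pow_right_injective₀ (abs_pos.2 hl0) hl (by simp only [← abs_pow, hpow]))

-- Translating the fixed point of `x ↦ l x + m` to the origin turns the substitution into a scaling.
theorem exists_eq_C_mul_X_sub_C_pow_of_C_mul_eq_C_mul_comp {a b l m : K} (ha : a ≠ 0)
    (hab : |a| ≠ |b|) {p : K[X]} (h : C a * p = C b * p.comp (C l * X + C m)) :
    ∃ c r : K, p = C c * (X - C r) ^ p.natDegree := by
  obtain rfl | hp := eq_or_ne p 0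
  · exact ⟨0, 0, by simp⟩
  have hl : 1 - l ≠ 0 := by
    intro hl
    have hlc := congrArg leadingCoeff h
    rw [← sub_eq_zero.1 hl, C_1, one_mul, leadingCoeff_mul, leadingCoeff_mul, leadingCoeff_C,
      leadingCoeff_C, leadingCoeff_comp (by simp), leadingCoeff_X_add_C, one_pow, mul_one] at hlc
    exact hab (congrArg _ (mul_right_cancel₀ (leadingCoeff_ne_zero.2 hp) hlc))
  obtain ⟨r, hr⟩ : ∃ r, l * r + m = r := ⟨m / (1 - l), by field_simp; ring⟩
  have hscale : C a * p.comp (X + C r) = C b * (p.comp (X + C r)).comp (C l * X) := by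
    have hcomp := congrArg (comp · (X + C r)) h
    simp only [mul_comp, C_comp, comp_assoc] at hcomp ⊢
    rw [hcomp]
    congr 2
    simp only [add_comp, mul_comp, C_comp, X_comp]
    rw [mul_add, add_assoc, ← C_mul, ← C_add, hr]
  have hmonomial := congrArg (comp · (X - C r))
    (eq_C_mul_X_pow_of_C_mul_eq_C_mul_comp ha hab hscale)
  refine ⟨(p.comp (X + C r)).leadingCoeff, r, ?_⟩
  simpa [comp_assoc, natDegree_comp] using hmonomial

end Linear

theorem exists_map_eq_C_mul_X_sub_C_pow_of_linear_dvd_curvePoly {P : ℤ[X]} {a b : ℤ} (ha : a ≠ 0)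
    (hab : |a| ≠ |b|) {G : ℤ[X][X]} (hG : IsRegularInY G) (h1 : G.natDegree = 1)
    (hdvd : G ∣ curvePoly P a b) :
    ∃ c r : ℚ, P.map (Int.castRingHom ℚ) = C c * (X - C r) ^ P.natDegree := by
  obtain ⟨α, γ, ζ, hγ, rfl⟩ := hG.exists_eq_linear h1
  have hγ' : (γ : ℚ) ≠ 0 := Int.cast_ne_zero.2 hγ
  set q : ℚ[X] := C (-α / γ : ℚ) * X + C (-ζ / γ : ℚ) with hq
  have hzero : (C (C γ) * X + C (C α * X + C ζ) : ℤ[X][X]).eval₂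
      (mapRingHom (Int.castRingHom ℚ)) q = 0 := by
    simp only [eval₂_add, eval₂_mul, eval₂_C, eval₂_X, coe_mapRingHom, Polynomial.map_add,
      Polynomial.map_mul, map_C, map_X, Int.coe_castRingHom, hq, mul_add, ← mul_assoc, ← C_mul,
      mul_div_cancel₀ _ hγ', C_neg]
    ring
  have hcurve := zero_dvd_iff.1 (hzero ▸ eval₂_dvd (mapRingHom (Int.castRingHom ℚ)) q hdvd)
  rw [eval₂_mapRingHom_curvePoly, sub_eq_zero] at hcurve
  have hab' : |(a : ℚ)| ≠ |(b : ℚ)| := by exact_mod_cast hab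
  have hpow :=
    exists_eq_C_mul_X_sub_C_pow_of_C_mul_eq_C_mul_comp (Int.cast_ne_zero.2 ha) hab' hcurve
  rwa [natDegree_map_eq_of_injective (RingHom.injective_int _)] at hpow

theorem squarefree_C_sub_C_mul_X_pow {K : Type*} [Field K] {a b : K} (ha : a ≠ 0) (hb : b ≠ 0)
    {n : ℕ} (hn : (n : K) ≠ 0) : Squarefree (C a - C b * X ^ n) := by
  have hsep := separable_X_pow_sub_C (a / b) hn (div_ne_zero ha hb)
  have hassoc : C a - C b * X ^ n = C (-b) * (X ^ n - C (a / b)) := by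
    rw [mul_sub, ← C_mul, neg_mul, mul_div_cancel₀ _ hb, C_neg, C_neg]
    ring
  rw [hassoc]
  exact (hsep.unit_mul (isUnit_C.2 (neg_ne_zero.2 hb).isUnit)).squarefree

-- If the discriminant vanishes, the leading form of the conic is a square up to a constant, but it
-- divides the leading form of the curve, which is squarefree.
theorem Conic.disc_ne_zero_of_toPoly_dvd_curvePoly {P : ℤ[X]} (hP : P.natDegree ≠ 0) {a b : ℤ}
    (ha : a ≠ 0) (hb : b ≠ 0) {Q : Conic ℤ} (hc : Q.c ≠ 0) (hdvd : Q.toPoly ∣ curvePoly P a b) :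
    Q.disc ≠ 0 := by
  intro hdisc
  have htop := (isRegularInY_curvePoly hP hb a).topForm_dvd_topForm hdvd
  rw [Conic.topForm_toPoly hc, topForm_curvePoly hb] at htop
  set L : ℤ[X] := C (2 * Q.c) * X + C Q.b with hL
  have hsquare : L * L = C (4 * Q.c) * (C Q.c * X ^ 2 + C Q.b * X + C Q.a) := by
    have hdisc' : (C Q.b ^ 2 - 4 * C Q.a * C Q.c : ℤ[X]) = 0 := by
      simpa [Conic.disc, map_ofNat C 4] using congrArg (C : ℤ → ℤ[X]) hdisc
    rw [hL]
    simp only [C_mul, map_ofNat C 4, map_ofNat C 2]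
    linear_combination hdisc'
  have hdvd_sq : L * L ∣ C (4 * Q.c * P.leadingCoeff) * (C a - C b * X ^ P.natDegree) := by
    rw [hsquare, C_mul (a := 4 * Q.c), mul_assoc]
    exact mul_dvd_mul_left _ htop
  have hconst : IsUnit (C ((4 * Q.c * P.leadingCoeff : ℤ) : ℚ)) := by
    have hlc : P.leadingCoeff ≠ 0 := leadingCoeff_ne_zero.2 (ne_zero_of_natDegree_gt hP.bot_lt)
    exact isUnit_C.2 (Int.cast_ne_zero.2 (by positivity)).isUnit
  have hunit : IsUnit (L.map (Int.castRingHom ℚ)) := by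
    refine squarefree_C_sub_C_mul_X_pow (Int.cast_ne_zero.2 ha) (Int.cast_ne_zero.2 hb)
      (Nat.cast_ne_zero.2 hP) _ ((hconst.dvd_mul_left).1 ?_)
    simpa only [Polynomial.map_mul, Polynomial.map_sub, Polynomial.map_pow, map_C, map_X,
      Int.coe_castRingHom] using Polynomial.map_dvd (Int.castRingHom ℚ) hdvd_sq
  have hdeg := natDegree_eq_zero_of_isUnit hunit
  rw [natDegree_map_eq_of_injective (RingHom.injective_int _),
    natDegree_linear (mul_ne_zero two_ne_zero hc)] at hdeg
  exact one_ne_zero hdeg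

/-! ### Heights of factors -/

theorem abs_eval_le {p : ℤ[X]} {d : ℕ} (hd : p.natDegree ≤ d) {B T : ℝ}
    (hB : ∀ i, |(p.coeff i : ℝ)| ≤ B) (hT : 1 ≤ T) {x : ℤ} (hx : |(x : ℝ)| ≤ T) :
    |((p.eval x : ℤ) : ℝ)| ≤ (d + 1) * (B * T ^ d) := by
  have hB0 : 0 ≤ B := (abs_nonneg _).trans (hB 0)
  rw [eval_eq_sum_range' (Nat.lt_succ_of_le hd), Int.cast_sum]
  calc |∑ i ∈ Finset.range (d + 1), ((p.coeff i * x ^ i : ℤ) : ℝ)|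
      ≤ ∑ i ∈ Finset.range (d + 1), |((p.coeff i * x ^ i : ℤ) : ℝ)| :=
        Finset.abs_sum_le_sum_abs _ _
    _ ≤ ∑ _i ∈ Finset.range (d + 1), B * T ^ d := by
        refine Finset.sum_le_sum fun i hi => ?_
        rw [Int.cast_mul, Int.cast_pow, abs_mul, abs_pow]
        exact mul_le_mul (hB i) ((pow_le_pow_left₀ (abs_nonneg _) hx i).trans
          (pow_le_pow_right₀ hT (Nat.lt_succ_iff.1 (Finset.mem_range.1 hi)))) (by positivity) hB0
    _ = (d + 1) * (B * T ^ d) := by simp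

theorem mahlerMeasure_map_le {f : ℤ[X]} {A : ℝ} (hA : ∀ i, |(f.coeff i : ℝ)| ≤ A) :
    (f.map (Int.castRingHom ℂ)).mahlerMeasure ≤ (f.natDegree + 1) * A := by
  refine (mahlerMeasure_le_sum_norm_coeff _).trans ?_
  rw [sum_over_range' _ (fun _ => norm_zero) (f.natDegree + 1)
    (Nat.lt_succ_of_le natDegree_map_le)]
  calc ∑ i ∈ Finset.range (f.natDegree + 1), ‖(f.map (Int.castRingHom ℂ)).coeff i‖
      ≤ ∑ _i ∈ Finset.range (f.natDegree + 1), A :=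
        Finset.sum_le_sum fun i _ => by simpa using hA i
    _ = (f.natDegree + 1) * A := by simp

theorem abs_coeff_le_of_dvd {f g : ℤ[X]} (hf : f ≠ 0) (hdvd : g ∣ f) {A : ℝ}
    (hA : ∀ i, |(f.coeff i : ℝ)| ≤ A) (n : ℕ) :
    |(g.coeff n : ℝ)| ≤ g.natDegree.choose n * ((f.natDegree + 1) * A) := by
  obtain ⟨h, rfl⟩ := hdvd
  have hbound := norm_coeff_le_choose_mul_mahlerMeasure_of_one_le_mahlerMeasure n
    (g.map (Int.castRingHom ℂ)) (h.map (Int.castRingHom ℂ))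
    (one_le_mahlerMeasure_of_ne_zero (right_ne_zero_of_mul hf))
  rw [← Polynomial.map_mul, natDegree_map_eq_of_injective (RingHom.injective_int _), coeff_map,
    eq_intCast, Complex.norm_intCast] at hbound
  exact hbound.trans (by gcongr; exact mahlerMeasure_map_le hA)

theorem Conic.heightLE_two_mul_of_abs_coeff_map_evalRingHom_le {Q : Conic ℤ} {A : ℝ}
    (h₀ : ∀ n, |(((Q.toPoly.map (evalRingHom 0)).coeff n : ℤ) : ℝ)| ≤ A)
    (h₁ : ∀ n, |(((Q.toPoly.map (evalRingHom 1)).coeff n : ℤ) : ℝ)| ≤ A)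
    (h₂ : ∀ n, |(((Q.toPoly.map (evalRingHom (-1))).coeff n : ℤ) : ℝ)| ≤ A) :
    Q.HeightLE (2 * A) := by
  have coeff_zero : ∀ x, (Q.toPoly.map (evalRingHom x)).coeff 0 = Q.a * x ^ 2 + Q.d * x + Q.f :=
    fun x => by
      rw [Q.map_evalRingHom_toPoly, coeff_add, coeff_add, coeff_C_mul_X_pow, coeff_C_mul_X, coeff_C]
      simp
  have coeff_one : ∀ x, (Q.toPoly.map (evalRingHom x)).coeff 1 = Q.b * x + Q.e := fun x => by
    rw [Q.map_evalRingHom_toPoly, coeff_add, coeff_add, coeff_C_mul_X_pow, coeff_C_mul_X, coeff_C]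
    simp
  have coeff_two : ∀ x, (Q.toPoly.map (evalRingHom x)).coeff 2 = Q.c := fun x => by
    rw [Q.map_evalRingHom_toPoly, coeff_add, coeff_add, coeff_C_mul_X_pow, coeff_C_mul_X, coeff_C]
    simp
  have hc := coeff_two 0 ▸ h₀ 2
  have he := coeff_one 0 ▸ h₀ 1
  have hf := coeff_zero 0 ▸ h₀ 0
  have hbe := coeff_one 1 ▸ h₁ 1
  have hadf := coeff_zero 1 ▸ h₁ 0
  have hadf' := coeff_zero (-1) ▸ h₂ 0
  push_cast [abs_le] at hc he hf hbe hadf hadf'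
  simp only [Conic.HeightLE, abs_le]
  refine ⟨⟨?_, ?_⟩, ⟨?_, ?_⟩, ⟨?_, ?_⟩, ⟨?_, ?_⟩, ⟨?_, ?_⟩, ?_, ?_⟩ <;> linarith

section ConicHeight

variable {P : ℤ[X]} {a b : ℤ} {B : ℝ} {Q : Conic ℤ}

theorem abs_coeff_map_evalRingHom_curvePoly_le (hP : ∀ i, |(P.coeff i : ℝ)| ≤ B)
    (ha : |(a : ℝ)| ≤ B) (hb : |(b : ℝ)| ≤ B) {x : ℤ} (hx : |(x : ℝ)| ≤ 1) (i : ℕ) :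
    |((((curvePoly P a b).map (evalRingHom x)).coeff i : ℤ) : ℝ)| ≤
      (P.natDegree + 2) * B ^ 2 := by
  have hB : 0 ≤ B := (abs_nonneg _).trans ha
  have heval : |((P.eval x : ℤ) : ℝ)| ≤ (P.natDegree + 1) * B := by
    simpa using abs_eval_le le_rfl hP le_rfl hx
  have hconst : |(((C (a * P.eval x)).coeff i : ℤ) : ℝ)| ≤ B * ((P.natDegree + 1) * B) := by
    rw [coeff_C]
    split_ifs
    · rw [Int.cast_mul, abs_mul]
      gcongr
    · rw [Int.cast_zero, abs_zero]
      positivity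
  have hcoeff : |((b * P.coeff i : ℤ) : ℝ)| ≤ B * B := by
    rw [Int.cast_mul, abs_mul]
    gcongr
    exact hP i
  rw [map_evalRingHom_curvePoly, coeff_sub, coeff_C_mul, Int.cast_sub]
  calc _ ≤ B * ((P.natDegree + 1) * B) + B * B := (abs_sub _ _).trans (add_le_add hconst hcoeff)
    _ = (P.natDegree + 2) * B ^ 2 := by ring

theorem Conic.abs_coeff_map_evalRingHom_toPoly_le (hP0 : P.natDegree ≠ 0)
    (hP : ∀ i, |(P.coeff i : ℝ)| ≤ B) (hb0 : b ≠ 0) (ha : |(a : ℝ)| ≤ B) (hb : |(b : ℝ)| ≤ B)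
    (hdvd : Q.toPoly ∣ curvePoly P a b) {x : ℤ} (hx : |(x : ℝ)| ≤ 1) (n : ℕ) :
    |(((Q.toPoly.map (evalRingHom x)).coeff n : ℤ) : ℝ)| ≤
      2 * ((P.natDegree + 1) * ((P.natDegree + 2) * B ^ 2)) := by
  have hdeg : ((curvePoly P a b).map (evalRingHom x)).natDegree = P.natDegree := by
    rw [map_evalRingHom_curvePoly, ← natDegree_neg, neg_sub, natDegree_sub_C, natDegree_C_mul hb0]
  have hne : (curvePoly P a b).map (evalRingHom x) ≠ 0 :=
    ne_zero_of_natDegree_gt (hdeg ▸ hP0.bot_lt)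
  have hchoose : (Q.toPoly.map (evalRingHom x)).natDegree.choose n ≤ 2 := by
    have hdeg₂ : (Q.toPoly.map (evalRingHom x)).natDegree ≤ 2 := by
      rw [Q.map_evalRingHom_toPoly]
      exact natDegree_quadratic_le
    exact (Nat.choose_le_choose n hdeg₂).trans (Nat.choose_le_centralBinom n 1)
  refine (abs_coeff_le_of_dvd hne (map_dvd (mapRingHom (evalRingHom x)) hdvd)
    (abs_coeff_map_evalRingHom_curvePoly_le hP ha hb hx) n).trans ?_
  rw [hdeg]
  gcongr
  exact_mod_cast hchoose

theorem Conic.heightLE_of_toPoly_dvd_curvePoly (hP0 : P.natDegree ≠ 0)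
    (hP : ∀ i, |(P.coeff i : ℝ)| ≤ B) (hb0 : b ≠ 0) (ha : |(a : ℝ)| ≤ B) (hb : |(b : ℝ)| ≤ B)
    (hdvd : Q.toPoly ∣ curvePoly P a b) :
    Q.HeightLE (4 * ((P.natDegree + 1) * ((P.natDegree + 2) * B ^ 2))) := by
  have hcoeff := fun {x : ℤ} (hx : |(x : ℝ)| ≤ 1) =>
    Conic.abs_coeff_map_evalRingHom_toPoly_le hP0 hP hb0 ha hb hdvd hx
  have hdouble := Conic.heightLE_two_mul_of_abs_coeff_map_evalRingHom_le
    (hcoeff (x := 0) (by simp)) (hcoeff (x := 1) (by simp)) (hcoeff (x := -1) (by simp))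
  rwa [← mul_assoc 2 2, show (2 : ℝ) * 2 = 4 by norm_num] at hdouble

end ConicHeight

/-! ### Counting points in a box -/

/-- The zeros of `G ∈ ℤ[x][y]` among the integral points of the box `[-N, N]²`. -/
noncomputable def boxZeros (G : ℤ[X][X]) (N : ℕ) : Finset (ℤ × ℤ) :=
  {q ∈ Finset.Icc (-N : ℤ) N ×ˢ Finset.Icc (-N : ℤ) N | G.evalEval q.1 q.2 = 0}

theorem mem_boxZeros {G : ℤ[X][X]} {N : ℕ} {q : ℤ × ℤ} :
    q ∈ boxZeros G N ↔ (|q.1| ≤ N ∧ |q.2| ≤ N) ∧ G.evalEval q.1 q.2 = 0 := by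
  simp only [boxZeros, Finset.mem_filter, Finset.mem_product, Finset.mem_Icc, abs_le]

theorem boxZeros_mul (G H : ℤ[X][X]) (N : ℕ) :
    boxZeros (G * H) N = boxZeros G N ∪ boxZeros H N := by
  simp only [boxZeros, evalEval_mul, mul_eq_zero, Finset.filter_or]

theorem IsRegularInY.boxZeros_eq_empty {G : ℤ[X][X]} (hG : IsRegularInY G)
    (h0 : G.natDegree = 0) (N : ℕ) : boxZeros G N = ∅ :=
  Finset.filter_false_of_mem fun q _ => hG.evalEval_ne_zero_of_natDegree_eq_zero h0 q.1 q.2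

theorem IsRegularInY.card_boxZeros_le {F : ℤ[X][X]} (hF : IsRegularInY F) {N : ℕ} {M : ℝ}
    (hM : ∀ G, Irreducible G → G ∣ F → G.natDegree ≠ 0 → ((boxZeros G N).card : ℝ) ≤ M) :
    ((boxZeros F N).card : ℝ) ≤ F.natDegree * M := by
  induction F using WfDvdMonoid.induction_on_irreducible with
  | zero => exact absurd rfl hF.ne_zero
  | unit u hu =>
    have h0 := natDegree_eq_zero_of_isUnit hu
    simp [hF.boxZeros_eq_empty h0 N, h0]
  | mul H G hH hG ih =>
    have hbound_G : ((boxZeros G N).card : ℝ) ≤ G.natDegree * M := by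
      rcases eq_or_ne G.natDegree 0 with h0 | h0
      · simp [(hF.of_dvd (dvd_mul_right G H)).boxZeros_eq_empty h0 N, h0]
      · have hle := hM G hG (dvd_mul_right G H) h0
        exact hle.trans (le_mul_of_one_le_left ((Nat.cast_nonneg _).trans hle)
          (by exact_mod_cast Nat.one_le_iff_ne_zero.2 h0))
    have hbound_H := ih (hF.of_dvd (dvd_mul_left H G))
      fun G' hG' hdvd => hM G' hG' (hdvd.mul_left G)
    have hunion : ((boxZeros (G * H) N).card : ℝ) ≤ (boxZeros G N).card + (boxZeros H N).card := by
      rw [boxZeros_mul]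
      exact_mod_cast Finset.card_union_le _ _
    rw [natDegree_mul hG.ne_zero hH, Nat.cast_add, add_mul]
    linarith

theorem abs_coeff_derivative_le {p : ℤ[X]} {B : ℝ} (hB : ∀ i, |(p.coeff i : ℝ)| ≤ B) (i : ℕ) :
    |(p.derivative.coeff i : ℝ)| ≤ p.natDegree * B := by
  have hB0 : 0 ≤ B := (abs_nonneg _).trans (hB 0)
  rcases lt_or_ge i p.natDegree with hi | hi
  · have hi' : (i : ℝ) + 1 ≤ p.natDegree := by exact_mod_cast hi
    rw [coeff_derivative]
    push_cast
    rw [abs_mul, mul_comm, abs_of_nonneg (by positivity : (0 : ℝ) ≤ i + 1)]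
    exact mul_le_mul hi' (hB _) (abs_nonneg _) (by positivity)
  · rw [coeff_derivative, coeff_eq_zero_of_natDegree_lt (Nat.lt_succ_of_le hi)]
    simpa using by positivity

section CurveZeros

variable {P : ℤ[X]} {a b : ℤ}

theorem abs_evalEval_derivative_curvePoly_le {B T : ℝ} (hP : ∀ i, |(P.coeff i : ℝ)| ≤ B)
    (hb : |(b : ℝ)| ≤ B) (hT : 1 ≤ T) (x : ℤ) {y : ℤ} (hy : |(y : ℝ)| ≤ T) :
    |(((curvePoly P a b).derivative.evalEval x y : ℤ) : ℝ)| ≤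
      ((P.natDegree + 1) * P.natDegree) * (B ^ 2 * T ^ P.natDegree) := by
  have heval := abs_eval_le ((natDegree_derivative_le P).trans (Nat.sub_le _ 1))
    (abs_coeff_derivative_le hP) hT hy
  rw [evalEval_derivative_curvePoly, Int.cast_neg, abs_neg, Int.cast_mul, abs_mul]
  calc |(b : ℝ)| * |((P.derivative.eval y : ℤ) : ℝ)|
      ≤ B * ((P.natDegree + 1) * (P.natDegree * B * T ^ P.natDegree)) :=
        mul_le_mul hb heval (abs_nonneg _) ((abs_nonneg _).trans hb)
    _ = _ := by ring

theorem abs_evalEval_derivative_curvePoly_le_rpow {N : ℕ} (hN : 2 ≤ N) {A : ℝ}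
    (hP : ∀ i, |(P.coeff i : ℝ)| ≤ (N : ℝ) ^ A) (hb : |(b : ℝ)| ≤ (N : ℝ) ^ A) (x : ℤ) {y : ℤ}
    (hy : |y| ≤ N) :
    |(((curvePoly P a b).derivative.evalEval x y : ℤ) : ℝ)| ≤
      (N : ℝ) ^ (((P.natDegree + 1) * P.natDegree : ℕ) + (A * 2 + P.natDegree)) := by
  have hN0 : (0 : ℝ) < N := by positivity
  have hconst : (((P.natDegree + 1) * P.natDegree : ℕ) : ℝ) ≤
      (N : ℝ) ^ ((P.natDegree + 1) * P.natDegree) := by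
    exact_mod_cast (Nat.lt_pow_self hN).le
  refine (abs_evalEval_derivative_curvePoly_le hP hb (by exact_mod_cast hN.trans' one_le_two) x
    (T := N) (by exact_mod_cast hy)).trans ?_
  rw [Real.rpow_add hN0, Real.rpow_add hN0, Real.rpow_natCast, Real.rpow_natCast,
    Real.rpow_mul hN0.le, Real.rpow_two]
  gcongr
  exact_mod_cast hconst

theorem card_zeros_of_isRoot_derivative_le (hP : P.natDegree ≠ 0) (ha : a ≠ 0)
    {S : Finset (ℤ × ℤ)}
    (hS : ∀ q ∈ S, a * P.eval q.1 = b * P.eval q.2 ∧ P.derivative.IsRoot q.2) :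
    S.card ≤ P.natDegree * P.natDegree := by
  classical
  have hfiber_natDegree : ∀ y, (C a * P - C (b * P.eval y)).natDegree = P.natDegree := fun y => by
    rw [natDegree_sub_C, natDegree_C_mul ha]
  have hcard := card_le_mul_card_image_fst_of_isRoot (S := S.image Prod.swap)
    (fun y => (hfiber_natDegree y).le) (Finset.forall_mem_image.2 fun q hq =>
      ⟨ne_zero_of_natDegree_gt (hfiber_natDegree q.2 ▸ hP.bot_lt), by
        simp [(hS q hq).1]⟩)
  rw [Finset.card_image_of_injective S Prod.swap_injective, Finset.image_image] at hcard
  have hroots : (S.image (Prod.fst ∘ Prod.swap)).card ≤ P.derivative.natDegree :=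
    card_le_natDegree_of_forall_isRoot (derivative_ne_zero.2 hP)
      (Finset.forall_mem_image.2 fun q hq => (hS q hq).2)
  exact hcard.trans (Nat.mul_le_mul_left _
    (hroots.trans ((natDegree_derivative_le P).trans (Nat.sub_le _ 1))))

end CurveZeros

theorem exists_card_boxZeros_le_of_three_le_natDegree {d : ℕ} (hd : d ≠ 0) (A : ℝ) {ε : ℝ}
    (hε : 0 < ε) :
    ∃ K : ℝ, 0 < K ∧ ∀ N : ℕ, 2 ≤ N → ∀ P : ℤ[X], P.natDegree = d →
      (∀ i, |(P.coeff i : ℝ)| ≤ (N : ℝ) ^ A) →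
      ∀ a b : ℤ, a ≠ 0 → b ≠ 0 → |(b : ℝ)| ≤ (N : ℝ) ^ A →
      ∀ G, Irreducible G → G ∣ curvePoly P a b → 3 ≤ G.natDegree →
        ((boxZeros G N).card : ℝ) ≤ K * (N : ℝ) ^ (1 / 3 + ε) := by
  classical
  obtain ⟨K, hK, hregular⟩ := exists_card_common_zeros_le_mul_rpow (d := d) (e := 3) (by norm_num)
    (((d + 1) * d : ℕ) + (A * 2 + d)) hε
  refine ⟨K + d * d, by positivity, ?_⟩
  rintro N hN P rfl hP a b ha hb hbN G hirr hdvd h3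
  have hG : IsRegularInY G := (isRegularInY_curvePoly hd hb a).of_dvd hdvd
  have hdeg : G.natDegree ≤ P.natDegree := natDegree_curvePoly hb a ▸
    natDegree_le_of_dvd hdvd (isRegularInY_curvePoly hd hb a).ne_zero
  have hcurve : ∀ q ∈ boxZeros G N, (curvePoly P a b).evalEval q.1 q.2 = 0 := fun q hq =>
    zero_dvd_iff.1 ((mem_boxZeros.1 hq).2 ▸ map_dvd (evalEvalRingHom q.1 q.2) hdvd)
  have hsmooth := hregular N hN (curvePoly P a b) G (natDegree_curvePoly hb a).le hirr h3 hdeg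
    (fun i => (hG.natDegree_coeff_le i).trans ((Nat.sub_le _ _).trans hdeg))
    {q ∈ boxZeros G N | ¬P.derivative.IsRoot q.2}
    (fun q hq => (mem_boxZeros.1 (Finset.mem_filter.1 hq).1).1)
    (fun q hq => ⟨hcurve q (Finset.mem_filter.1 hq).1,
      (mem_boxZeros.1 (Finset.mem_filter.1 hq).1).2⟩)
    (fun q hq => ⟨by
      rw [evalEval_derivative_curvePoly]
      exact neg_ne_zero.2 (mul_ne_zero hb (Finset.mem_filter.1 hq).2),
      abs_evalEval_derivative_curvePoly_le_rpow hN hP hbN q.1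
        (mem_boxZeros.1 (Finset.mem_filter.1 hq).1).1.2⟩)
  have hsingular : ({q ∈ boxZeros G N | P.derivative.IsRoot q.2}.card : ℝ) ≤
      P.natDegree * P.natDegree := by
    exact_mod_cast card_zeros_of_isRoot_derivative_le hd ha fun q hq =>
      ⟨sub_eq_zero.1 (evalEval_curvePoly P a b q.1 q.2 ▸ hcurve q (Finset.mem_filter.1 hq).1),
        (Finset.mem_filter.1 hq).2⟩
  have hone : 1 ≤ (N : ℝ) ^ (1 / 3 + ε) :=
    Real.one_le_rpow (by exact_mod_cast hN.trans' one_le_two) (by positivity)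
  rw [← Finset.card_filter_add_card_filter_not fun q => P.derivative.IsRoot q.2, Nat.cast_add,
    add_mul, add_comm]
  exact add_le_add hsmooth (hsingular.trans (le_mul_of_one_le_right (by positivity) hone))

theorem exists_card_boxZeros_le_of_natDegree_eq_two {d : ℕ} (hd : d ≠ 0) (A : ℝ) {ε : ℝ}
    (hε : 0 < ε) :
    ∃ K : ℝ, 0 < K ∧ ∀ N : ℕ, 1 ≤ N → ∀ P : ℤ[X], P.natDegree = d →
      (∀ i, |(P.coeff i : ℝ)| ≤ (N : ℝ) ^ A) →
      ∀ a b : ℤ, a ≠ 0 → b ≠ 0 → |(a : ℝ)| ≤ (N : ℝ) ^ A → |(b : ℝ)| ≤ (N : ℝ) ^ A →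
      ∀ G, Irreducible G → G ∣ curvePoly P a b → G.natDegree = 2 →
        ((boxZeros G N).card : ℝ) ≤ K * (N : ℝ) ^ ε := by
  set m : ℝ := 2 * |A| + 1
  set κ : ℝ := 4 * ((d + 1) * (d + 2))
  have hm : 0 < m := by positivity
  have hκ : 1 ≤ κ := by
    have : (0 : ℝ) ≤ d := d.cast_nonneg
    nlinarith
  obtain ⟨K, hK, hconic⟩ := Conic.exists_card_zeros_le_mul_rpow (div_pos hε hm)
  refine ⟨K * κ ^ (ε / m), by positivity, ?_⟩
  rintro N hN P rfl hP a b ha hb haN hbN G hirr hdvd h2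
  obtain ⟨Q, hc, rfl⟩ := ((isRegularInY_curvePoly hd hb a).of_dvd hdvd).exists_eq_toPoly h2
  have hN1 : (1 : ℝ) ≤ N := by exact_mod_cast hN
  have hN0 : (0 : ℝ) ≤ N := by positivity
  have hheight : Q.HeightLE (κ * (N : ℝ) ^ m) := by
    refine (Conic.heightLE_of_toPoly_dvd_curvePoly hd hP hb haN hbN hdvd).mono ?_
    have hsq : ((N : ℝ) ^ A) ^ 2 ≤ (N : ℝ) ^ m := by
      rw [← Real.rpow_mul_natCast hN0]
      refine Real.rpow_le_rpow_of_exponent_le hN1 ?_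
      have := le_abs_self A
      push_cast
      linarith
    calc _ = κ * ((N : ℝ) ^ A) ^ 2 := by ring
      _ ≤ κ * (N : ℝ) ^ m := by gcongr
  have hbox : (N : ℝ) ≤ κ * (N : ℝ) ^ m :=
    (Real.self_le_rpow_of_one_le hN1 (by simp [m])).trans (le_mul_of_one_le_left (by positivity) hκ)
  have hcard := hconic _ (hN1.trans hbox) Q hheight hc
    (Conic.disc_ne_zero_of_toPoly_dvd_curvePoly hd ha hb hc hdvd) hirr (boxZeros Q.toPoly N)
    fun q hq => by
      obtain ⟨⟨hx, hy⟩, hzero⟩ := mem_boxZeros.1 hq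
      exact ⟨Q.evalEval_toPoly q.1 q.2 ▸ hzero, hbox.trans' (by exact_mod_cast hx),
        hbox.trans' (by exact_mod_cast hy)⟩
  rwa [Real.mul_rpow (by positivity) (by positivity), ← Real.rpow_mul hN0,
    mul_div_cancel₀ ε hm.ne', ← mul_assoc] at hcard

theorem exists_card_boxZeros_le_of_irreducible {d : ℕ} (hd : d ≠ 0) (A : ℝ) {ε : ℝ} (hε : 0 < ε) :
    ∃ K : ℝ, 0 < K ∧ ∀ N : ℕ, 2 ≤ N → ∀ P : ℤ[X], P.natDegree = d →
      (∀ c r : ℚ, P.map (Int.castRingHom ℚ) ≠ C c * (X - C r) ^ d) →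
      (∀ i, |(P.coeff i : ℝ)| ≤ (N : ℝ) ^ A) →
      ∀ a b : ℤ, a ≠ 0 → b ≠ 0 → |a| ≠ |b| → |(a : ℝ)| ≤ (N : ℝ) ^ A → |(b : ℝ)| ≤ (N : ℝ) ^ A →
      ∀ G, Irreducible G → G ∣ curvePoly P a b → G.natDegree ≠ 0 →
        ((boxZeros G N).card : ℝ) ≤ K * (N : ℝ) ^ (1 / 3 + ε) := by
  obtain ⟨K₂, hK₂, hquadratic⟩ :=
    exists_card_boxZeros_le_of_natDegree_eq_two hd A (ε := 1 / 3 + ε) (by positivity)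
  obtain ⟨K₃, -, hhigher⟩ := exists_card_boxZeros_le_of_three_le_natDegree hd A hε
  refine ⟨max K₂ K₃, lt_max_of_lt_left hK₂, ?_⟩
  rintro N hN P rfl hpower hP a b ha hb hab haN hbN G hirr hdvd h0
  rcases (by lia : G.natDegree = 1 ∨ G.natDegree = 2 ∨ 3 ≤ G.natDegree) with h1 | h2 | h3
  · obtain ⟨c, r, hP_eq⟩ := exists_map_eq_C_mul_X_sub_C_pow_of_linear_dvd_curvePoly ha hab
      ((isRegularInY_curvePoly hd hb a).of_dvd hdvd) h1 hdvd
    exact absurd hP_eq (hpower c r)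
  · refine (hquadratic N (one_le_two.trans hN) P rfl hP a b ha hb haN hbN G hirr hdvd h2).trans ?_
    gcongr
    exact le_max_left _ _
  · refine (hhigher N hN P rfl hP a b ha hb hbN G hirr hdvd h3).trans ?_
    gcongr
    exact le_max_right _ _

theorem coe_boxZeros_curvePoly (P : ℤ[X]) (a b : ℤ) (N : ℕ) :
    (boxZeros (curvePoly P a b) N : Set (ℤ × ℤ)) =
      {q : ℤ × ℤ | (|q.1| ≤ N ∧ |q.2| ≤ N) ∧ a * P.eval q.1 = b * P.eval q.2} := by
  ext q
  rw [Finset.mem_coe, mem_boxZeros, evalEval_curvePoly, sub_eq_zero]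
  rfl

theorem integral_points_on_curves_general (d : ℕ) (A : ℝ) {ε : ℝ} (hε : 0 < ε) :
    ∃ K : ℝ, 0 < K ∧ ∀ N : ℕ, 2 ≤ N → ∀ P : ℤ[X], P.natDegree = d →
      (∀ c r : ℚ, P.map (Int.castRingHom ℚ) ≠ C c * (X - C r) ^ d) →
      (∀ i, |(P.coeff i : ℝ)| ≤ (N : ℝ) ^ A) →
      ∀ a b : ℤ, a ≠ 0 → b ≠ 0 → |a| ≠ |b| → |(a : ℝ)| ≤ (N : ℝ) ^ A → |(b : ℝ)| ≤ (N : ℝ) ^ A →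
        ({q : ℤ × ℤ | (|q.1| ≤ N ∧ |q.2| ≤ N) ∧ a * P.eval q.1 = b * P.eval q.2}.ncard : ℝ) ≤
          K * (N : ℝ) ^ (1 / 3 + ε) := by
  rcases eq_or_ne d 0 with rfl | hd
  · refine ⟨1, one_pos, fun N _ P hP hpower => (hpower (P.coeff 0) 0 ?_).elim⟩
    rw [eq_C_of_natDegree_eq_zero hP]
    simp
  obtain ⟨K, hK, hfactor⟩ := exists_card_boxZeros_le_of_irreducible hd A hε
  refine ⟨d * K, by positivity, ?_⟩
  rintro N hN P rfl hpower hP a b ha hb hab haN hbN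
  rw [← coe_boxZeros_curvePoly, Set.ncard_coe_finset, mul_assoc]
  exact natDegree_curvePoly hb a ▸ (isRegularInY_curvePoly hd hb a).card_boxZeros_le
    (hfactor N hN P rfl hpower hP a b ha hb hab haN hbN)

theorem ne_C_mul_X_sub_C_pow_of_squarefree {R : Type*} [CommRing R] [IsDomain R] {p : R[X]}
    (hp : Squarefree p) {d : ℕ} (hd : 2 ≤ d) (c r : R) : p ≠ C c * (X - C r) ^ d := by
  rintro rfl
  exact not_isUnit_X_sub_C r
    (hp _ ((pow_two (X - C r) ▸ pow_dvd_pow _ hd).mul_left (C c)))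

/-- **Integral points on curves `aP(x) = bP(y)`.** Fix `d ≥ 2`, `C > 0`, `ε > 0`. There is a
constant `C' > 0` such that for every `N ≥ 2`, every `P ∈ ℤ[x]` of degree `d` with no repeated
roots and coefficients bounded by `N^C` in absolute value, and all integers `1 ≤ a, b ≤ N^C`
with `a ≠ b`, the number of integral points `(x, y) ∈ [1,N]²` with `aP(x) = bP(y)` is at most
`C' N^{1/3+ε}`. -/
theorem integral_points_on_curves
    (d : ℕ) (hd : 2 ≤ d) (C ε : ℝ) (hC : 0 < C) (hε : 0 < ε) :
    ∃ C' : ℝ, 0 < C' ∧ ∀ N : ℕ, 2 ≤ N → ∀ P : Polynomial ℤ,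
      P.natDegree = d →
      Squarefree (P.map (Int.castRingHom ℚ)) →
      (∀ i : ℕ, |((P.coeff i : ℤ) : ℝ)| ≤ (N : ℝ) ^ C) →
      ∀ a b : ℤ, 1 ≤ a → ((a : ℝ) ≤ (N : ℝ) ^ C) → 1 ≤ b → ((b : ℝ) ≤ (N : ℝ) ^ C) →
        a ≠ b →
        (({xy : ℤ × ℤ | 1 ≤ xy.1 ∧ xy.1 ≤ (N : ℤ) ∧ 1 ≤ xy.2 ∧ xy.2 ≤ (N : ℤ) ∧
            a * P.eval xy.1 = b * P.eval xy.2}.ncard : ℝ)) ≤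
          C' * (N : ℝ) ^ ((1:ℝ)/3 + ε) := by
  obtain ⟨K, hK, hcard⟩ := integral_points_on_curves_general d C hε
  refine ⟨K, hK, fun N hN P hP hsq hcoeff a b ha haN hb hbN hab => ?_⟩
  have haN' : |(a : ℝ)| ≤ (N : ℝ) ^ C := by rwa [← Int.cast_abs, abs_of_pos ha]
  have hbN' : |(b : ℝ)| ≤ (N : ℝ) ^ C := by rwa [← Int.cast_abs, abs_of_pos hb]
  refine le_trans ?_ (hcard N hN P hP (ne_C_mul_X_sub_C_pow_of_squarefree hsq hd) hcoeff a b
    (by lia) (by lia) (by rwa [abs_of_pos ha, abs_of_pos hb]) haN' hbN')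
  rw [← coe_boxZeros_curvePoly, Nat.cast_le]
  refine Set.ncard_le_ncard (fun q ⟨hx, hxN, hy, hyN, heq⟩ => ?_)
  exact coe_boxZeros_curvePoly P a b N ▸ ⟨⟨abs_le.2 ⟨by lia, hxN⟩, abs_le.2 ⟨by lia, hyN⟩⟩, heq⟩
end

section
/- There exist constants δ > 0, c > 0 and N₀ such that for every integer N ≥ N₀, the number of positive integers n with N/(log N) ≤ n ≤ N such that n²+1 is squarefree and n²+1 has a prime factor p with p ≥ δ·n·log n is at least c·N. -/
/-!
Let `χ` be the nontrivial character modulo `4`. A prime `p` divides `n ^ 2 + 1` for a proportion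
`(1 + χ p) / p` of all `n`, so the average over `n ≤ N` of `∑ log p`, over the primes `p ≤ N`
dividing `n ^ 2 + 1`, is at most `∑ (1 + χ p) log p / p + O(1) ≤ log N + O(1)`. The last bound is
Mertens' theorem together with the boundedness of `∑ χ d Λ d / d`, which follows from comparing
`∑ χ n log n / n` with `(∑ χ d Λ d / d) (∑ χ m / m)` and bounding the second factor away from zero.

When `n ≥ N / log N` and `n ^ 2 + 1` is squarefree with all prime factors at most `N`, that inner
sum equals `log (n ^ 2 + 1) ≥ (2 - o(1)) log N`. Hence at most a proportion `1 / 2 + o(1)` of `n`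
are of this kind. The `n` with `n ^ 2 + 1` not squarefree have density at most
`2 ∑ 1 / p ^ 2 ≤ 1 / 4`, the sum being over `p ≡ 1 mod 4`. Each prime in `(N, δ N log N]` divides
`O(1)` of the values, so by Chebyshev's bound these primes account for only `O(δ N)` of the `n`.
Every other `n` has a prime factor of `n ^ 2 + 1` beyond `δ N log N`.
-/

open Finset Filter
open scoped ArithmeticFunction.vonMangoldt Chebyshev Nat.Prime

section DirichletTest

variable {E : Type*} [SeminormedAddCommGroup E] [NormedSpace ℝ E]
  {f : ℕ → ℝ} {c : ℕ → E} {B : ℝ}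

theorem norm_sum_range_smul_sub_le_of_antitone (hf : Antitone f)
    (hc : ∀ n, ‖∑ i ∈ range n, c i‖ ≤ B) (n : ℕ) :
    ‖∑ i ∈ range n, f i • c i - f n • ∑ i ∈ range n, c i‖ ≤ (f 0 - f n) * B := by
  induction n with
  | zero => simp
  | succ n ih =>
    have summation_by_parts :
        ∑ i ∈ range (n + 1), f i • c i - f (n + 1) • ∑ i ∈ range (n + 1), c i =
          (∑ i ∈ range n, f i • c i - f n • ∑ i ∈ range n, c i) +
            (f n - f (n + 1)) • ∑ i ∈ range (n + 1), c i := by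
      rw [sum_range_succ, sum_range_succ]
      module
    have hstep : 0 ≤ f n - f (n + 1) := sub_nonneg.2 (hf n.le_succ)
    calc _ ≤ (f 0 - f n) * B + (f n - f (n + 1)) * B := by
          rw [summation_by_parts]
          refine norm_add_le_of_le ih ?_
          rw [norm_smul, Real.norm_of_nonneg hstep]
          exact mul_le_mul_of_nonneg_left (hc _) hstep
      _ = (f 0 - f (n + 1)) * B := by ring

theorem norm_sum_range_smul_le_of_antitone (hf : Antitone f) (hf₀ : ∀ n, 0 ≤ f n)
    (hc : ∀ n, ‖∑ i ∈ range n, c i‖ ≤ B) (n : ℕ) :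
    ‖∑ i ∈ range n, f i • c i‖ ≤ f 0 * B := by
  calc ‖∑ i ∈ range n, f i • c i‖
      ≤ ‖∑ i ∈ range n, f i • c i - f n • ∑ i ∈ range n, c i‖ + ‖f n • ∑ i ∈ range n, c i‖ :=
        norm_le_norm_sub_add _ _
    _ ≤ (f 0 - f n) * B + f n * B := by
        refine add_le_add (norm_sum_range_smul_sub_le_of_antitone hf hc n) ?_
        rw [norm_smul, Real.norm_of_nonneg (hf₀ n)]
        exact mul_le_mul_of_nonneg_left (hc n) (hf₀ n)
    _ = f 0 * B := by ring

theorem norm_sum_Ioc_smul_le_of_antitoneOn {M : ℕ} (hf : AntitoneOn f (Set.Ioi M))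
    (hf₀ : ∀ n, 0 ≤ f n) (hc : ∀ n, ‖∑ i ∈ Ioc M n, c i‖ ≤ B) (N : ℕ) :
    ‖∑ i ∈ Ioc M N, f i • c i‖ ≤ f (M + 1) * B := by
  have shift (g : ℕ → E) (n : ℕ) : ∑ i ∈ Ioc M n, g i = ∑ i ∈ range (n - M), g (M + 1 + i) := by
    rw [← Ico_add_one_add_one_eq_Ioc, sum_Ico_eq_sum_range, Nat.add_sub_add_right]
  rw [shift]
  refine norm_sum_range_smul_le_of_antitone (f := fun i => f (M + 1 + i)) (fun i j hij => ?_)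
    (fun i => hf₀ _) (fun n => ?_) (N - M)
  · exact hf (by simp; omega) (by simp; omega) (by gcongr)
  · simpa [shift] using hc (M + n)

end DirichletTest

section CharacterSums

variable {q : ℕ} (χ : DirichletCharacter ℝ q) {B : ℝ}

theorem abs_sum_Ioc_div_le {M : ℕ} (hB : ∀ N : ℕ, |∑ n ∈ Ioc M N, χ n| ≤ B) (N : ℕ) :
    |∑ n ∈ Ioc M N, χ n / n| ≤ B / (M + 1) := by
  have hanti : AntitoneOn (fun n : ℕ => (n : ℝ)⁻¹) (Set.Ioi M) := fun m hm n _ hmn => by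
    have : (0 : ℝ) < m := by exact_mod_cast (Nat.zero_le M).trans_lt hm
    dsimp only
    gcongr
  have h := norm_sum_Ioc_smul_le_of_antitoneOn hanti (fun n => by positivity)
    (c := fun n => χ n) hB N
  simpa [div_eq_inv_mul] using h

theorem abs_sum_mul_log_div_le (hB : ∀ M N : ℕ, |∑ n ∈ Ioc M N, χ n| ≤ B) (N : ℕ) :
    |∑ n ∈ Ioc 0 N, χ n / n * Real.log n| ≤ 1 + B := by
  have hB₀ : 0 ≤ B := (abs_nonneg _).trans (hB 0 0)
  rcases lt_or_ge N 2 with hN | hN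
  · interval_cases N <;> simp <;> linarith
  have head : |∑ n ∈ Ioc (0 : ℕ) 2, χ n / n * Real.log n| ≤ 1 := by
    have hχ : |χ 2| ≤ 1 := χ.norm_le_one 2
    have hlog : Real.log 2 / 2 ≤ 1 := by linarith [Real.log_two_lt_d9]
    have hsum : ∑ n ∈ Ioc (0 : ℕ) 2, χ n / n * Real.log n = χ 2 * (Real.log 2 / 2) := by
      rw [show Ioc (0 : ℕ) 2 = {1, 2} from rfl, sum_pair (by norm_num), Nat.cast_one, Nat.cast_one,
        Real.log_one, mul_zero, zero_add, Nat.cast_ofNat, Nat.cast_ofNat]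
      ring
    rw [hsum, abs_mul, abs_of_nonneg (by positivity : 0 ≤ Real.log 2 / 2)]
    exact mul_le_one₀ hχ (by positivity) hlog
  have tail : |∑ n ∈ Ioc 2 N, χ n / n * Real.log n| ≤ B := by
    have hanti : AntitoneOn (fun n : ℕ => Real.log n / n) (Set.Ioi 2) := fun m hm n hn hmn => by
      have hexp {k : ℕ} (hk : 2 < k) : Real.exp 1 ≤ k := by
        have : (3 : ℝ) ≤ k := by exact_mod_cast hk
        linarith [Real.exp_one_lt_d9]
      exact Real.log_div_self_antitoneOn (hexp hm) (hexp hn) (Nat.cast_le.2 hmn)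
    have h := norm_sum_Ioc_smul_le_of_antitoneOn hanti (fun n => by positivity)
      (c := fun n => χ n) (hB 2) N
    have hlog : Real.log 3 / 3 ≤ 1 := by
      linarith [Real.log_le_sub_one_of_pos (x := 3) (by norm_num)]
    calc |∑ n ∈ Ioc 2 N, χ n / n * Real.log n| = ‖∑ n ∈ Ioc 2 N, (Real.log n / n) • χ n‖ := by
          rw [Real.norm_eq_abs]
          congr! 2 with n
          rw [smul_eq_mul]
          ring
      _ ≤ Real.log 3 / 3 * B := by simpa using h
      _ ≤ B := mul_le_of_le_one_left hB₀ hlog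
  rw [← sum_Ioc_consecutive _ (Nat.zero_le 2) hN]
  exact (abs_add_le _ _).trans (add_le_add head tail)

theorem sum_Ioc_mul_log_eq_sum_vonMangoldt (g : ℕ →*₀ ℝ) (N : ℕ) :
    ∑ n ∈ Ioc 0 N, g n * Real.log n =
      ∑ d ∈ Ioc 0 N, g d * Λ d * ∑ m ∈ Ioc 0 (N / d), g m := by
  let gΛ : ArithmeticFunction ℝ := ⟨fun n => g n * Λ n, by simp⟩
  let gζ : ArithmeticFunction ℝ := ⟨g, map_zero g⟩
  have convolution (n : ℕ) : (gΛ * gζ) n = g n * Real.log n := by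
    rw [ArithmeticFunction.mul_apply, ← ArithmeticFunction.vonMangoldt_sum,
      ← Nat.sum_divisorsAntidiagonal (f := fun d _ => Λ d), mul_sum]
    refine sum_congr rfl fun x hx => ?_
    rw [← (Nat.mem_divisorsAntidiagonal.1 hx).1, map_mul]
    simp only [gΛ, gζ, ArithmeticFunction.coe_mk]
    ring
  simp_rw [← convolution]
  exact ArithmeticFunction.sum_Ioc_mul_eq_sum_sum gΛ gζ N

theorem nat_lt_mul_div_add_one (N : ℕ) {d : ℕ} (hd : 0 < d) :
    (N : ℝ) < d * ((N / d : ℕ) + 1) := by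
  exact_mod_cast Nat.lt_mul_div_succ N hd

theorem psi_natCast_eq_sum (N : ℕ) : ψ N = ∑ n ∈ Ioc 0 N, Λ n := by
  rw [Chebyshev.psi, Nat.floor_natCast]

theorem abs_sum_vonMangoldt_mul_sub_le (hB : ∀ M N : ℕ, |∑ n ∈ Ioc M N, χ n| ≤ B) {N : ℕ}
    (hN : 0 < N) :
    |∑ d ∈ Ioc 0 N, χ d / d * Λ d * ∑ m ∈ Ioc 0 (N / d), χ m / m -
      (∑ d ∈ Ioc 0 N, χ d / d * Λ d) * ∑ m ∈ Ioc 0 N, χ m / m| ≤ (Real.log 4 + 4) * B := by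
  have hB₀ : 0 ≤ B := (abs_nonneg _).trans (hB 0 0)
  have hN₀ : (0 : ℝ) < N := Nat.cast_pos.2 hN
  have term_le (d : ℕ) (hd : d ∈ Ioc 0 N) :
      |χ d / d * Λ d * (∑ m ∈ Ioc 0 (N / d), χ m / m - ∑ m ∈ Ioc 0 N, χ m / m)| ≤
        B / N * Λ d := by
    have hd₀ : (0 : ℝ) < d := Nat.cast_pos.2 (mem_Ioc.1 hd).1
    have hχ : |χ d| ≤ 1 := χ.norm_le_one d
    have tail_le : |∑ m ∈ Ioc 0 (N / d), χ m / m - ∑ m ∈ Ioc 0 N, χ m / m| ≤ B * (d / N) := by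
      rw [← sum_Ioc_consecutive _ (Nat.zero_le _) (Nat.div_le_self N d), sub_add_cancel_left,
        abs_neg]
      refine (abs_sum_Ioc_div_le χ (hB _) N).trans ?_
      rw [← mul_div_assoc, div_le_div_iff₀ (by positivity) hN₀, mul_assoc]
      exact mul_le_mul_of_nonneg_left (nat_lt_mul_div_add_one N (mem_Ioc.1 hd).1).le hB₀
    rw [abs_mul, abs_mul, abs_div, Nat.abs_cast,
      abs_of_nonneg ArithmeticFunction.vonMangoldt_nonneg]
    calc |χ d| / d * Λ d * _ ≤ 1 / d * Λ d * (B * (d / N)) := by gcongr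
      _ = B / N * Λ d := by field_simp
  calc _ = |∑ d ∈ Ioc 0 N,
        χ d / d * Λ d * (∑ m ∈ Ioc 0 (N / d), χ m / m - ∑ m ∈ Ioc 0 N, χ m / m)| := by
        simp_rw [mul_sub, sum_sub_distrib, sum_mul]
    _ ≤ ∑ d ∈ Ioc 0 N, B / N * Λ d := (abs_sum_le_sum_abs _ _).trans (sum_le_sum term_le)
    _ = B / N * ψ N := by rw [← mul_sum, psi_natCast_eq_sum]
    _ ≤ B / N * ((Real.log 4 + 4) * N) := by
        gcongr
        exact Chebyshev.psi_le_const_mul_self hN₀.le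
    _ = (Real.log 4 + 4) * B := by field_simp

theorem abs_sum_div_mul_vonMangoldt_le (hB : ∀ M N : ℕ, |∑ n ∈ Ioc M N, χ n| ≤ B) {N : ℕ}
    (hN : 0 < N) {η : ℝ} (hη : 0 < η) (hL : η ≤ ∑ n ∈ Ioc 0 N, χ n / n) :
    |∑ d ∈ Ioc 0 N, χ d / d * Λ d| ≤ (1 + (Real.log 4 + 5) * B) / η := by
  let g : ℕ →*₀ ℝ :=
    { toFun n := χ n / n
      map_zero' := by simp
      map_one' := by simp
      map_mul' m n := by push_cast; rw [map_mul, mul_div_mul_comm] }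
  have hlog := abs_sum_mul_log_div_le χ hB N
  rw [show ∑ n ∈ Ioc 0 N, χ n / n * Real.log n =
      ∑ d ∈ Ioc 0 N, χ d / d * Λ d * ∑ m ∈ Ioc 0 (N / d), χ m / m from
    sum_Ioc_mul_log_eq_sum_vonMangoldt g N] at hlog
  rw [le_div_iff₀ hη]
  calc |∑ d ∈ Ioc 0 N, χ d / d * Λ d| * η
      ≤ |∑ d ∈ Ioc 0 N, χ d / d * Λ d| * |∑ m ∈ Ioc 0 N, χ m / m| := by
        gcongr
        exact hL.trans (le_abs_self _)
    _ = |(∑ d ∈ Ioc 0 N, χ d / d * Λ d) * ∑ m ∈ Ioc 0 N, χ m / m| := (abs_mul _ _).symm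
    _ ≤ (Real.log 4 + 4) * B + (1 + B) := by
        have hsub := abs_sum_vonMangoldt_mul_sub_le χ hB hN
        rw [abs_sub_comm] at hsub
        linarith [abs_sub_abs_le_abs_sub ((∑ d ∈ Ioc 0 N, χ d / d * Λ d) * ∑ m ∈ Ioc 0 N, χ m / m)
          (∑ d ∈ Ioc 0 N, χ d / d * Λ d * ∑ m ∈ Ioc 0 (N / d), χ m / m)]
    _ = 1 + (Real.log 4 + 5) * B := by ring

theorem sum_vonMangoldt_div_le {N : ℕ} (hN : 0 < N) :
    ∑ d ∈ Ioc 0 N, Λ d / d ≤ Real.log N + (Real.log 4 + 4) := by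
  have hN₀ : (0 : ℝ) < N := Nat.cast_pos.2 hN
  have floor_sum_le : ∑ d ∈ Ioc 0 N, Λ d * (N / d : ℕ) ≤ N * Real.log N := by
    rw [← ArithmeticFunction.sum_Ioc_mul_zeta_eq_sum, ArithmeticFunction.vonMangoldt_mul_zeta]
    calc ∑ n ∈ Ioc 0 N, ArithmeticFunction.log n ≤ #(Ioc 0 N) • Real.log N := by
          refine sum_le_card_nsmul _ _ _ fun n hn => ?_
          obtain ⟨hn₀, hnN⟩ := mem_Ioc.1 hn
          exact Real.log_le_log (Nat.cast_pos.2 hn₀) (Nat.cast_le.2 hnN)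
      _ = N * Real.log N := by rw [Nat.card_Ioc, Nat.sub_zero, nsmul_eq_mul]
  refine le_of_mul_le_mul_left ?_ hN₀
  calc N * ∑ d ∈ Ioc 0 N, Λ d / d ≤ ∑ d ∈ Ioc 0 N, (Λ d * (N / d : ℕ) + Λ d) := by
        rw [mul_sum]
        refine sum_le_sum fun d hd => ?_
        have hd₀ : (0 : ℝ) < d := Nat.cast_pos.2 (mem_Ioc.1 hd).1
        rw [← mul_add_one, mul_div_left_comm]
        gcongr
        rw [div_le_iff₀' hd₀]
        exact (nat_lt_mul_div_add_one N (mem_Ioc.1 hd).1).le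
    _ = ∑ d ∈ Ioc 0 N, Λ d * (N / d : ℕ) + ψ N := by rw [sum_add_distrib, psi_natCast_eq_sum]
    _ ≤ N * Real.log N + (Real.log 4 + 4) * N :=
        add_le_add floor_sum_le (Chebyshev.psi_le_const_mul_self hN₀.le)
    _ = N * (Real.log N + (Real.log 4 + 4)) := by ring

theorem sum_primesLE_one_add_mul_log_div_le (N : ℕ) :
    ∑ p ∈ N.primesLE, (1 + χ p) * (Real.log p / p) ≤
      ∑ d ∈ Ioc 0 N, Λ d / d + ∑ d ∈ Ioc 0 N, χ d / d * Λ d := by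
  calc ∑ p ∈ N.primesLE, (1 + χ p) * (Real.log p / p)
      = ∑ p ∈ N.primesLE, (1 + χ p) * (Λ p / p) := sum_congr rfl fun p hp => by
        rw [ArithmeticFunction.vonMangoldt_apply_prime (Nat.prime_of_mem_primesLE hp)]
    _ ≤ ∑ d ∈ Ioc 0 N, (1 + χ d) * (Λ d / d) := by
        refine sum_le_sum_of_subset_of_nonneg (fun p hp => ?_) fun d _ _ => ?_
        · exact mem_Ioc.2 ⟨(Nat.prime_of_mem_primesLE hp).pos, Nat.le_of_mem_primesLE hp⟩
        · have hχ : -1 ≤ χ d := (abs_le.1 (χ.norm_le_one d)).1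
          exact mul_nonneg (by linarith)
            (div_nonneg ArithmeticFunction.vonMangoldt_nonneg d.cast_nonneg)
    _ = _ := by
        rw [← sum_add_distrib]
        exact sum_congr rfl fun d _ => by ring

end CharacterSums

section ChiFour

/-- The nontrivial Dirichlet character modulo `4` with real values. It detects whether `-1` is a
square modulo an odd prime, so `1 + chiFour p` counts the roots of `X ^ 2 + 1` modulo `p`. -/
noncomputable def chiFour : DirichletCharacter ℝ 4 := ZMod.χ₄.ringHomComp (Int.castRingHom ℝ)

theorem chiFour_natCast (n : ℕ) :
    chiFour n = if n % 2 = 0 then 0 else if n % 4 = 1 then 1 else -1 := by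
  rw [chiFour, MulChar.ringHomComp_apply, ZMod.χ₄_nat_eq_if_mod_four]
  split_ifs <;> simp

theorem one_add_chiFour_le_two (p : ℕ) : 1 + chiFour p ≤ 2 := by
  have hχ : |chiFour p| ≤ 1 := chiFour.norm_le_one p
  linarith [(abs_le.1 hχ).2]

theorem sum_Ioc_zero_chiFour (N : ℕ) :
    ∑ n ∈ Ioc 0 N, chiFour n = if N % 4 = 1 ∨ N % 4 = 2 then 1 else 0 := by
  induction N with
  | zero => simp
  | succ k ih =>
    rw [sum_Ioc_succ_top k.zero_le, ih, chiFour_natCast]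
    have : k % 4 < 4 := Nat.mod_lt _ (by norm_num)
    split_ifs <;> first | omega | norm_num

theorem abs_sum_Ioc_chiFour_le_one (M N : ℕ) : |∑ n ∈ Ioc M N, chiFour n| ≤ 1 := by
  rcases le_total N M with h | h
  · simp [Ioc_eq_empty_of_le h]
  · have split := sum_Ioc_consecutive (fun n : ℕ => chiFour n) M.zero_le h
    rw [sum_Ioc_zero_chiFour, sum_Ioc_zero_chiFour] at split
    rw [abs_le]
    split_ifs at split <;> constructor <;> linarith

theorem one_half_le_sum_chiFour_div {N : ℕ} (hN : 0 < N) :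
    1 / 2 ≤ ∑ n ∈ Ioc 0 N, chiFour n / n := by
  have tail := (abs_le.1 (abs_sum_Ioc_div_le chiFour (abs_sum_Ioc_chiFour_le_one 1) N)).1
  norm_num at tail
  have head : ∑ n ∈ Ioc (0 : ℕ) 1, chiFour n / n = 1 := by
    rw [show Ioc (0 : ℕ) 1 = {1} from rfl]
    simp
  rw [← sum_Ioc_consecutive _ zero_le_one hN, head]
  linarith

theorem log_four_lt_two : Real.log 4 < 2 := by
  linarith [Real.log_four_eq, Real.log_two_lt_d9]

theorem sum_primesLE_one_add_chiFour_mul_log_div_le {N : ℕ} (hN : 0 < N) :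
    ∑ p ∈ N.primesLE, (1 + chiFour p) * (Real.log p / p) ≤ Real.log N + 22 := by
  have twisted := (abs_le.1 (abs_sum_div_mul_vonMangoldt_le chiFour abs_sum_Ioc_chiFour_le_one hN
    one_half_pos (one_half_le_sum_chiFour_div hN))).2
  linarith [sum_primesLE_one_add_mul_log_div_le chiFour N, sum_vonMangoldt_div_le hN,
    log_four_lt_two]

end ChiFour

section Roots

theorem eq_or_eq_neg_of_sq_eq_sq_of_isUnit {R : Type*} [CommRing R] [IsLocalRing R]
    (h₂ : IsUnit (2 : R)) {x y : R} (hx : IsUnit x) (h : x ^ 2 = y ^ 2) : x = y ∨ x = -y := by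
  have hmul : (x + y) * (x - y) = 0 := by linear_combination h
  have hadd : IsUnit ((x + y) + (x - y)) := by
    convert h₂.mul hx using 1
    ring
  rcases IsLocalRing.isUnit_or_isUnit_of_isUnit_add hadd with hu | hu
  · exact .inl (sub_eq_zero.1 (hu.mul_right_eq_zero.1 hmul))
  · exact .inr (eq_neg_of_add_eq_zero_left (hu.mul_left_eq_zero.1 hmul))

theorem isLocalRing_zmod_prime_pow (p : ℕ) [Fact p.Prime] {k : ℕ} (hk : k ≠ 0) :
    IsLocalRing (ZMod (p ^ k)) :=
  have : Fact (1 < p ^ k) := ⟨Nat.one_lt_pow hk (Fact.out : p.Prime).one_lt⟩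
  .of_surjective' (PadicInt.toZModPow k) (ZMod.ringHom_surjective _)

theorem card_Ioc_filter_natCast_eq_le {a b : ℕ} (hab : a ≤ b) {q : ℕ} [NeZero q] (r : ZMod q) :
    (#{n ∈ Ioc a b | ((n : ℕ) : ZMod q) = r} : ℝ) ≤ ((b : ℝ) - a) / q + 1 := by
  have hcard := Nat.Ioc_filter_modEq_card a b (NeZero.pos q) r.val
  have hmod : {n ∈ Ioc a b | ((n : ℕ) : ZMod q) = r} = {n ∈ Ioc a b | n ≡ r.val [MOD q]} :=
    filter_congr fun n _ => by rw [← ZMod.natCast_eq_natCast_iff, ZMod.natCast_zmod_val]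
  have hq : (#{n ∈ Ioc a b | n ≡ r.val [MOD q]} : ℚ) ≤ ((b : ℚ) - a) / q + 1 := by
    rw [← Int.cast_natCast, hcard, Int.cast_max, Int.cast_sub, Int.cast_zero]
    refine max_le ?_ ?_
    · have hsub : ((b : ℚ) - r.val) / q - (a - r.val) / q = (b - a) / q := by ring
      linarith [Int.floor_le (((b : ℚ) - r.val) / q), Int.lt_floor_add_one ((a - r.val : ℚ) / q)]
    · have : (a : ℚ) ≤ b := Nat.cast_le.2 hab
      have := sub_nonneg.2 this
      positivity
  rw [hmod]
  simpa using Rat.cast_le (K := ℝ).2 hq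

theorem dvd_sq_add_one_iff (q n : ℕ) : q ∣ n ^ 2 + 1 ↔ (n : ZMod q) ^ 2 = -1 := by
  rw [← ZMod.natCast_eq_zero_iff, Nat.cast_add, Nat.cast_pow, Nat.cast_one, eq_neg_iff_add_eq_zero]

theorem mod_four_ne_three_of_dvd_sq_add_one {p n : ℕ} (hp : p.Prime) (h : p ∣ n ^ 2 + 1) :
    p % 4 ≠ 3 :=
  have := Fact.mk hp
  ZMod.mod_four_ne_three_of_sq_eq_neg_one ((dvd_sq_add_one_iff p n).1 h)

theorem card_Ioc_filter_prime_pow_dvd_sq_add_one_le {p k : ℕ} (hp : p.Prime) (hp₂ : p ≠ 2)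
    (hk : k ≠ 0) (N : ℕ) :
    (#{n ∈ Ioc 0 N | p ^ k ∣ n ^ 2 + 1} : ℝ) ≤ 2 * (N / (p : ℝ) ^ k + 1) := by
  have : Fact p.Prime := ⟨hp⟩
  have : NeZero (p ^ k) := ⟨(pow_pos hp.pos k).ne'⟩
  have := isLocalRing_zmod_prime_pow p hk
  have h₂ : IsUnit (2 : ZMod (p ^ k)) := (ZMod.isUnit_iff_coprime 2 (p ^ k)).2
    (Nat.Coprime.pow_right k ((Nat.coprime_primes Nat.prime_two hp).2 hp₂.symm))
  rcases {n ∈ Ioc 0 N | p ^ k ∣ n ^ 2 + 1}.eq_empty_or_nonempty with hempty | ⟨a, ha⟩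
  · rw [hempty, card_empty, Nat.cast_zero]
    positivity
  have ha : (a : ZMod (p ^ k)) ^ 2 = -1 := (dvd_sq_add_one_iff _ _).1 (mem_filter.1 ha).2
  have roots_subset : {n ∈ Ioc 0 N | p ^ k ∣ n ^ 2 + 1} ⊆
      {n ∈ Ioc 0 N | ((n : ℕ) : ZMod (p ^ k)) = a} ∪
        {n ∈ Ioc 0 N | ((n : ℕ) : ZMod (p ^ k)) = -a} := by
    intro n hn
    obtain ⟨hnN, hdvd⟩ := mem_filter.1 hn
    have hn : (n : ZMod (p ^ k)) ^ 2 = -1 := (dvd_sq_add_one_iff _ _).1 hdvd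
    have hunit : IsUnit (n : ZMod (p ^ k)) :=
      .of_mul_eq_one (-n : ZMod (p ^ k)) (by linear_combination -hn)
    rw [← filter_or]
    exact mem_filter.2
      ⟨hnN, eq_or_eq_neg_of_sq_eq_sq_of_isUnit h₂ hunit (hn.trans ha.symm)⟩
  have hclass (r : ZMod (p ^ k)) := card_Ioc_filter_natCast_eq_le N.zero_le r
  simp only [Nat.cast_zero, sub_zero, Nat.cast_pow] at hclass
  calc (#{n ∈ Ioc 0 N | p ^ k ∣ n ^ 2 + 1} : ℝ)
      ≤ #{n ∈ Ioc 0 N | ((n : ℕ) : ZMod (p ^ k)) = a} +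
          #{n ∈ Ioc 0 N | ((n : ℕ) : ZMod (p ^ k)) = -a} := by
        exact_mod_cast (card_le_card roots_subset).trans (card_union_le _ _)
    _ ≤ 2 * (N / (p : ℝ) ^ k + 1) := by linarith [hclass a, hclass (-a)]

theorem card_Ioc_filter_prime_dvd_sq_add_one_le {p : ℕ} (hp : p.Prime) (N : ℕ) :
    (#{n ∈ Ioc 0 N | p ∣ n ^ 2 + 1} : ℝ) ≤ (1 + chiFour p) * (N / p + 1) := by
  rcases hp.eq_two_or_odd with rfl | hodd
  · have hχ : chiFour (2 : ℕ) = 0 := by rw [chiFour_natCast, if_pos rfl]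
    have hclass := card_Ioc_filter_natCast_eq_le N.zero_le (1 : ZMod 2)
    rw [hχ, add_zero, one_mul]
    have hsq : ∀ x : ZMod 2, x ^ 2 = -1 ↔ x = 1 := by decide
    simpa only [dvd_sq_add_one_iff, hsq, Nat.cast_zero, sub_zero] using hclass
  by_cases hmod : p % 4 = 3
  · have hempty : {n ∈ Ioc 0 N | p ∣ n ^ 2 + 1} = ∅ :=
      filter_false_of_mem fun n _ h => mod_four_ne_three_of_dvd_sq_add_one hp h hmod
    have hχ : chiFour p = -1 := by rw [chiFour_natCast, if_neg (by omega), if_neg (by omega)]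
    simp [hempty, hχ]
  · have hχ : chiFour p = 1 := by rw [chiFour_natCast, if_neg (by omega), if_pos (by omega)]
    have hcard := card_Ioc_filter_prime_pow_dvd_sq_add_one_le hp (by rintro rfl; omega)
      one_ne_zero N
    rw [hχ, one_add_one_eq_two]
    simpa only [pow_one] using hcard

end Roots

section SquareDivisors

theorem le_of_sq_dvd_sq_add_one {d n : ℕ} (hn : n ≠ 0) (h : d ^ 2 ∣ n ^ 2 + 1) : d ≤ n := by
  by_contra! hlt
  have hle : d ^ 2 ≤ n ^ 2 + 1 := Nat.le_of_dvd (Nat.succ_pos _) h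
  have hsq : (n + 1) ^ 2 ≤ d ^ 2 := Nat.pow_le_pow_left hlt 2
  exact hn (by nlinarith)

theorem mod_four_eq_one_of_sq_dvd_sq_add_one {p n : ℕ} (hp : p.Prime) (h : p ^ 2 ∣ n ^ 2 + 1) :
    p % 4 = 1 := by
  have hne_three := mod_four_ne_three_of_dvd_sq_add_one hp ((dvd_pow_self p two_ne_zero).trans h)
  rcases hp.eq_two_or_odd with rfl | hodd
  · have no_root : ∀ x : ZMod 4, x ^ 2 ≠ -1 := by decide
    exact absurd ((dvd_sq_add_one_iff 4 n).1 h) (no_root n)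
  · omega

theorem sum_Ioc_one_filter_mod_four_eq_one_inv_sq_le (N : ℕ) :
    ∑ m ∈ Ioc 1 N with m % 4 = 1, ((m : ℝ) ^ 2)⁻¹ ≤ 1 / 8 := by
  calc ∑ m ∈ Ioc 1 N with m % 4 = 1, ((m : ℝ) ^ 2)⁻¹
      ≤ ∑ m ∈ Ioc 1 N with m % 4 = 1, 1 / 16 * ((↑(m / 4) : ℝ) ^ 2)⁻¹ := by
        refine sum_le_sum fun m hm => ?_
        have hquot : 0 < m / 4 ∧ 4 * (m / 4) ≤ m := by grind
        have hpos : (0 : ℝ) < (m / 4 : ℕ) := Nat.cast_pos.2 hquot.1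
        have hle : 4 * ((m / 4 : ℕ) : ℝ) ≤ m := by exact_mod_cast hquot.2
        calc ((m : ℝ) ^ 2)⁻¹ ≤ ((4 * ((m / 4 : ℕ) : ℝ)) ^ 2)⁻¹ := by gcongr
          _ = 1 / 16 * ((↑(m / 4) : ℝ) ^ 2)⁻¹ := by field_simp; norm_num
    _ = ∑ j ∈ image (fun m : ℕ => m / 4) {m ∈ Ioc 1 N | m % 4 = 1}, 1 / 16 * ((j : ℝ) ^ 2)⁻¹ := by
        refine (sum_image (f := fun j : ℕ => 1 / 16 * ((j : ℝ) ^ 2)⁻¹) fun a ha b hb hab => ?_).symm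
        grind
    _ ≤ ∑ j ∈ Ioo 0 (N + 1), 1 / 16 * ((j : ℝ) ^ 2)⁻¹ := by
        refine sum_le_sum_of_subset_of_nonneg (fun j hj => ?_) fun j _ _ => by positivity
        grind
    _ = 1 / 16 * ∑ j ∈ Ioo 0 (N + 1), ((j : ℝ) ^ 2)⁻¹ := (mul_sum _ _ _).symm
    _ ≤ 1 / 16 * (2 / ((0 : ℕ) + 1)) := by
        gcongr
        exact sum_Ioo_inv_sq_le 0 (N + 1)
    _ = 1 / 8 := by norm_num

theorem card_filter_exists_le {α β : Type*} (s : Finset α) (t : Finset β) (r : β → α → Prop)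
    [∀ b, DecidablePred (r b)] [DecidablePred fun a => ∃ b ∈ t, r b a] :
    #{a ∈ s | ∃ b ∈ t, r b a} ≤ ∑ b ∈ t, #{a ∈ s | r b a} := by
  classical
  refine (card_le_card fun a ha => ?_).trans
    (card_biUnion_le (s := t) (t := fun b => {a ∈ s | r b a}))
  obtain ⟨has, b, hbt, hba⟩ := mem_filter.1 ha
  exact mem_biUnion.2 ⟨b, hbt, mem_filter.2 ⟨has, hba⟩⟩

theorem card_Ioc_filter_not_squarefree_sq_add_one_le (N : ℕ) :
    (#{n ∈ Ioc 0 N | ¬ Squarefree (n ^ 2 + 1)} : ℝ) ≤ N / 4 + 2 * π N := by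
  let P : Finset ℕ := {p ∈ N.primesLE | p % 4 = 1}
  have hPprime {p : ℕ} (hp : p ∈ P) : p.Prime := Nat.prime_of_mem_primesLE (mem_filter.1 hp).1
  have sub : {n ∈ Ioc 0 N | ¬ Squarefree (n ^ 2 + 1)} ⊆
      {n ∈ Ioc 0 N | ∃ p ∈ P, p ^ 2 ∣ n ^ 2 + 1} := by
    refine fun n hn => ?_
    obtain ⟨hnN, hsq⟩ := mem_filter.1 hn
    obtain ⟨p, hp, hdvd⟩ : ∃ p : ℕ, p.Prime ∧ p ^ 2 ∣ n ^ 2 + 1 := by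
      simpa [Nat.squarefree_iff_prime_squarefree, ← sq] using hsq
    have hpn := le_of_sq_dvd_sq_add_one (mem_Ioc.1 hnN).1.ne' hdvd
    exact mem_filter.2 ⟨hnN, p, mem_filter.2 ⟨Nat.mem_primesLE.2 ⟨hpn.trans (mem_Ioc.1 hnN).2, hp⟩,
      mod_four_eq_one_of_sq_dvd_sq_add_one hp hdvd⟩, hdvd⟩
  have inv_sq_le : ∑ p ∈ P, ((p : ℝ) ^ 2)⁻¹ ≤ 1 / 8 := by
    refine le_trans (sum_le_sum_of_subset_of_nonneg (filter_subset_filter _ fun p hp => ?_)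
      fun p _ _ => by positivity) (sum_Ioc_one_filter_mod_four_eq_one_inv_sq_le N)
    exact mem_Ioc.2 ⟨Nat.one_lt_of_mem_primesLE hp, Nat.le_of_mem_primesLE hp⟩
  have card_le : (#P : ℝ) ≤ π N := by
    rw [← Nat.primesLE_card_eq_primeCounting]
    exact_mod_cast card_filter_le _ _
  calc (#{n ∈ Ioc 0 N | ¬ Squarefree (n ^ 2 + 1)} : ℝ)
      ≤ ∑ p ∈ P, (#{n ∈ Ioc 0 N | p ^ 2 ∣ n ^ 2 + 1} : ℝ) := by
        exact_mod_cast (card_le_card sub).trans (card_filter_exists_le _ _ _)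
    _ ≤ ∑ p ∈ P, 2 * (N / (p : ℝ) ^ 2 + 1) := sum_le_sum fun p hp =>
        card_Ioc_filter_prime_pow_dvd_sq_add_one_le (hPprime hp) (by grind) two_ne_zero N
    _ = 2 * N * ∑ p ∈ P, ((p : ℝ) ^ 2)⁻¹ + 2 * #P := by
        simp_rw [div_eq_mul_inv]
        rw [← mul_sum, sum_add_distrib, sum_const, nsmul_one, ← mul_sum, mul_add, mul_assoc]
    _ ≤ 2 * N * (1 / 8) + 2 * π N := by gcongr
    _ = N / 4 + 2 * π N := by ring

end SquareDivisors

section LogAverage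

theorem sum_Ioc_sum_primesLE_dvd_sq_add_one_log_le {N : ℕ} (hN : 0 < N) :
    ∑ n ∈ Ioc 0 N, ∑ p ∈ N.primesLE with p ∣ n ^ 2 + 1, Real.log p ≤ N * (Real.log N + 26) := by
  have term_le (p : ℕ) (hp : p ∈ N.primesLE) :
      #{n ∈ Ioc 0 N | p ∣ n ^ 2 + 1} * Real.log p ≤
        N * ((1 + chiFour p) * (Real.log p / p)) + 2 * Real.log p := by
    have := Real.log_natCast_nonneg p
    calc #{n ∈ Ioc 0 N | p ∣ n ^ 2 + 1} * Real.log p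
        ≤ (1 + chiFour p) * (N / p + 1) * Real.log p := by
          gcongr
          exact card_Ioc_filter_prime_dvd_sq_add_one_le (Nat.prime_of_mem_primesLE hp) N
      _ = N * ((1 + chiFour p) * (Real.log p / p)) + (1 + chiFour p) * Real.log p := by ring
      _ ≤ _ := by gcongr; exact one_add_chiFour_le_two p
  calc ∑ n ∈ Ioc 0 N, ∑ p ∈ N.primesLE with p ∣ n ^ 2 + 1, Real.log p
      = ∑ p ∈ N.primesLE, #{n ∈ Ioc 0 N | p ∣ n ^ 2 + 1} * Real.log p := by
        simp_rw [sum_filter]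
        rw [sum_comm]
        simp_rw [← sum_filter, sum_const, nsmul_eq_mul]
    _ ≤ ∑ p ∈ N.primesLE, (N * ((1 + chiFour p) * (Real.log p / p)) + 2 * Real.log p) :=
        sum_le_sum term_le
    _ = N * ∑ p ∈ N.primesLE, (1 + chiFour p) * (Real.log p / p) + 2 * θ N := by
        rw [sum_add_distrib, ← mul_sum, ← mul_sum, Chebyshev.theta_eq_sum_primesLE_log]
    _ ≤ N * (Real.log N + 22) + 2 * (2 * N) := by
        gcongr
        · exact sum_primesLE_one_add_chiFour_mul_log_div_le hN
        · exact (Chebyshev.theta_le_log4_mul_x N.cast_nonneg).trans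
            (by gcongr; exact log_four_lt_two.le)
    _ = N * (Real.log N + 26) := by ring

theorem log_eq_sum_primesLE_dvd_log {m y : ℕ} (hm : Squarefree m)
    (hy : ∀ p ∈ m.primeFactors, p ≤ y) :
    Real.log m = ∑ p ∈ y.primesLE with p ∣ m, Real.log p := by
  have hfactors : m.primeFactors = {p ∈ y.primesLE | p ∣ m} := by
    ext p
    rw [mem_filter, Nat.mem_primesLE]
    refine ⟨fun hp => ?_, fun ⟨⟨_, hp⟩, hdvd⟩ => Nat.mem_primeFactors.2 ⟨hp, hdvd, hm.ne_zero⟩⟩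
    exact ⟨⟨hy p hp, Nat.prime_of_mem_primeFactors hp⟩, Nat.dvd_of_mem_primeFactors hp⟩
  rw [← hfactors, ← Real.log_prod fun p hp =>
      Nat.cast_ne_zero.2 (Nat.prime_of_mem_primeFactors hp).ne_zero,
    ← Nat.cast_prod, Nat.prod_primeFactors_of_squarefree hm]

/-- The `n ∈ [x, N]` for which `n ^ 2 + 1` is squarefree and has no prime factor beyond `N`.
Such a value is the product of the primes `p ≤ N` dividing it, which bounds their number. -/
noncomputable def squarefreeSmooth (x : ℝ) (N : ℕ) : Finset ℕ :=
  {n ∈ Ioc 0 N | x ≤ ((n : ℕ) : ℝ) ∧ Squarefree (n ^ 2 + 1) ∧ ∀ p ∈ (n ^ 2 + 1).primeFactors, p ≤ N}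

theorem card_squarefreeSmooth_mul_log_le {N : ℕ} (hN : 0 < N) {x : ℝ} (hx : 0 < x) :
    #(squarefreeSmooth x N) * (2 * Real.log x) ≤ N * (Real.log N + 26) := by
  have two_log_le (n : ℕ) (hn : n ∈ squarefreeSmooth x N) :
      2 * Real.log x ≤ ∑ p ∈ N.primesLE with p ∣ n ^ 2 + 1, Real.log p := by
    obtain ⟨-, hxn, hsq, hsmooth⟩ := mem_filter.1 hn
    rw [← log_eq_sum_primesLE_dvd_log hsq hsmooth]
    calc 2 * Real.log x = Real.log (x ^ 2) := by rw [Real.log_pow, Nat.cast_ofNat]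
      _ ≤ Real.log (n ^ 2 + 1 : ℕ) := by
        push_cast
        gcongr
        nlinarith
  calc #(squarefreeSmooth x N) * (2 * Real.log x)
      ≤ ∑ n ∈ squarefreeSmooth x N, ∑ p ∈ N.primesLE with p ∣ n ^ 2 + 1, Real.log p := by
        rw [← nsmul_eq_mul]
        exact card_nsmul_le_sum _ _ _ two_log_le
    _ ≤ ∑ n ∈ Ioc 0 N, ∑ p ∈ N.primesLE with p ∣ n ^ 2 + 1, Real.log p :=
        sum_le_sum_of_subset_of_nonneg (filter_subset _ _) fun _ _ _ =>
          sum_nonneg fun p _ => Real.log_natCast_nonneg p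
    _ ≤ N * (Real.log N + 26) := sum_Ioc_sum_primesLE_dvd_sq_add_one_log_le hN

end LogAverage
section Exceptions

theorem eventually_natCast_div_log_le {ε : ℝ} (hε : 0 < ε) :
    ∀ᶠ N : ℕ in atTop, (N : ℝ) / Real.log N ≤ ε * N := by
  filter_upwards [(Real.tendsto_log_atTop.comp tendsto_natCast_atTop_atTop).eventually_ge_atTop
    (1 / ε)] with N hN
  have hN : 1 / ε ≤ Real.log N := hN
  have hlog : 0 < Real.log N := (one_div_pos.2 hε).trans_le hN
  rw [div_le_iff₀ hlog, mul_right_comm]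
  exact le_mul_of_one_le_left N.cast_nonneg ((div_le_iff₀' hε).1 hN)

theorem eventually_primeCounting_floor_le :
    ∀ᶠ x : ℝ in atTop, (π ⌊x⌋₊ : ℝ) ≤ 3 * (x / Real.log x) := by
  filter_upwards [Chebyshev.eventually_primeCounting_le one_pos, eventually_ge_atTop 1] with x hπ hx
  have := Real.log_nonneg hx
  rw [mul_div_assoc] at hπ
  refine hπ.trans ?_
  gcongr
  linarith [log_four_lt_two]

theorem eventually_card_filter_not_squarefree_le {ε : ℝ} (hε : 0 < ε) :
    ∀ᶠ N : ℕ in atTop, (#{n ∈ Ioc 0 N | ¬ Squarefree (n ^ 2 + 1)} : ℝ) ≤ (1 / 4 + ε) * N := by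
  filter_upwards [tendsto_natCast_atTop_atTop.eventually eventually_primeCounting_floor_le,
    eventually_natCast_div_log_le (show 0 < ε / 6 by positivity)] with N hπ hlog
  rw [Nat.floor_natCast] at hπ
  linarith [card_Ioc_filter_not_squarefree_sq_add_one_le N]

theorem eventually_add_le_mul_sub_log {a : ℝ} (ha : 1 < a) (b : ℝ) :
    ∀ᶠ x : ℝ in atTop, x + b ≤ a * (x - Real.log x) := by
  have hη : 0 < (a - 1) / (2 * a) := by have := sub_pos.2 ha; positivity
  filter_upwards [Real.isLittleO_log_id_atTop.bound hη, eventually_ge_atTop 1,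
    eventually_ge_atTop (2 * b / (a - 1))] with x hlog hx hb
  rw [Real.norm_of_nonneg (Real.log_nonneg hx), id_eq,
    Real.norm_of_nonneg (zero_le_one.trans hx)] at hlog
  rw [div_le_iff₀ (sub_pos.2 ha)] at hb
  have hlog' : a * Real.log x ≤ (a - 1) / 2 * x := by
    calc a * Real.log x ≤ a * ((a - 1) / (2 * a) * x) := by gcongr
      _ = (a - 1) / 2 * x := by field_simp
  linarith

theorem eventually_card_squarefreeSmooth_le {ε : ℝ} (hε : 0 < ε) :
    ∀ᶠ N : ℕ in atTop, (#(squarefreeSmooth (N / Real.log N) N) : ℝ) ≤ (1 / 2 + ε) * N := by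
  have tendsto_log : Tendsto (fun N : ℕ => Real.log N) atTop atTop :=
    Real.tendsto_log_atTop.comp tendsto_natCast_atTop_atTop
  filter_upwards [eventually_gt_atTop 0,
    tendsto_log.eventually (eventually_add_le_mul_sub_log (show 1 < 1 + 2 * ε by linarith) 26),
    tendsto_log.eventually_gt_atTop 0] with N hN hlog hlog₀
  have hN₀ : (0 : ℝ) < N := Nat.cast_pos.2 hN
  have hcard := card_squarefreeSmooth_mul_log_le hN (div_pos hN₀ hlog₀)
  rw [Real.log_div hN₀.ne' hlog₀.ne'] at hcard
  have hpos : 0 < Real.log N - Real.log (Real.log N) := by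
    have : 0 < (1 + 2 * ε) * (Real.log N - Real.log (Real.log N)) := by linarith
    exact pos_of_mul_pos_right this (by positivity)
  refine le_of_mul_le_mul_right ?_ (mul_pos two_pos hpos)
  calc _ ≤ N * (Real.log N + 26) := hcard
    _ ≤ N * ((1 + 2 * ε) * (Real.log N - Real.log (Real.log N))) := by gcongr
    _ = (1 / 2 + ε) * N * (2 * (Real.log N - Real.log (Real.log N))) := by ring

theorem card_Ioc_filter_exists_primeFactors_le (N M : ℕ) :
    (#{n ∈ Ioc 0 N | ∃ p ∈ (n ^ 2 + 1).primeFactors, N < p ∧ p ≤ M} : ℝ) ≤ 4 * π M := by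
  let P : Finset ℕ := {p ∈ M.primesLE | N < p}
  have sub : {n ∈ Ioc 0 N | ∃ p ∈ (n ^ 2 + 1).primeFactors, N < p ∧ p ≤ M} ⊆
      {n ∈ Ioc 0 N | ∃ p ∈ P, p ∣ n ^ 2 + 1} := fun n hn => by
    obtain ⟨hnN, p, hp, hNp, hpM⟩ := mem_filter.1 hn
    have hpP : p ∈ P :=
      mem_filter.2 ⟨Nat.mem_primesLE.2 ⟨hpM, Nat.prime_of_mem_primeFactors hp⟩, hNp⟩
    exact mem_filter.2 ⟨hnN, p, hpP, Nat.dvd_of_mem_primeFactors hp⟩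
  have card_le_four (p : ℕ) (hp : p ∈ P) : (#{n ∈ Ioc 0 N | p ∣ n ^ 2 + 1} : ℝ) ≤ 4 := by
    obtain ⟨hpM, hNp⟩ := mem_filter.1 hp
    have hratio : (N : ℝ) / p ≤ 1 := div_le_one_of_le₀ (Nat.cast_le.2 hNp.le) p.cast_nonneg
    calc (#{n ∈ Ioc 0 N | p ∣ n ^ 2 + 1} : ℝ) ≤ (1 + chiFour p) * (N / p + 1) :=
          card_Ioc_filter_prime_dvd_sq_add_one_le (Nat.prime_of_mem_primesLE hpM) N
      _ ≤ 2 * (1 + 1) := by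
        gcongr
        exact one_add_chiFour_le_two p
      _ = 4 := by norm_num
  calc _ ≤ ∑ p ∈ P, (#{n ∈ Ioc 0 N | p ∣ n ^ 2 + 1} : ℝ) := by
        exact_mod_cast (card_le_card sub).trans (card_filter_exists_le _ _ _)
    _ ≤ #P • (4 : ℝ) := sum_le_card_nsmul _ _ _ card_le_four
    _ ≤ 4 * π M := by
        rw [nsmul_eq_mul, mul_comm, ← Nat.primesLE_card_eq_primeCounting]
        gcongr
        exact filter_subset _ _

theorem eventually_card_filter_exists_primeFactors_le {δ : ℝ} (hδ : 0 < δ) :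
    ∀ᶠ N : ℕ in atTop, (#{n ∈ Ioc 0 N | ∃ p ∈ (n ^ 2 + 1).primeFactors,
      N < p ∧ p ≤ ⌊δ * N * Real.log N⌋₊} : ℝ) ≤ 12 * δ * N := by
  have tendsto_log : Tendsto (fun N : ℕ => Real.log N) atTop atTop :=
    Real.tendsto_log_atTop.comp tendsto_natCast_atTop_atTop
  have tendsto_cutoff : Tendsto (fun N : ℕ => δ * N * Real.log N) atTop atTop :=
    (tendsto_natCast_atTop_atTop.const_mul_atTop hδ).atTop_mul_atTop₀ tendsto_log
  filter_upwards [eventually_gt_atTop 0, tendsto_log.eventually_ge_atTop (1 / δ),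
    tendsto_cutoff.eventually eventually_primeCounting_floor_le] with N hN hlog hπ
  have : (0 : ℝ) < N := Nat.cast_pos.2 hN
  have hlog₀ : 0 < Real.log N := (one_div_pos.2 hδ).trans_le hlog
  have hN_le : (N : ℝ) ≤ δ * N * Real.log N := by
    rw [mul_right_comm]
    exact le_mul_of_one_le_left N.cast_nonneg ((div_le_iff₀' hδ).1 hlog)
  calc _ ≤ 4 * (π ⌊δ * N * Real.log N⌋₊ : ℝ) := card_Ioc_filter_exists_primeFactors_le _ _
    _ ≤ 4 * (3 * (δ * N * Real.log N / Real.log (δ * N * Real.log N))) := by gcongr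
    _ ≤ 4 * (3 * (δ * N * Real.log N / Real.log N)) := by gcongr
    _ = 12 * δ * N := by field_simp; norm_num

end Exceptions

section Covering

theorem card_Ioc_filter_lt_le (N : ℕ) {x : ℝ} (hx : 0 ≤ x) :
    (#{n ∈ Ioc 0 N | ((n : ℕ) : ℝ) < x} : ℝ) ≤ x := by
  have sub : {n ∈ Ioc 0 N | ((n : ℕ) : ℝ) < x} ⊆ Ioc 0 ⌊x⌋₊ := fun n hn => by
    obtain ⟨hnN, hnx⟩ := mem_filter.1 hn
    exact mem_Ioc.2 ⟨(mem_Ioc.1 hnN).1, Nat.le_floor hnx.le⟩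
  calc _ ≤ (⌊x⌋₊ : ℝ) := by simpa using card_le_card sub
    _ ≤ x := Nat.floor_le hx

theorem natCast_le_add_card_filter_exists_primeFactors_gt (N M : ℕ) {x : ℝ} (hx : 0 ≤ x) :
    (N : ℝ) ≤ x + #{n ∈ Ioc 0 N | ¬ Squarefree (n ^ 2 + 1)} + #(squarefreeSmooth x N) +
      #{n ∈ Ioc 0 N | ∃ p ∈ (n ^ 2 + 1).primeFactors, N < p ∧ p ≤ M} +
      #{n ∈ Ioc 0 N | x ≤ ((n : ℕ) : ℝ) ∧ Squarefree (n ^ 2 + 1) ∧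
        ∃ p ∈ (n ^ 2 + 1).primeFactors, M < p} := by
  have cover : Ioc 0 N ⊆ {n ∈ Ioc 0 N | ((n : ℕ) : ℝ) < x} ∪
      {n ∈ Ioc 0 N | ¬ Squarefree (n ^ 2 + 1)} ∪ squarefreeSmooth x N ∪
      {n ∈ Ioc 0 N | ∃ p ∈ (n ^ 2 + 1).primeFactors, N < p ∧ p ≤ M} ∪
      {n ∈ Ioc 0 N | x ≤ ((n : ℕ) : ℝ) ∧ Squarefree (n ^ 2 + 1) ∧
        ∃ p ∈ (n ^ 2 + 1).primeFactors, M < p} := fun n hn => by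
    simp only [squarefreeSmooth, mem_union, mem_filter, hn, true_and]
    by_cases hxn : x ≤ n
    · by_cases hsmooth : ∀ p ∈ (n ^ 2 + 1).primeFactors, p ≤ N
      · tauto
      · push Not at hsmooth
        obtain ⟨p, hp, hNp⟩ := hsmooth
        rcases le_or_gt p M with hpM | hpM
        · exact .inl (.inr ⟨p, hp, hNp, hpM⟩)
        · by_cases hsq : Squarefree (n ^ 2 + 1)
          · exact .inr ⟨hxn, hsq, p, hp, hpM⟩
          · tauto
    · simp [not_le.1 hxn]
  have card_le := (card_le_card cover).trans <| (card_union_le _ _).trans <|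
    Nat.add_le_add_right ((card_union_le _ _).trans <|
    Nat.add_le_add_right ((card_union_le _ _).trans <|
    Nat.add_le_add_right (card_union_le _ _) _) _) _
  rw [Nat.card_Ioc, Nat.sub_zero] at card_le
  refine (Nat.cast_le (α := ℝ).2 card_le).trans ?_
  push_cast
  gcongr
  exact card_Ioc_filter_lt_le N hx

theorem card_filter_le_ncard_large_prime_factor {δ : ℝ} (hδ : 0 ≤ δ) (N : ℕ) (x : ℝ) :
    #{n ∈ Ioc 0 N | x ≤ ((n : ℕ) : ℝ) ∧ Squarefree (n ^ 2 + 1) ∧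
        ∃ p ∈ (n ^ 2 + 1).primeFactors, ⌊δ * N * Real.log N⌋₊ < p} ≤
      {n : ℕ | x ≤ (n : ℝ) ∧ n ≤ N ∧ Squarefree (n ^ 2 + 1) ∧
        ∃ p : ℕ, p.Prime ∧ p ∣ (n ^ 2 + 1) ∧ δ * n * Real.log n ≤ (p : ℝ)}.ncard := by
  rw [← Set.ncard_coe_finset]
  refine Set.ncard_le_ncard (fun n hn => ?_)
    ((Set.finite_Iic N).subset fun n hn => hn.2.1)
  obtain ⟨hnN, hxn, hsq, p, hp, hlt⟩ := mem_filter.1 hn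
  obtain ⟨hn₀, hnN⟩ := mem_Ioc.1 hnN
  refine ⟨hxn, hnN, hsq, p, Nat.prime_of_mem_primeFactors hp, Nat.dvd_of_mem_primeFactors hp, ?_⟩
  have : (0 : ℝ) < n := Nat.cast_pos.2 hn₀
  calc δ * n * Real.log n ≤ δ * N * Real.log N := by gcongr
    _ ≤ p := (Nat.lt_of_floor_lt hlt).le

end Covering

/-- A positive proportion of `n ∈ [N/log N, N]` are such that `n²+1` is squarefree and
`n²+1` has a prime factor `p ≥ δ n log n`. -/
theorem positive_proportion_large_prime_factor
    : ∃ δ : ℝ, 0 < δ ∧ ∃ c : ℝ, 0 < c ∧ ∃ N₀ : ℕ, ∀ N : ℕ, N₀ ≤ N →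
      c * (N : ℝ) ≤
        ({n : ℕ | (N : ℝ) / Real.log N ≤ (n : ℝ) ∧ n ≤ N ∧ Squarefree (n^2 + 1) ∧
          ∃ p : ℕ, p.Prime ∧ p ∣ (n^2 + 1) ∧ δ * n * Real.log n ≤ (p : ℝ)}.ncard : ℝ) := by
  have hδ : (0 : ℝ) < 1 / 100 := by norm_num
  refine ⟨1 / 100, hδ, 1 / 10, by norm_num, eventually_atTop.1 ?_⟩
  filter_upwards [eventually_natCast_div_log_le hδ, eventually_card_filter_not_squarefree_le hδ,
    eventually_card_squarefreeSmooth_le hδ, eventually_card_filter_exists_primeFactors_le hδ]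
    with N small not_squarefree smooth medium
  have hx : 0 ≤ (N : ℝ) / Real.log N := div_nonneg N.cast_nonneg (Real.log_natCast_nonneg N)
  have cover := natCast_le_add_card_filter_exists_primeFactors_gt N
    ⌊(1 / 100 : ℝ) * N * Real.log N⌋₊ hx
  have large := Nat.cast_le (α := ℝ).2
    (card_filter_le_ncard_large_prime_factor hδ.le N (N / Real.log N))
  linarith
end
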